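/- arXiv:1312.0034 — 2 statements merged into one kernel-verified Lean document; each statement's English description precedes it below -/
import Mathlib

section
/- Suppose γ is a real number with 0 < γ < 1 which is NOT of the form |π|^{1/(q^s+q^{s+1})} for any integer s ≥ 0, and let u_1 ∈ ℂ_p with |u_1| = γ. Let n be the smallest nonnegative integer such that γ^{q^n} < |π|^{1/(q+1)}. Then the fiber S = {u ∈ ℂ_p : |u| = γ and φ_0(u_1)·φ_1(u) = φ_1(u_1)·φ_0(u)} has exactly q^n elements, and there is an enumeration S = {u_{(1)}, u_{(2)}, …, u_{(q^n)}} with u_{(1)} = u_1 such that for all integers i, j with 1 ≤ j ≤ n and q^{j-1} < i ≤ q^j one has |u_{(i)} − u_1| = (|π|·γ^{-2q^{j-1}})^{1/(q^j − q^{j-1})}. -/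
open Filter


/-- The coefficients `m_k(u)` of the quasi-logarithm of the Gross-Hopkins
universal deformation: `m_0 = 1`, `m_1(u) = u/π`, and
`m_k(u) = (u/π)·m_{k-1}(u^q) + (1/π)·m_{k-2}(u^{q²})`. -/
noncomputable def ghm {C : Type*} [Field C] (π : C) (q : ℕ) : ℕ → C → C
  | 0, _ => 1
  | 1, u => u / π
  | (k+2), u => (u / π) * ghm π q (k+1) (u ^ q) + (1 / π) * ghm π q k (u ^ (q^2))

/-- First coordinate of the Gross-Hopkins period map:
`φ₀(u) = lim_k π^k · m_{2k}(u)`. -/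
noncomputable def ghphi0 {C : Type*} [NormedField C] (π : C) (q : ℕ) (u : C) : C :=
  limUnder atTop (fun k => π ^ k * ghm π q (2*k) u)

/-- Second coordinate of the Gross-Hopkins period map:
`φ₁(u) = lim_{k≥1} π^k · m_{2k-1}(u)`. -/
noncomputable def ghphi1 {C : Type*} [NormedField C] (π : C) (q : ℕ) (u : C) : C :=
  limUnder atTop (fun k => π ^ (k+1) * ghm π q (2*k+1) u)

namespace GrossHopkins

open Topology

/-! ### Real estimates -/

/-- The numerical position of the radius `γ` relative to `ϖ = ‖π‖`. -/
structure Radii (ϖ γ : ℝ) (q n : ℕ) : Prop where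
  pi_pos : 0 < ϖ
  pi_lt : ϖ < 1
  pos : 0 < γ
  lt : γ < 1
  two_le : 2 ≤ q
  below : ∀ k < n, ϖ < γ ^ (q ^ k + q ^ (k + 1))
  above : γ ^ (q ^ n + q ^ (n + 1)) < ϖ

/-- The norm of `ghm π q k u` for `‖u‖ = γ`. -/
noncomputable def mu (ϖ γ : ℝ) (q : ℕ) : ℕ → ℝ
  | 0 => 1
  | 1 => γ / ϖ
  | (k + 2) => max (γ ^ q ^ (k + 1) * mu ϖ γ q (k + 1)) (mu ϖ γ q k) / ϖ

/-- The norm of `(-π) ^ k * ghm π q k x * ghm π q k y` for `‖x‖ = ‖y‖ = γ`. -/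
noncomputable def weight (ϖ γ : ℝ) (q k : ℕ) : ℝ := ϖ ^ k * mu ϖ γ q k ^ 2

namespace Radii

variable {ϖ γ : ℝ} {q n : ℕ}

lemma mu_pos (h : Radii ϖ γ q n) (k : ℕ) : 0 < mu ϖ γ q k := by
  induction k using Nat.strong_induction_on with
  | _ k ih =>
    match k with
    | 0 => simp [mu]
    | 1 => exact div_pos h.pos h.pi_pos
    | (k + 2) => exact div_pos (lt_max_of_lt_right (ih k (by omega))) h.pi_pos

lemma weight_pos (h : Radii ϖ γ q n) (k : ℕ) : 0 < weight ϖ γ q k :=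
  mul_pos (pow_pos h.pi_pos k) (pow_pos (h.mu_pos k) 2)

lemma mu_succ_of_le (h : Radii ϖ γ q n) {k : ℕ} (hk : k ≤ n) :
    mu ϖ γ q (k + 1) = γ ^ q ^ k * mu ϖ γ q k / ϖ := by
  induction k with
  | zero => simp [mu]
  | succ k ih =>
    rw [mu, max_eq_left]
    rw [ih (by omega), ← mul_div_assoc, ← mul_assoc, ← pow_add, le_div_iff₀ h.pi_pos, mul_comm,
      add_comm]
    exact mul_le_mul_of_nonneg_right (h.below k hk).le (h.mu_pos k).le

lemma mu_lt_of_le_of_lt (h : Radii ϖ γ q n) {k : ℕ} (hk : k < n) :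
    mu ϖ γ q k < γ ^ q ^ (k + 1) * mu ϖ γ q (k + 1) := by
  rw [h.mu_succ_of_le hk.le, ← mul_div_assoc, ← mul_assoc, ← pow_add, lt_div_iff₀ h.pi_pos,
    mul_comm, add_comm (q ^ (k + 1))]
  exact mul_lt_mul_of_pos_right (h.below k hk) (h.mu_pos k)

lemma mu_bounds_of_ge (h : Radii ϖ γ q n) {k : ℕ} (hk : n ≤ k) :
    γ ^ q ^ (k + 1) * mu ϖ γ q (k + 1) < mu ϖ γ q k ∧
      γ ^ q ^ k * mu ϖ γ q k ≤ ϖ * mu ϖ γ q (k + 1) := by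
  induction k, hk using Nat.le_induction with
  | base =>
    have e := h.mu_succ_of_le le_rfl
    constructor
    · rw [e, ← mul_div_assoc, ← mul_assoc, ← pow_add, div_lt_iff₀ h.pi_pos, mul_comm (mu _ _ _ _),
        add_comm (q ^ (n + 1))]
      exact mul_lt_mul_of_pos_right h.above (h.mu_pos n)
    · rw [e, mul_div_cancel₀ _ h.pi_pos.ne']
  | succ k hk ih =>
    have e : ϖ * mu ϖ γ q (k + 2) = mu ϖ γ q k := by
      rw [mu, max_eq_right ih.1.le, mul_div_cancel₀ _ h.pi_pos.ne']
    constructor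
    · have h1 : γ ^ q ^ (k + 2) < γ ^ q ^ k :=
        pow_lt_pow_right_of_lt_one₀ h.pos h.lt (Nat.pow_lt_pow_right h.two_le (by omega))
      refine lt_of_mul_lt_mul_left ?_ h.pi_pos.le
      calc ϖ * (γ ^ q ^ (k + 2) * mu ϖ γ q (k + 2)) = γ ^ q ^ (k + 2) * mu ϖ γ q k := by
            rw [← e]; ring
        _ < γ ^ q ^ k * mu ϖ γ q k := mul_lt_mul_of_pos_right h1 (h.mu_pos k)
        _ ≤ _ := ih.2
    · rw [e]; exact ih.1.le

lemma mu_add_two_of_ge (h : Radii ϖ γ q n) {k : ℕ} (hk : n ≤ k) :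
    ϖ * mu ϖ γ q (k + 2) = mu ϖ γ q k := by
  rw [mu, max_eq_right (h.mu_bounds_of_ge hk).1.le, mul_div_cancel₀ _ h.pi_pos.ne']

lemma mu_ne (h : Radii ϖ γ q n) (k : ℕ) :
    γ ^ q ^ (k + 1) * mu ϖ γ q (k + 1) ≠ mu ϖ γ q k := by
  rcases lt_or_ge k n with hk | hk
  · exact (h.mu_lt_of_le_of_lt hk).ne'
  · exact (h.mu_bounds_of_ge hk).1.ne

lemma weight_zero : weight ϖ γ q 0 = 1 := by simp [weight, mu]

lemma weight_succ_of_le (h : Radii ϖ γ q n) {k : ℕ} (hk : k ≤ n) :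
    ϖ * weight ϖ γ q (k + 1) = weight ϖ γ q k * (γ ^ 2) ^ q ^ k := by
  have := h.pi_pos.ne'
  rw [weight, weight, h.mu_succ_of_le hk]
  field_simp
  ring

lemma weight_succ_lt_of_ge (h : Radii ϖ γ q n) {k : ℕ} (hk : n ≤ k) :
    weight ϖ γ q (k + 1) * (γ ^ q ^ k) ^ (q - 1) < weight ϖ γ q k := by
  obtain ⟨r, rfl⟩ : ∃ r, q = r + 1 := ⟨q - 1, by have := h.two_le; omega⟩
  have hr : 1 ≤ r := by have := h.two_le; omega
  simp only [Nat.add_sub_cancel]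
  rcases hk.eq_or_lt with rfl | hk
  · refine lt_of_mul_lt_mul_left ?_ h.pi_pos.le
    rw [← mul_assoc, h.weight_succ_of_le le_rfl]
    have : (γ ^ 2) ^ (r + 1) ^ n * (γ ^ (r + 1) ^ n) ^ r
        = γ ^ ((r + 1) ^ n + (r + 1) ^ (n + 1)) := by
      rw [← pow_mul, ← pow_mul, ← pow_add]; congr 1; ring
    rw [mul_assoc, this, mul_comm ϖ]
    exact mul_lt_mul_of_pos_left h.above (h.weight_pos n)
  · obtain ⟨k, rfl⟩ : ∃ l, k = l + 1 := ⟨k - 1, by omega⟩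
    have hb := (h.mu_bounds_of_ge (Nat.le_of_lt_succ hk)).2
    rw [← h.mu_add_two_of_ge (Nat.le_of_lt_succ hk)] at hb
    have hb' : γ ^ (r + 1) ^ k * mu ϖ γ (r + 1) (k + 2) ≤ mu ϖ γ (r + 1) (k + 1) := by
      refine le_of_mul_le_mul_left ?_ h.pi_pos
      calc _ = _ := by ring
        _ ≤ _ := hb
    have hexp : (γ ^ (r + 1) ^ (k + 1)) ^ r ≤ (γ ^ (r + 1) ^ k) ^ 2 := by
      rw [← pow_mul, ← pow_mul]
      refine pow_le_pow_of_le_one h.pos.le h.lt.le ?_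
      rw [pow_succ, mul_assoc]
      exact Nat.mul_le_mul_left _ (by nlinarith)
    have hm := h.mu_pos (k + 2)
    have hm' := h.mu_pos (k + 1)
    have hg : 0 < γ ^ (r + 1) ^ k := pow_pos h.pos _
    calc weight ϖ γ (r + 1) (k + 2) * (γ ^ (r + 1) ^ (k + 1)) ^ r
        ≤ weight ϖ γ (r + 1) (k + 2) * (γ ^ (r + 1) ^ k) ^ 2 :=
          mul_le_mul_of_nonneg_left hexp (h.weight_pos _).le
      _ = ϖ ^ (k + 2) * (γ ^ (r + 1) ^ k * mu ϖ γ (r + 1) (k + 2)) ^ 2 := by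
          rw [weight]; ring
      _ ≤ ϖ ^ (k + 2) * mu ϖ γ (r + 1) (k + 1) ^ 2 :=
          mul_le_mul_of_nonneg_left (pow_le_pow_left₀ (by positivity) hb' 2)
            (pow_nonneg h.pi_pos.le _)
      _ < ϖ ^ (k + 1) * mu ϖ γ (r + 1) (k + 1) ^ 2 :=
          mul_lt_mul_of_pos_right
            (pow_lt_pow_right_of_lt_one₀ h.pi_pos h.pi_lt (Nat.lt_succ_self _)) (by positivity)

lemma exists_mu_bound (h : Radii ϖ γ q n) : ∃ B, 0 < B ∧ ∀ k, ϖ ^ (k / 2) * mu ϖ γ q k ≤ B := by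
  let s : ℕ → ℝ := fun k => ϖ ^ (k / 2) * mu ϖ γ q k
  have hs : ∀ k, n ≤ k → s (k + 2) = s k := fun k hk => by
    simp only [s]
    rw [← h.mu_add_two_of_ge hk, show (k + 2) / 2 = k / 2 + 1 by omega]
    ring
  have hs0 : ∀ k, 0 < s k := fun k => mul_pos (pow_pos h.pi_pos _) (h.mu_pos k)
  refine ⟨∑ i ∈ Finset.range (n + 2), s i,
    Finset.sum_pos (fun i _ => hs0 i) ⟨0, by simp⟩, fun k => ?_⟩
  induction k using Nat.strong_induction_on with
  | _ k ih =>
    rcases lt_or_ge k (n + 2) with hk | hk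
    · exact Finset.single_le_sum (f := s) (fun i _ => (hs0 i).le) (Finset.mem_range.2 hk)
    · obtain ⟨l, rfl⟩ : ∃ l, k = l + 2 := ⟨k - 2, by omega⟩
      exact (hs l (by omega)).le.trans (ih l (by omega))

lemma tendsto_pow_pow (h : Radii ϖ γ q n) : Tendsto (fun k => γ ^ q ^ k) atTop (𝓝 0) :=
  (tendsto_pow_atTop_nhds_zero_of_lt_one h.pos.le h.lt).comp
    (tendsto_pow_atTop_atTop_of_one_lt h.two_le)

lemma tendsto_weight_mul (h : Radii ϖ γ q n) :
    Tendsto (fun k => weight ϖ γ q k * γ ^ q ^ k) atTop (𝓝 0) := by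
  obtain ⟨B, hB, hb⟩ := h.exists_mu_bound
  refine squeeze_zero (fun k => (mul_pos (h.weight_pos k) (pow_pos h.pos _)).le) (fun k => ?_)
    (by simpa using h.tendsto_pow_pow.const_mul (B ^ 2))
  refine mul_le_mul_of_nonneg_right ?_ (pow_pos h.pos _).le
  have hm := h.mu_pos k
  have hp := h.pi_pos
  calc weight ϖ γ q k ≤ ϖ ^ (k / 2 * 2) * mu ϖ γ q k ^ 2 :=
        mul_le_mul_of_nonneg_right (pow_le_pow_of_le_one h.pi_pos.le h.pi_lt.le (by omega))
          (by positivity)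
    _ = (ϖ ^ (k / 2) * mu ϖ γ q k) ^ 2 := by ring
    _ ≤ B ^ 2 := pow_le_pow_left₀ (by positivity) (hb k) 2

lemma antitone_weight_mul (h : Radii ϖ γ q n) {k l : ℕ} (hk : n ≤ k) (hl : k ≤ l) :
    weight ϖ γ q l * γ ^ q ^ l ≤ weight ϖ γ q k * γ ^ q ^ k := by
  induction l, hl using Nat.le_induction with
  | base => rfl
  | succ l hl ih =>
    refine le_trans ?_ ih
    have := mul_le_mul_of_nonneg_right (h.weight_succ_lt_of_ge (hk.trans hl)).le
      (pow_pos h.pos (q ^ l)).le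
    have hq := h.two_le
    rwa [mul_assoc, ← pow_succ, Nat.sub_add_cancel (by omega), ← pow_mul, ← pow_succ] at this

/-- The term of index `j` dominates all the others. -/
lemma dominance (h : Radii ϖ γ q n) {e : ℕ → ℝ} {δ : ℝ} (hδ : 0 < δ)
    (he0 : e 0 = δ) (henn : ∀ k, 0 ≤ e k) (hle : ∀ k, e k ≤ γ ^ q ^ k)
    (hstep : ∀ k, e (k + 1) ≤ max (e k ^ q) (ϖ * (γ ^ q ^ k) ^ (q - 1) * e k))
    (hexact : ∀ k, ϖ * (γ ^ q ^ k) ^ (q - 1) * e k < e k ^ q → e (k + 1) = e k ^ q)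
    {j : ℕ} (hj : j ≤ n) (hlow : ∀ k < j, ϖ < (δ ^ (q - 1) * γ ^ 2) ^ q ^ k)
    (hup : j = n ∨ (δ ^ (q - 1) * γ ^ 2) ^ q ^ j < ϖ) :
    e j = δ ^ q ^ j ∧ ∀ k, k ≠ j → weight ϖ γ q k * e k < weight ϖ γ q j * e j := by
  have hq := h.two_le
  have hπ := h.pi_pos
  have hπ1 := h.pi_lt
  have hγ := h.pos
  have hγ1 := h.lt
  obtain ⟨r, rfl⟩ : ∃ r, q = r + 1 := ⟨q - 1, by omega⟩
  simp only [Nat.add_sub_cancel] at *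
  have hG : ∀ m : ℕ, γ ^ m ≤ 1 := fun m => pow_le_one₀ hγ.le hγ1.le
  -- exactness up to `j`
  have hex : ∀ k ≤ j, e k = δ ^ (r + 1) ^ k := by
    intro k
    induction k with
    | zero => intro _; simp [he0]
    | succ k ih =>
      intro hk
      have ek := ih (by omega)
      rw [hexact k, ek, ← pow_mul, ← pow_succ]
      rw [ek, pow_succ (δ ^ (r + 1) ^ k)]
      refine mul_lt_mul_of_pos_right ?_ (by positivity)
      have h1 := hlow k (by omega)
      have h2 : (δ ^ r * γ ^ 2) ^ (r + 1) ^ k ≤ (δ ^ (r + 1) ^ k) ^ r := by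
        rw [mul_pow, ← pow_mul, ← pow_mul, ← pow_mul, mul_comm r]
        exact mul_le_of_le_one_right (by positivity) (hG _)
      have h3 : ϖ * (γ ^ (r + 1) ^ k) ^ r ≤ ϖ := by
        rw [← pow_mul]; exact mul_le_of_le_one_right hπ.le (hG _)
      linarith
  have hej : 0 < e j := by rw [hex j le_rfl]; positivity
  -- contraction after `j`
  have hcontr : ∀ k, j ≤ k → k < n → e k ^ r * (γ ^ 2) ^ (r + 1) ^ k < ϖ := by
    intro k hjk
    induction k, hjk using Nat.le_induction with
    | base =>
      intro hjn
      rw [hex j le_rfl, pow_right_comm, ← mul_pow]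
      exact hup.resolve_left hjn.ne
    | succ k hk ih =>
      intro hkn
      have ih := ih (by omega)
      have hk0 := henn k
      rcases le_max_iff.1 (hstep k) with h1 | h1
      · calc e (k + 1) ^ r * (γ ^ 2) ^ (r + 1) ^ (k + 1)
            ≤ (e k ^ (r + 1)) ^ r * (γ ^ 2) ^ (r + 1) ^ (k + 1) :=
              mul_le_mul_of_nonneg_right (pow_le_pow_left₀ (henn _) h1 r) (by positivity)
          _ = (e k ^ r * (γ ^ 2) ^ (r + 1) ^ k) ^ (r + 1) := by
              rw [mul_pow, pow_right_comm, ← pow_mul (γ ^ 2), ← pow_succ (r + 1)]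
          _ < ϖ ^ (r + 1) := pow_lt_pow_left₀ ih (by positivity) (by omega)
          _ ≤ ϖ := pow_le_of_le_one hπ.le hπ1.le (by omega)
      · have h2 : e (k + 1) ≤ e k := h1.trans (by
          refine mul_le_of_le_one_left hk0 (mul_le_one₀ hπ1.le (by positivity) ?_)
          rw [← pow_mul]; exact hG _)
        refine lt_of_le_of_lt ?_ ih
        refine mul_le_mul (pow_le_pow_left₀ (henn _) h2 r) ?_ (by positivity) (by positivity)
        rw [← pow_mul, ← pow_mul]
        refine pow_le_pow_of_le_one hγ.le hγ1.le (Nat.mul_le_mul_left _ ?_)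
        exact Nat.pow_le_pow_right (by omega) (by omega)
  have hratio : ∀ k, j ≤ k →
      weight ϖ γ (r + 1) (k + 1) * max (e k ^ r) (ϖ * (γ ^ (r + 1) ^ k) ^ r)
        < weight ϖ γ (r + 1) k := by
    intro k hk
    have hw := h.weight_pos k
    rcases lt_or_ge k n with hkn | hkn
    · refine lt_of_mul_lt_mul_left ?_ hπ.le
      rw [← mul_assoc, h.weight_succ_of_le hkn.le, mul_assoc, mul_comm ϖ (weight _ _ _ _)]
      refine mul_lt_mul_of_pos_left ?_ hw
      rw [mul_max_of_nonneg _ _ (by positivity)]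
      refine max_lt ?_ ?_
      · rw [mul_comm]; exact hcontr k hk hkn
      · rw [mul_left_comm, ← pow_mul, ← pow_mul, ← pow_add]
        refine mul_lt_of_lt_one_right hπ (pow_lt_one₀ hγ.le hγ1 ?_)
        have : 0 < (r + 1) ^ k := by positivity
        omega
    · refine lt_of_le_of_lt ?_ (h.weight_succ_lt_of_ge hkn)
      refine mul_le_mul_of_nonneg_left (max_le ?_ ?_) (h.weight_pos _).le
      · exact pow_le_pow_left₀ (henn k) (hle k) _
      · exact mul_le_of_le_one_left (by positivity) hπ1.le
  have hstep' : ∀ k, e (k + 1) ≤ max (e k ^ r) (ϖ * (γ ^ (r + 1) ^ k) ^ r) * e k := fun k => by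
    rw [max_mul_of_nonneg _ _ (henn k), ← pow_succ]; exact hstep k
  have hdecr : ∀ k, j ≤ k →
      weight ϖ γ (r + 1) (k + 1) * e (k + 1) ≤ weight ϖ γ (r + 1) k * e k := fun k hk =>
    calc _ ≤ _ := mul_le_mul_of_nonneg_left (hstep' k) (h.weight_pos _).le
      _ ≤ _ := by
        rw [← mul_assoc]
        exact mul_le_mul_of_nonneg_right (hratio k hk).le (henn k)
  have hdecr_first : weight ϖ γ (r + 1) (j + 1) * e (j + 1) < weight ϖ γ (r + 1) j * e j :=
    calc _ ≤ _ := mul_le_mul_of_nonneg_left (hstep' j) (h.weight_pos _).le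
      _ < _ := by
        rw [← mul_assoc]
        exact mul_lt_mul_of_pos_right (hratio j le_rfl) hej
  have hincr : ∀ k, k < j →
      weight ϖ γ (r + 1) k * e k < weight ϖ γ (r + 1) (k + 1) * e (k + 1) := by
    intro k hk
    have hw := h.weight_pos k
    rw [hex k hk.le, hex (k + 1) hk]
    refine lt_of_mul_lt_mul_left ?_ hπ.le
    rw [← mul_assoc ϖ (weight _ _ _ (k + 1)), h.weight_succ_of_le (by omega), mul_left_comm,
      mul_assoc]
    refine mul_lt_mul_of_pos_left ?_ hw
    have : (γ ^ 2) ^ (r + 1) ^ k * δ ^ (r + 1) ^ (k + 1)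
        = (δ ^ r * γ ^ 2) ^ (r + 1) ^ k * δ ^ (r + 1) ^ k := by
      rw [mul_pow, pow_succ (r + 1), ← pow_mul δ]
      ring
    rw [this]
    exact mul_lt_mul_of_pos_right (hlow k hk) (by positivity)
  refine ⟨hex j le_rfl, fun k hk => ?_⟩
  rcases lt_or_gt_of_ne hk with hk | hk
  · have key : ∀ d, d + 1 ≤ j →
        weight ϖ γ (r + 1) (j - (d + 1)) * e (j - (d + 1)) < weight ϖ γ (r + 1) j * e j := by
      intro d
      induction d with
      | zero =>
        intro hd
        have := hincr (j - 1) (by omega)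
        rwa [Nat.sub_add_cancel hd] at this
      | succ d ih =>
        intro hd
        have := hincr (j - (d + 1 + 1)) (by omega)
        rw [show j - (d + 1 + 1) + 1 = j - (d + 1) by omega] at this
        exact this.trans (ih (by omega))
    have := key (j - k - 1) (by omega)
    rwa [show j - (j - k - 1 + 1) = k by omega] at this
  · induction k, hk using Nat.le_induction with
    | base => exact hdecr_first
    | succ k hk ih => exact (hdecr k (by omega)).trans_lt (ih (by omega))

end Radii

/-! ### The quasi-logarithm coefficients and the period determinant -/

section Field

variable {C : Type*}

lemma ghm_add_two [Field C] (π : C) (q k : ℕ) (u : C) :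
    ghm π q (k + 2) u = (u ^ q ^ (k + 1) * ghm π q (k + 1) u + ghm π q k u) / π := by
  induction k using Nat.strong_induction_on generalizing u with
  | _ k ih =>
    match k with
    | 0 => simp only [ghm]; ring
    | 1 => simp only [ghm]; ring
    | (k + 2) =>
      have h3 : ghm π q (k + 3) u =
        (u / π) * ghm π q (k + 2) (u ^ q) + (1 / π) * ghm π q (k + 1) (u ^ q ^ 2) := rfl
      have h2 : ghm π q (k + 2) u =
        (u / π) * ghm π q (k + 1) (u ^ q) + (1 / π) * ghm π q k (u ^ q ^ 2) := rfl
      rw [ghm, ih (k + 1) (by omega) (u ^ q), ih k (by omega) (u ^ q ^ 2), h3, h2]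
      ring

/-- The `k`-th summand of the expansion of `φ₁(x) φ₀(y) - φ₀(x) φ₁(y)`. -/
noncomputable def term [Field C] (π : C) (q : ℕ) (x y : C) (k : ℕ) : C :=
  (-π) ^ k * ghm π q k x * ghm π q k y * (x ^ q ^ k - y ^ q ^ k)

lemma sum_term [Field C] {π : C} (hπ : π ≠ 0) (q : ℕ) (x y : C) (N : ℕ) :
    ∑ k ∈ Finset.range (N + 1), term π q x y k =
      (-π) ^ N * π * (ghm π q (N + 1) x * ghm π q N y - ghm π q N x * ghm π q (N + 1) y) := by
  induction N with
  | zero => simp [term, ghm]; field_simp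
  | succ N ih =>
    rw [Finset.sum_range_succ, ih, term, ghm_add_two, ghm_add_two]
    field_simp
    ring

lemma exists_polynomial_ghm [Field C] (π : C) (q k : ℕ) :
    ∃ P : Polynomial C, ∀ u, P.eval u = ghm π q k u := by
  induction k using Nat.strong_induction_on with
  | _ k ih =>
    match k with
    | 0 => exact ⟨1, fun u => by simp [ghm]⟩
    | 1 => exact ⟨Polynomial.C π⁻¹ * Polynomial.X, fun u => by simp [ghm]; ring⟩
    | (k + 2) =>
      obtain ⟨P, hP⟩ := ih (k + 1) (by omega)
      obtain ⟨Q, hQ⟩ := ih k (by omega)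
      exact ⟨Polynomial.C π⁻¹ * (Polynomial.X ^ q ^ (k + 1) * P + Q), fun u => by
        rw [ghm_add_two]; simp [hP, hQ]; ring⟩

lemma exists_polynomial_sum_term [Field C] (π : C) (q N : ℕ) (x : C) :
    ∃ P : Polynomial C, ∀ y, P.eval y = ∑ k ∈ Finset.range N, term π q x y k := by
  choose P hP using exists_polynomial_ghm π q
  refine ⟨∑ k ∈ Finset.range N, Polynomial.C ((-π) ^ k * ghm π q k x) * P k *
    (Polynomial.C (x ^ q ^ k) - Polynomial.X ^ q ^ k), fun y => ?_⟩
  simp [Polynomial.eval_finsetSum, term, hP]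

variable [NormedField C] [IsUltrametricDist C]

lemma norm_sum_eq_of_forall_lt {ι : Type*} {s : Finset ι} {f : ι → C} {j : ι} (hj : j ∈ s)
    (h : ∀ k ∈ s, k ≠ j → ‖f k‖ < ‖f j‖) : ‖∑ k ∈ s, f k‖ = ‖f j‖ := by
  classical
  rw [← Finset.add_sum_erase s f hj]
  rcases (s.erase j).eq_empty_or_nonempty with h0 | h0
  · simp [h0]
  · obtain ⟨i, hi, hle⟩ := IsUltrametricDist.exists_norm_finsetSum_le_of_nonempty h0 f
    have hlt := hle.trans_lt (h i (Finset.mem_of_mem_erase hi) (Finset.ne_of_mem_erase hi))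
    rw [IsUltrametricDist.norm_add_eq_max_of_norm_ne_norm hlt.ne', max_eq_left hlt.le]

lemma norm_sub_le_max (x y : C) : ‖x - y‖ ≤ max ‖x‖ ‖y‖ := by
  simpa [sub_eq_add_neg] using IsUltrametricDist.norm_add_le_max x (-y)

lemma norm_eq_of_norm_sub_lt {x y : C} (h : ‖y - x‖ < ‖x‖) : ‖y‖ = ‖x‖ := by
  have := IsUltrametricDist.norm_add_eq_max_of_norm_ne_norm h.ne
  rwa [sub_add_cancel, max_eq_right h.le] at this

/-- The binomial estimate for `q`-th powers when `q` is a power of the residue characteristic. -/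
lemma norm_add_pow_sub_le {p : ℕ} (hp : p.Prime) (r : ℕ) {ϖ : ℝ} (hpϖ : ‖(p : C)‖ ≤ ϖ)
    (y d : C) (hd : ‖d‖ ≤ ‖y‖) :
    ‖(y + d) ^ p ^ r - y ^ p ^ r - d ^ p ^ r‖ ≤ ϖ * ‖y‖ ^ (p ^ r - 1) * ‖d‖ := by
  rcases eq_or_ne y 0 with rfl | hy
  · have hd0 : d = 0 := by simpa using hd
    subst hd0
    simp [zero_pow (pow_pos hp.pos r).ne']
  let O : Subring C :=
    { carrier := {x | ‖x‖ ≤ 1}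
      mul_mem' := fun {a b} ha hb => by
        simp only [Set.mem_ofPred_eq, norm_mul] at *
        exact mul_le_one₀ ha (norm_nonneg _) hb
      one_mem' := by simp
      add_mem' := fun {a b} ha hb => (IsUltrametricDist.norm_add_le_max a b).trans (max_le ha hb)
      zero_mem' := by simp
      neg_mem' := fun {a} ha => by simpa using ha }
  have hy' : 0 < ‖y‖ := norm_pos_iff.2 hy
  have ha : d / y ∈ O := by
    change ‖d / y‖ ≤ 1
    rw [norm_div]; exact div_le_one_of_le₀ hd hy'.le
  obtain ⟨s, hs⟩ := exists_add_pow_prime_pow_eq hp (1 : O) ⟨d / y, ha⟩ r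
  have hs' := congrArg (Subtype.val) hs
  simp only [Subring.coe_pow, Subring.coe_add, Subring.coe_mul, Subring.coe_one,
    Subring.coe_natCast, one_pow, mul_one] at hs'
  have e : (y + d) ^ p ^ r - y ^ p ^ r - d ^ p ^ r = y ^ p ^ r * (p * (d / y) * s) := by
    have h1 : y + d = y * (1 + d / y) := by field_simp
    have h2 : d ^ p ^ r = y ^ p ^ r * (d / y) ^ p ^ r := by
      rw [← mul_pow, mul_div_cancel₀ _ hy]
    rw [h1, mul_pow, hs', h2]; ring
  have hsn : ‖(s : C)‖ ≤ 1 := s.2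
  obtain ⟨m, hm⟩ : ∃ m, p ^ r = m + 1 := ⟨p ^ r - 1, by have := pow_pos hp.pos r; omega⟩
  rw [e, norm_mul, norm_mul, norm_mul, norm_div, norm_pow, hm, Nat.add_sub_cancel]
  calc ‖y‖ ^ (m + 1) * (‖(p : C)‖ * (‖d‖ / ‖y‖) * ‖(s : C)‖)
      = ‖(p : C)‖ * ‖y‖ ^ m * ‖d‖ * ‖(s : C)‖ := by field_simp; ring
    _ ≤ ‖(p : C)‖ * ‖y‖ ^ m * ‖d‖ := mul_le_of_le_one_right (by positivity) hsn
    _ ≤ _ := by gcongr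

lemma norm_ghm {π : C} {γ : ℝ} {q n : ℕ} (h : Radii ‖π‖ γ q n) {x : C} (hx : ‖x‖ = γ) (k : ℕ) :
    ‖ghm π q k x‖ = mu ‖π‖ γ q k := by
  induction k using Nat.strong_induction_on with
  | _ k ih =>
    match k with
    | 0 => simp [ghm, mu]
    | 1 => simp [ghm, mu, hx]
    | (k + 2) =>
      have h1 := ih (k + 1) (by omega)
      have h0 := ih k (by omega)
      have h1' : ‖x ^ q ^ (k + 1) * ghm π q (k + 1) x‖
          = γ ^ q ^ (k + 1) * mu ‖π‖ γ q (k + 1) := by rw [norm_mul, norm_pow, hx, h1]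
      rw [ghm_add_two, norm_div, IsUltrametricDist.norm_add_eq_max_of_norm_ne_norm, h1', h0, mu]
      rw [h1', h0]
      exact h.mu_ne k

lemma ghm_ne_zero {π : C} {γ : ℝ} {q n : ℕ} (h : Radii ‖π‖ γ q n) {x : C} (hx : ‖x‖ = γ)
    (k : ℕ) : ghm π q k x ≠ 0 :=
  norm_ne_zero_iff.1 (by rw [norm_ghm h hx]; exact (h.mu_pos k).ne')

lemma norm_term {π : C} {γ : ℝ} {q n : ℕ} (h : Radii ‖π‖ γ q n) {x y : C} (hx : ‖x‖ = γ)
    (hy : ‖y‖ = γ) (k : ℕ) :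
    ‖term π q x y k‖ = weight ‖π‖ γ q k * ‖x ^ q ^ k - y ^ q ^ k‖ := by
  rw [term, norm_mul, norm_mul, norm_mul, norm_pow, norm_neg, norm_ghm h hx, norm_ghm h hy, weight]
  ring

lemma norm_pow_sub_pow_le {γ : ℝ} {x y : C} (hx : ‖x‖ = γ) (hy : ‖y‖ = γ) (m : ℕ) :
    ‖x ^ m - y ^ m‖ ≤ γ ^ m := by
  refine (norm_sub_le_max _ _).trans ?_
  simp [hx, hy]

lemma norm_term_le {π : C} {γ : ℝ} {q n : ℕ} (h : Radii ‖π‖ γ q n) {x y : C} (hx : ‖x‖ = γ)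
    (hy : ‖y‖ = γ) (k : ℕ) : ‖term π q x y k‖ ≤ weight ‖π‖ γ q k * γ ^ q ^ k := by
  rw [norm_term h hx hy]
  exact mul_le_mul_of_nonneg_left (norm_pow_sub_pow_le hx hy _) (h.weight_pos k).le

/-- The index `j` dominates at distance `δ`. -/
def Dominates (ϖ γ : ℝ) (q n : ℕ) (δ : ℝ) (j : ℕ) : Prop :=
  j ≤ n ∧ (∀ k < j, ϖ < (δ ^ (q - 1) * γ ^ 2) ^ q ^ k) ∧
    (j = n ∨ (δ ^ (q - 1) * γ ^ 2) ^ q ^ j < ϖ)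

/-- The estimate on `q`-th powers satisfied when `q` is a power of a prime `p` with `‖p‖ ≤ ‖π‖`. -/
def BinomialBound (π : C) (q : ℕ) : Prop :=
  ∀ y d : C, ‖d‖ ≤ ‖y‖ → ‖(y + d) ^ q - y ^ q - d ^ q‖ ≤ ‖π‖ * ‖y‖ ^ (q - 1) * ‖d‖

lemma norm_sum_term {π : C} {γ : ℝ} {q n : ℕ} (h : Radii ‖π‖ γ q n) (hF : BinomialBound π q)
    {x y : C} (hx : ‖x‖ = γ) (hy : ‖y‖ = γ) (hxy : y ≠ x) {j : ℕ}
    (hj : Dominates ‖π‖ γ q n ‖y - x‖ j) {N : ℕ} (hN : n < N) :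
    ‖∑ k ∈ Finset.range N, term π q x y k‖ = weight ‖π‖ γ q j * ‖y - x‖ ^ q ^ j := by
  obtain ⟨hjn, hlow, hup⟩ := hj
  have hle : ∀ k, ‖x ^ q ^ k - y ^ q ^ k‖ ≤ γ ^ q ^ k := fun k => norm_pow_sub_pow_le hx hy _
  have hbin : ∀ k, ‖(x ^ q ^ (k + 1) - y ^ q ^ (k + 1)) - (x ^ q ^ k - y ^ q ^ k) ^ q‖ ≤
      ‖π‖ * (γ ^ q ^ k) ^ (q - 1) * ‖x ^ q ^ k - y ^ q ^ k‖ := fun k => by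
    have := hF (y ^ q ^ k) (x ^ q ^ k - y ^ q ^ k) (by rw [norm_pow, hy]; exact hle k)
    rwa [add_sub_cancel, ← pow_mul, ← pow_mul, ← pow_succ, norm_pow, hy] at this
  obtain ⟨hej, hdom⟩ := h.dominance (e := fun k => ‖x ^ q ^ k - y ^ q ^ k‖) (δ := ‖y - x‖)
    (norm_pos_iff.2 (sub_ne_zero.2 hxy))
    (by simp [norm_sub_rev]) (fun k => norm_nonneg _) hle
    (fun k => by
      have := IsUltrametricDist.norm_add_le_max
        ((x ^ q ^ k - y ^ q ^ k) ^ q)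
        ((x ^ q ^ (k + 1) - y ^ q ^ (k + 1)) - (x ^ q ^ k - y ^ q ^ k) ^ q)
      rw [add_sub_cancel, norm_pow] at this
      exact this.trans (max_le_max le_rfl (hbin k)))
    (fun k hk => by
      have := norm_eq_of_norm_sub_lt ((hbin k).trans_lt (by simpa [norm_pow] using hk))
      rw [this, norm_pow])
    hjn hlow hup
  rw [norm_sum_eq_of_forall_lt (j := j) (Finset.mem_range.2 (by omega)), norm_term h hx hy, hej]
  intro k _ hk
  rw [norm_term h hx hy, norm_term h hx hy]
  exact hdom k hk

/-- Two points identified at level `N` have proportional determinants. -/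
lemma norm_sum_term_eq_of_sum_term_eq_zero {π : C} {γ : ℝ} {q n : ℕ} (h : Radii ‖π‖ γ q n)
    {x z : C} (hx : ‖x‖ = γ) (hz : ‖z‖ = γ) {N : ℕ}
    (h0 : ∑ k ∈ Finset.range (N + 1), term π q x z k = 0) (y : C) :
    ‖∑ k ∈ Finset.range (N + 1), term π q x y k‖
      = ‖∑ k ∈ Finset.range (N + 1), term π q z y k‖ := by
  have hπ : π ≠ 0 := norm_pos_iff.1 h.pi_pos
  rw [sum_term hπ] at h0 ⊢
  rw [sum_term hπ]
  have hd := (mul_eq_zero.1 h0).resolve_left (mul_ne_zero (pow_ne_zero _ (neg_ne_zero.2 hπ)) hπ)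
  have hz0 := ghm_ne_zero h hz N
  have hprop : ghm π q N z * (ghm π q (N + 1) x * ghm π q N y - ghm π q N x * ghm π q (N + 1) y)
      = ghm π q N x * (ghm π q (N + 1) z * ghm π q N y - ghm π q N z * ghm π q (N + 1) y) := by
    linear_combination ghm π q N y * hd
  have hn := congrArg norm hprop
  rw [norm_mul, norm_mul, norm_ghm h hz, norm_ghm h hx] at hn
  rw [norm_mul, norm_mul _ (_ - _), mul_left_cancel₀ (h.mu_pos N).ne' hn]

end Field

/-! ### Counting zeros through norms -/

section Roots

variable {C : Type*} [NormedField C]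

lemma exists_norm_between [IsAlgClosed C] {π : C} (h0 : 0 < ‖π‖) (h1 : ‖π‖ < 1) {r s : ℝ}
    (hr : 0 ≤ r) (hrs : r < s) : ∃ z : C, r < ‖z‖ ∧ ‖z‖ < s := by
  obtain ⟨t, hrt, hts⟩ := exists_between hrs
  have ht : 0 < t := hr.trans_lt hrt
  have hy : 1 < ‖π‖⁻¹ := (one_lt_inv₀ h0).2 h1
  obtain ⟨b, hb⟩ := pow_unbounded_of_one_lt ‖π‖⁻¹ ((one_lt_div ht).2 hts)
  have hb0 : b ≠ 0 := by rintro rfl; simp only [pow_zero] at hb; linarith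
  rw [div_pow, lt_div_iff₀ (pow_pos ht b)] at hb
  obtain ⟨k, hk1, hk2⟩ := exists_mem_Ico_zpow (pow_pos ht b) hy
  obtain ⟨z, hz⟩ := IsAlgClosed.exists_pow_nat_eq (π⁻¹ ^ (k + 1)) (Nat.pos_of_ne_zero hb0)
  have hzn : ‖z‖ ^ b = ‖π‖⁻¹ ^ (k + 1) := by rw [← norm_pow, hz, norm_zpow, norm_inv]
  refine ⟨z, hrt.trans (lt_of_pow_lt_pow_left₀ b (norm_nonneg z) ?_),
    lt_of_pow_lt_pow_left₀ b (ht.trans hts).le ?_⟩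
  · rwa [hzn]
  · rw [hzn, zpow_add_one₀ (by positivity), mul_comm]
    exact (mul_le_mul_of_nonneg_left hk1 (by positivity)).trans_lt hb

variable [IsUltrametricDist C]

lemma norm_sub_eq_of_lt {u a ρ : C} (h : ‖ρ - a‖ < ‖u - a‖) : ‖u - ρ‖ = ‖u - a‖ := by
  refine norm_eq_of_norm_sub_lt ?_
  rwa [sub_sub_sub_cancel_left, norm_sub_rev]

lemma norm_sub_eq_of_gt {u a ρ : C} (h : ‖u - a‖ < ‖ρ - a‖) : ‖u - ρ‖ = ‖ρ - a‖ := by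
  rw [norm_sub_rev, norm_sub_eq_of_lt h]

/-- If `u ↦ c * ∏ ‖u - ρ‖` is a monomial of degree `m` in `‖u - a‖` on an annulus around `a`,
then there are exactly `m` roots inside, and inside the disk the other roots only contribute a
constant. -/
lemma card_roots_of_annulus
    (hdense : ∀ r s : ℝ, 0 ≤ r → r < s → ∃ z : C, r < ‖z‖ ∧ ‖z‖ < s)
    (R : Multiset C) (a : C) {r s c A : ℝ} {m : ℕ} (hr : 0 ≤ r) (hrs : r < s)
    (hA : 0 < A)
    (h : ∀ u, r < ‖u - a‖ → ‖u - a‖ < s →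
      c * (R.map fun ρ => ‖u - ρ‖).prod = A * ‖u - a‖ ^ m) :
    (R.filter fun ρ => ‖ρ - a‖ ≤ r).card = m ∧ (∀ ρ ∈ R, ‖ρ - a‖ < s → ‖ρ - a‖ ≤ r) ∧
      ∀ u, ‖u - a‖ < s → c * (R.map fun ρ => ‖u - ρ‖).prod =
        A * ((R.filter fun ρ => ‖ρ - a‖ ≤ r).map fun ρ => ‖u - ρ‖).prod := by
  have hgap : ∀ ρ ∈ R, ‖ρ - a‖ < s → ‖ρ - a‖ ≤ r := by
    intro ρ hρ hs
    by_contra! hlt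
    have := h ρ hlt hs
    rw [Multiset.prod_eq_zero (Multiset.mem_map.2 ⟨ρ, hρ, by simp⟩), mul_zero] at this
    have : 0 < A * ‖ρ - a‖ ^ m := mul_pos hA (pow_pos (hr.trans_lt hlt) m)
    linarith
  set I := R.filter fun ρ => ‖ρ - a‖ ≤ r with hI
  set O := R.filter fun ρ => ¬ ‖ρ - a‖ ≤ r with hO
  set B := (O.map fun ρ => ‖ρ - a‖).prod with hB
  have hsplit : ∀ u, ‖u - a‖ < s →
      (R.map fun ρ => ‖u - ρ‖).prod = (I.map fun ρ => ‖u - ρ‖).prod * B := by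
    intro u hu
    rw [← Multiset.filter_add_not (fun ρ => ‖ρ - a‖ ≤ r) R, Multiset.map_add, Multiset.prod_add]
    congr 2
    refine Multiset.map_congr rfl fun ρ hρ => norm_sub_eq_of_gt ?_
    obtain ⟨hρR, hρr⟩ := Multiset.mem_filter.1 hρ
    exact hu.trans_le (not_lt.1 fun hlt => hρr (hgap ρ hρR hlt))
  have hin : ∀ u, r < ‖u - a‖ → (I.map fun ρ => ‖u - ρ‖).prod = ‖u - a‖ ^ I.card := by
    intro u hu
    rw [Multiset.map_congr rfl fun ρ hρ =>
      norm_sub_eq_of_lt ((Multiset.mem_filter.1 hρ).2.trans_lt hu)]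
    simp
  have hmono : ∀ u, r < ‖u - a‖ → ‖u - a‖ < s → c * B * ‖u - a‖ ^ I.card = A * ‖u - a‖ ^ m := by
    intro u hu hus
    rw [← h u hu hus, hsplit u hus, hin u hu]; ring
  obtain ⟨z, hz1, hz2⟩ := hdense r s hr hrs
  obtain ⟨w, hw1, hw2⟩ := hdense ‖z‖ s (norm_nonneg z) hz2
  have hz0 : 0 < ‖z‖ := hr.trans_lt hz1
  have ez := hmono (z + a) (by simpa using hz1) (by simpa using hz2)
  have ew := hmono (w + a) (by simpa using hz1.trans hw1) (by simpa using hw2)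
  rw [add_sub_cancel_right] at ez ew
  have hcB : 0 < c * B := by
    have h1 : 0 < A * ‖z‖ ^ m := by positivity
    rw [← ez] at h1
    exact (pos_iff_pos_of_mul_pos h1).2 (by positivity)
  have hcard : I.card = m := by
    have hq : (‖w‖ / ‖z‖) ^ I.card = (‖w‖ / ‖z‖) ^ m := by
      rw [div_pow, div_pow, div_eq_div_iff (by positivity) (by positivity)]
      have hAcB : A * (c * B) ≠ 0 := by positivity
      refine mul_left_cancel₀ hAcB ?_
      linear_combination A * ‖z‖ ^ m * ew - A * ‖w‖ ^ m * ez
    exact pow_right_injective₀ (div_pos (hz0.trans hw1) hz0) ((one_lt_div hz0).2 hw1).ne' hq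
  have hcBA : c * B = A := by
    rw [hcard] at ez
    exact mul_right_cancel₀ (by positivity) ez
  exact ⟨hcard, hgap, fun u hu => by rw [hsplit u hu, ← hcBA]; ring⟩

/-- A pointwise limit of functions with uniformly separated zeros in a disk, whose norms are
controlled by these zeros, is of the same shape. -/
lemma exists_zeros_of_limit [CompleteSpace C] {a : C} {γ c η : ℝ} {m : ℕ}
    (hc : 0 < c) (hη : 0 < η) {f : ℕ → C → C} {g : C → C} {S : ℕ → Finset C} {ε : ℕ → ℝ}
    (hε : Tendsto ε atTop (𝓝 0)) (hcard : ∀ N, (S N).card = m)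
    (hball : ∀ N, ∀ ρ ∈ S N, ‖ρ - a‖ < γ)
    (hsep : ∀ N, ∀ ρ ∈ S N, ∀ σ ∈ S N, ‖ρ - σ‖ < η → ρ = σ)
    (hf : ∀ N u, ‖u - a‖ < γ → ‖f N u‖ = c * ∏ ρ ∈ S N, ‖u - ρ‖)
    (hdiff : ∀ N M u, N ≤ M → ‖u - a‖ < γ → ‖f M u - f N u‖ ≤ ε N)
    (hlim : ∀ u, ‖u - a‖ < γ → Tendsto (fun N => f N u) atTop (𝓝 (g u))) :
    ∃ T : Finset C, T.card = m ∧ (∀ ρ ∈ T, ‖ρ - a‖ < γ) ∧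
      ∀ u, ‖u - a‖ < γ → ‖g u‖ = c * ∏ ρ ∈ T, ‖u - ρ‖ := by
  classical
  have hnear : ∀ r, 0 < r → ∃ N₀, ∀ N ≥ N₀, ∀ M ≥ N, ∀ ρ ∈ S N, ∃ σ ∈ S M, ‖ρ - σ‖ < r := by
    intro r hr
    obtain ⟨N₀, hN₀⟩ := eventually_atTop.1
      (hε.eventually (gt_mem_nhds (show 0 < c * r ^ m by positivity)))
    refine ⟨N₀, fun N hN M hM ρ hρ => ?_⟩
    by_contra! hfar
    have hρa := hball N ρ hρ
    have h0 : f N ρ = 0 := by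
      rw [← norm_eq_zero, hf N ρ hρa, Finset.prod_eq_zero hρ (by simp), mul_zero]
    have h1 := hdiff N M ρ hM hρa
    rw [h0, sub_zero, hf M ρ hρa] at h1
    have h2 : r ^ m ≤ ∏ σ ∈ S M, ‖ρ - σ‖ := by
      rw [← hcard M, ← Finset.prod_const]
      exact Finset.prod_le_prod (fun _ _ => hr.le) hfar
    have h3 := hN₀ N hN
    have h4 := mul_le_mul_of_nonneg_left h2 hc.le
    linarith
  obtain ⟨N₁, hN₁⟩ := hnear η hη
  choose! s hsmem hsnear using fun k => hN₁ N₁ le_rfl (N₁ + k) (Nat.le_add_right _ _)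
  have hclose : ∀ {x y z : C} {t : ℝ}, ‖x - y‖ < t → ‖y - z‖ < t → ‖x - z‖ < t := by
    intro x y z t h1 h2
    have := IsUltrametricDist.norm_add_le_max (x - y) (y - z)
    rw [sub_add_sub_cancel] at this
    exact this.trans_lt (max_lt h1 h2)
  have hinj : ∀ k, Set.InjOn (s k) (S N₁) := by
    intro k ρ hρ σ hσ hs
    have h1 := hsnear k ρ hρ
    have h2 := hsnear k σ hσ
    rw [← hs, norm_sub_rev] at h2
    exact hsep N₁ ρ hρ σ hσ (hclose h1 h2)
  have himage : ∀ k, (S N₁).image (s k) = S (N₁ + k) := fun k => by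
    refine Finset.eq_of_subset_of_card_le (Finset.image_subset_iff.2 (hsmem k)) ?_
    rw [Finset.card_image_of_injOn (hinj k), hcard, hcard]
  have hcauchy : ∀ ρ ∈ S N₁, CauchySeq fun k => s k ρ := by
    intro ρ hρ
    refine Metric.cauchySeq_iff'.2 fun r hr => ?_
    obtain ⟨N₂, hN₂⟩ := hnear (min r η) (lt_min hr hη)
    refine ⟨N₂, fun k hk => ?_⟩
    obtain ⟨σ, hσ, hσn⟩ := hN₂ (N₁ + N₂) (Nat.le_add_left _ _) (N₁ + k) (by omega)
      _ (hsmem N₂ ρ hρ)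
    have h1 : ‖σ - s k ρ‖ < η := by
      have h2 := hclose (hsnear N₂ ρ hρ) (hσn.trans_le (min_le_right _ _))
      rw [norm_sub_rev] at h2
      exact hclose h2 (hsnear k ρ hρ)
    rw [hsep _ σ hσ _ (hsmem k ρ hρ) h1] at hσn
    rw [dist_eq_norm, norm_sub_rev]
    exact hσn.trans_le (min_le_left _ _)
  choose! t ht using fun ρ (hρ : ρ ∈ S N₁) => cauchySeq_tendsto_of_complete (hcauchy ρ hρ)
  have htsep : ∀ ρ ∈ S N₁, ∀ σ ∈ S N₁, ρ ≠ σ → η ≤ ‖t ρ - t σ‖ := by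
    intro ρ hρ σ hσ hne
    refine ge_of_tendsto' ((ht ρ hρ).sub (ht σ hσ)).norm fun k => not_lt.1 fun hlt => hne ?_
    exact hinj k hρ hσ (hsep _ _ (hsmem k ρ hρ) _ (hsmem k σ hσ) hlt)
  have htinj : Set.InjOn t (S N₁) := by
    intro ρ hρ σ hσ hs
    by_contra hne
    have := htsep ρ hρ σ hσ hne
    rw [hs, sub_self, norm_zero] at this
    linarith
  refine ⟨(S N₁).image t, by rw [Finset.card_image_of_injOn htinj, hcard], ?_, fun u hu => ?_⟩
  · intro x hx
    obtain ⟨ρ, hρ, rfl⟩ := Finset.mem_image.1 hx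
    have := (IsUltrametricDist.isClosed_ball a γ).mem_of_tendsto (ht ρ hρ)
      (Eventually.of_forall fun k => by
        rw [Metric.mem_ball, dist_eq_norm]; exact hball _ _ (hsmem k ρ hρ))
    rwa [Metric.mem_ball, dist_eq_norm] at this
  · rw [Finset.prod_image htinj]
    refine tendsto_nhds_unique
      (((hlim u hu).comp (tendsto_add_atTop_nat N₁)).norm) ?_
    have : Tendsto (fun k => c * ∏ ρ ∈ S N₁, ‖u - s k ρ‖) atTop
        (𝓝 (c * ∏ ρ ∈ S N₁, ‖u - t ρ‖)) :=
      (tendsto_finsetProd _ fun ρ hρ => (tendsto_const_nhds.sub (ht ρ hρ)).norm).const_mul c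
    refine this.congr fun k => ?_
    rw [Function.comp_apply, add_comm k, hf _ u hu, ← himage k, Finset.prod_image (hinj k)]

end Roots

/-! ### Critical radii -/

/-- The possible distances between points of a fiber (preceded by `0`). -/
noncomputable def critRadius (ϖ γ : ℝ) (q : ℕ) : ℕ → ℝ
  | 0 => 0
  | (j + 1) => (ϖ * γ ^ (-(2 : ℝ) * (q : ℝ) ^ j)) ^ ((1 : ℝ) / ((q : ℝ) ^ (j + 1) - (q : ℝ) ^ j))

/-- The outer radius of the annulus on which the index `j` dominates. -/
noncomputable def outerRadius (ϖ γ : ℝ) (q n j : ℕ) : ℝ :=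
  if j < n then critRadius ϖ γ q (j + 1) else γ

namespace Radii

variable {ϖ γ : ℝ} {q n : ℕ}

lemma critRadius_nonneg (h : Radii ϖ γ q n) (j : ℕ) : 0 ≤ critRadius ϖ γ q j := by
  have := h.pi_pos
  have := h.pos
  cases j with
  | zero => rfl
  | succ j => rw [critRadius]; positivity

lemma critRadius_succ_pos (h : Radii ϖ γ q n) (j : ℕ) : 0 < critRadius ϖ γ q (j + 1) := by
  have := h.pi_pos
  have := h.pos
  rw [critRadius]; positivity

lemma critRadius_pow (h : Radii ϖ γ q n) (j : ℕ) :
    (critRadius ϖ γ q (j + 1) ^ (q - 1) * γ ^ 2) ^ q ^ j = ϖ := by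
  have hγ := h.pos
  have hπ := h.pi_pos
  have hq := h.two_le
  have hq1 : (1 : ℝ) < q := by exact_mod_cast hq
  have hexp : (q : ℝ) ^ (j + 1) - (q : ℝ) ^ j = (((q - 1) * q ^ j : ℕ) : ℝ) := by
    push_cast [Nat.cast_sub (show 1 ≤ q by omega)]; ring
  have hne : (q - 1) * q ^ j ≠ 0 := mul_ne_zero (by omega) (by positivity)
  rw [mul_pow, ← pow_mul, ← pow_mul, critRadius, hexp, one_div,
    Real.rpow_inv_natCast_pow (by positivity) hne]
  have : γ ^ (-(2 : ℝ) * (q : ℝ) ^ j) = (γ ^ (2 * q ^ j))⁻¹ := by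
    rw [neg_mul, Real.rpow_neg hγ.le]
    congr 1
    rw [← Real.rpow_natCast γ (2 * q ^ j)]; push_cast; rfl
  rw [this, inv_mul_cancel_right₀ (by positivity)]

lemma strictMonoOn (h : Radii ϖ γ q n) (j : ℕ) :
    StrictMonoOn (fun δ : ℝ => (δ ^ (q - 1) * γ ^ 2) ^ q ^ j) (Set.Ici 0) := by
  intro δ hδ δ' _ hlt
  have hγ := h.pos
  have hq := h.two_le
  have hδ : 0 ≤ δ := hδ
  exact pow_lt_pow_left₀ (mul_lt_mul_of_pos_right (pow_lt_pow_left₀ hlt hδ (by omega))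
    (by positivity)) (by positivity) (by positivity)

lemma lt_critRadius_iff (h : Radii ϖ γ q n) {δ : ℝ} (hδ : 0 ≤ δ) (j : ℕ) :
    δ < critRadius ϖ γ q (j + 1) ↔ (δ ^ (q - 1) * γ ^ 2) ^ q ^ j < ϖ := by
  conv_rhs => rw [← h.critRadius_pow j]
  exact ((h.strictMonoOn j).lt_iff_lt hδ (h.critRadius_nonneg _)).symm

lemma critRadius_lt_iff (h : Radii ϖ γ q n) {δ : ℝ} (hδ : 0 ≤ δ) (j : ℕ) :
    critRadius ϖ γ q (j + 1) < δ ↔ ϖ < (δ ^ (q - 1) * γ ^ 2) ^ q ^ j := by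
  conv_rhs => lhs; rw [← h.critRadius_pow j]
  exact ((h.strictMonoOn j).lt_iff_lt (h.critRadius_nonneg _) hδ).symm

lemma critRadius_strictMono (h : Radii ϖ γ q n) : StrictMono (critRadius ϖ γ q) := by
  refine strictMono_nat_of_lt_succ fun j => ?_
  cases j with
  | zero => exact h.critRadius_succ_pos 0
  | succ j =>
    rw [h.lt_critRadius_iff (h.critRadius_nonneg _), pow_succ q j, pow_mul, h.critRadius_pow]
    exact pow_lt_self_of_lt_one₀ h.pi_pos h.pi_lt h.two_le

lemma lt_radius_pow (h : Radii ϖ γ q n) {k : ℕ} (hk : k < n) :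
    ϖ < (γ ^ (q - 1) * γ ^ 2) ^ q ^ k := by
  have hq := h.two_le
  have := h.below k hk
  rwa [← pow_add, ← pow_mul, show (q - 1 + 2) * q ^ k = q ^ k + q ^ (k + 1) by
    rw [show q - 1 + 2 = 1 + q by omega, pow_succ]; ring]

lemma critRadius_lt_outerRadius (h : Radii ϖ γ q n) {j : ℕ} (hj : j ≤ n) :
    critRadius ϖ γ q j < outerRadius ϖ γ q n j := by
  rw [outerRadius]
  split_ifs with hjn
  · exact h.critRadius_strictMono (Nat.lt_succ_self j)
  · cases j with
    | zero => exact h.pos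
    | succ j => exact (h.critRadius_lt_iff h.pos.le j).2 (h.lt_radius_pow hj)

lemma outerRadius_le (h : Radii ϖ γ q n) (j : ℕ) : outerRadius ϖ γ q n j ≤ γ := by
  rw [outerRadius]
  split_ifs with hjn
  · exact ((h.critRadius_lt_iff h.pos.le j).2 (h.lt_radius_pow hjn)).le
  · rfl

lemma dominates_of_annulus (h : Radii ϖ γ q n) {j : ℕ} (hj : j ≤ n) {δ : ℝ}
    (h1 : critRadius ϖ γ q j < δ) (h2 : δ < outerRadius ϖ γ q n j) : Dominates ϖ γ q n δ j := by
  have hδ := (h.critRadius_nonneg j).trans h1.le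
  refine ⟨hj, fun k hk => ?_, ?_⟩
  · exact (h.critRadius_lt_iff hδ k).1 ((h.critRadius_strictMono.monotone hk).trans_lt h1)
  · rw [outerRadius] at h2
    split_ifs at h2 with hjn
    · exact Or.inr ((h.lt_critRadius_iff hδ j).1 h2)
    · exact Or.inl (by omega)

lemma dominates_radius (h : Radii ϖ γ q n) : Dominates ϖ γ q n γ n :=
  ⟨le_rfl, fun _ hk => h.lt_radius_pow hk, Or.inl rfl⟩

end Radii

/-! ### The fiber -/

section Fiber

variable {C : Type*} [NormedField C] [IsUltrametricDist C] {π : C} {γ : ℝ} {q n : ℕ}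

/-- The zeros of the truncated period determinant in the disk of radius `γ` around `x`. -/
lemma exists_zeros_sum_term [IsAlgClosed C] (h : Radii ‖π‖ γ q n) (hF : BinomialBound π q)
    {x : C} (hx : ‖x‖ = γ) {N : ℕ} (hN : n ≤ N) :
    ∃ S : Finset C, S.card = q ^ n ∧ (∀ ρ ∈ S, ‖ρ - x‖ < γ) ∧
      (∀ ρ ∈ S, ∀ σ ∈ S, ‖ρ - σ‖ < outerRadius ‖π‖ γ q n 0 → ρ = σ) ∧
      ∀ u, ‖u - x‖ < γ → ‖∑ k ∈ Finset.range (N + 1), term π q x u k‖ =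
        weight ‖π‖ γ q n * ∏ ρ ∈ S, ‖u - ρ‖ := by
  classical
  have hdense := fun r s => exists_norm_between (C := C) (r := r) (s := s) h.pi_pos h.pi_lt
  obtain ⟨P, hP⟩ := exists_polynomial_sum_term π q (N + 1) x
  set c := ‖P.leadingCoeff‖ with hc
  set R := P.roots with hR
  have hprod : ∀ u, ‖∑ k ∈ Finset.range (N + 1), term π q x u k‖ =
      c * (R.map fun ρ => ‖u - ρ‖).prod := by
    intro u
    have hmap := map_multiset_prod (normHom : C →*₀ ℝ) (R.map fun ρ => u - ρ)
    rw [Multiset.map_map] at hmap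
    rw [← hP, (IsAlgClosed.splits P).eval_eq_prod_roots, norm_mul]
    exact congrArg (c * ·) hmap
  have hnorm : ∀ {z : C}, ‖z‖ = γ → ∀ {j : ℕ}, j ≤ n → ∀ u,
      critRadius ‖π‖ γ q j < ‖u - z‖ → ‖u - z‖ < outerRadius ‖π‖ γ q n j →
      ‖∑ k ∈ Finset.range (N + 1), term π q z u k‖ = weight ‖π‖ γ q j * ‖u - z‖ ^ q ^ j := by
    intro z hz j hj u h1 h2
    have hu : ‖u‖ = γ := by
      rw [← hz]
      exact norm_eq_of_norm_sub_lt (by rw [hz]; exact h2.trans_le (h.outerRadius_le j))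
    refine norm_sum_term h hF hz hu ?_ (h.dominates_of_annulus hj h1 h2) (by omega)
    rintro rfl
    rw [sub_self, norm_zero] at h1
    exact absurd h1 (not_lt.2 (h.critRadius_nonneg j))
  obtain ⟨hcard, hgap, hdisk⟩ := card_roots_of_annulus hdense R x (c := c)
    (h.critRadius_nonneg n) (h.critRadius_lt_outerRadius le_rfl) (h.weight_pos n)
    (fun u h1 h2 => by rw [← hprod, hnorm hx le_rfl u h1 h2])
  have hout : outerRadius ‖π‖ γ q n n = γ := by simp [outerRadius]
  rw [hout] at hgap hdisk
  set R' := R.filter fun ρ => ‖ρ - x‖ ≤ critRadius ‖π‖ γ q n with hR'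
  have hcrit : critRadius ‖π‖ γ q n < γ :=
    (h.critRadius_lt_outerRadius le_rfl).trans_eq hout
  have hball : ∀ ρ ∈ R', ‖ρ - x‖ < γ := fun ρ hρ => (Multiset.mem_filter.1 hρ).2.trans_lt hcrit
  have hzero : ∀ ρ ∈ R', ∑ k ∈ Finset.range (N + 1), term π q x ρ k = 0 := by
    intro ρ hρ
    rw [← hP]
    exact (Polynomial.mem_roots'.1 (Multiset.mem_filter.1 hρ).1).2
  have hrnorm : ∀ ρ ∈ R', ‖ρ‖ = γ := fun ρ hρ => by
    rw [← hx]; exact norm_eq_of_norm_sub_lt (by rw [hx]; exact hball ρ hρ)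
  have hlocal : ∀ ρ ∈ R', ∀ u, 0 < ‖u - ρ‖ → ‖u - ρ‖ < outerRadius ‖π‖ γ q n 0 →
      ‖∑ k ∈ Finset.range (N + 1), term π q x u k‖ = ‖u - ρ‖ := by
    intro ρ hρ u h1 h2
    rw [norm_sum_term_eq_of_sum_term_eq_zero h hx (hrnorm ρ hρ) (hzero ρ hρ),
      hnorm (hrnorm ρ hρ) (Nat.zero_le n) u h1 h2, Radii.weight_zero]
    simp
  have hnodup : R'.Nodup := by
    refine Multiset.nodup_iff_count_eq_one.2 fun ρ hρ => ?_
    have h1 := (card_roots_of_annulus hdense R ρ (c := c) (A := 1) (m := 1) le_rfl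
      (h.critRadius_lt_outerRadius (Nat.zero_le n)) one_pos
      (fun u h1 h2 => by rw [← hprod, hlocal ρ hρ u h1 h2]; simp)).1
    have h2 : R'.count ρ ≤ 1 := by
      refine (Multiset.count_le_of_le ρ (Multiset.filter_le _ R)).trans ?_
      rw [← h1, Multiset.count_eq_card_filter_eq]
      refine Multiset.card_le_card (Multiset.monotone_filter_right R fun σ hσ => ?_)
      simp [← hσ]
    exact le_antisymm h2 (Multiset.one_le_count_iff_mem.2 hρ)
  refine ⟨⟨R', hnodup⟩, hcard, hball, fun ρ hρ σ hσ hlt => ?_, fun u hu => ?_⟩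
  · by_contra hne
    have h1 := hlocal σ hσ ρ (norm_pos_iff.2 (sub_ne_zero.2 hne)) hlt
    rw [hzero ρ hρ, norm_zero] at h1
    exact hne (sub_eq_zero.1 (norm_eq_zero.1 h1.symm))
  · rw [hprod u, hdisk u hu]
    rfl

variable [CompleteSpace C]

lemma tendsto_ghphi0 (h : Radii ‖π‖ γ q n) {x : C} (hx : ‖x‖ = γ) :
    Tendsto (fun k => π ^ k * ghm π q (2 * k) x) atTop (𝓝 (ghphi0 π q x)) := by
  have hπ : π ≠ 0 := norm_pos_iff.1 h.pi_pos
  obtain ⟨B, _, hB⟩ := h.exists_mu_bound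
  refine CauchySeq.tendsto_limUnder (NonarchimedeanAddGroup.cauchySeq_of_tendsto_sub_nhds_zero ?_)
  refine squeeze_zero_norm (a := fun k => B * γ ^ q ^ (2 * k + 1)) (fun k => ?_) ?_
  · have e : π ^ (k + 1) * ghm π q (2 * (k + 1)) x - π ^ k * ghm π q (2 * k) x =
        π ^ k * ghm π q (2 * k + 1) x * x ^ q ^ (2 * k + 1) := by
      rw [show 2 * (k + 1) = 2 * k + 2 by ring, ghm_add_two]; field_simp; ring
    rw [e, norm_mul, norm_mul, norm_pow, norm_pow, hx, norm_ghm h hx]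
    have := hB (2 * k + 1)
    rw [show (2 * k + 1) / 2 = k by omega] at this
    exact mul_le_mul_of_nonneg_right this (pow_pos h.pos _).le
  · have : Tendsto (fun k : ℕ => 2 * k + 1) atTop atTop :=
      tendsto_atTop_mono (fun k => by simp only [id]; omega) tendsto_id
    simpa using (h.tendsto_pow_pow.comp this).const_mul B

lemma tendsto_ghphi1 (h : Radii ‖π‖ γ q n) {x : C} (hx : ‖x‖ = γ) :
    Tendsto (fun k => π ^ (k + 1) * ghm π q (2 * k + 1) x) atTop (𝓝 (ghphi1 π q x)) := by
  have hπ : π ≠ 0 := norm_pos_iff.1 h.pi_pos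
  obtain ⟨B, _, hB⟩ := h.exists_mu_bound
  refine CauchySeq.tendsto_limUnder (NonarchimedeanAddGroup.cauchySeq_of_tendsto_sub_nhds_zero ?_)
  refine squeeze_zero_norm (a := fun k => B * γ ^ q ^ (2 * k + 2)) (fun k => ?_) ?_
  · have e : π ^ (k + 1 + 1) * ghm π q (2 * (k + 1) + 1) x - π ^ (k + 1) * ghm π q (2 * k + 1) x =
        π ^ (k + 1) * ghm π q (2 * k + 2) x * x ^ q ^ (2 * k + 2) := by
      rw [show 2 * (k + 1) + 1 = 2 * k + 1 + 2 by ring, ghm_add_two]; field_simp; ring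
    rw [e, norm_mul, norm_mul, norm_pow, norm_pow, hx, norm_ghm h hx]
    have := hB (2 * k + 2)
    rw [show (2 * k + 2) / 2 = k + 1 by omega] at this
    exact mul_le_mul_of_nonneg_right this (pow_pos h.pos _).le
  · have : Tendsto (fun k : ℕ => 2 * k + 2) atTop atTop :=
      tendsto_atTop_mono (fun k => by simp only [id]; omega) tendsto_id
    simpa using (h.tendsto_pow_pow.comp this).const_mul B

/-- The period determinant of two points. -/
noncomputable def periodDet (π : C) (q : ℕ) (x y : C) : C :=
  ghphi1 π q x * ghphi0 π q y - ghphi0 π q x * ghphi1 π q y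

lemma tendsto_sum_term (h : Radii ‖π‖ γ q n) {x y : C} (hx : ‖x‖ = γ) (hy : ‖y‖ = γ) :
    Tendsto (fun k => ∑ i ∈ Finset.range (2 * k + 1), term π q x y i) atTop
      (𝓝 (periodDet π q x y)) := by
  refine (((tendsto_ghphi1 h hx).mul (tendsto_ghphi0 h hy)).sub
    ((tendsto_ghphi0 h hx).mul (tendsto_ghphi1 h hy))).congr fun k => ?_
  rw [sum_term (norm_pos_iff.1 h.pi_pos), Even.neg_pow (even_two_mul k)]
  ring

lemma norm_periodDet (h : Radii ‖π‖ γ q n) (hF : BinomialBound π q)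
    {x y : C} (hx : ‖x‖ = γ) (hy : ‖y‖ = γ) (hxy : y ≠ x) {j : ℕ}
    (hj : Dominates ‖π‖ γ q n ‖y - x‖ j) :
    ‖periodDet π q x y‖ = weight ‖π‖ γ q j * ‖y - x‖ ^ q ^ j := by
  refine tendsto_nhds_unique (tendsto_sum_term h hx hy).norm
    (tendsto_const_nhds.congr' ?_)
  filter_upwards [eventually_ge_atTop n] with k hk
  exact (norm_sum_term h hF hx hy hxy hj (by omega)).symm

lemma exists_zeros_periodDet [IsAlgClosed C] (h : Radii ‖π‖ γ q n) (hF : BinomialBound π q)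
    {x : C} (hx : ‖x‖ = γ) :
    ∃ T : Finset C, T.card = q ^ n ∧ (∀ ρ ∈ T, ‖ρ - x‖ < γ) ∧
      ∀ u, ‖u - x‖ < γ → ‖periodDet π q x u‖ = weight ‖π‖ γ q n * ∏ ρ ∈ T, ‖u - ρ‖ := by
  have hnorm : ∀ u, ‖u - x‖ < γ → ‖u‖ = γ := fun u hu => by
    rw [← hx]; exact norm_eq_of_norm_sub_lt (by rwa [hx])
  choose S hcard hball hsep hprod using fun N =>
    exists_zeros_sum_term h hF hx (N := 2 * (N + n)) (by omega)
  refine exists_zeros_of_limit (h.weight_pos n)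
    (h.critRadius_lt_outerRadius (Nat.zero_le n))
    (f := fun N u => ∑ k ∈ Finset.range (2 * (N + n) + 1), term π q x u k)
    (ε := fun N => weight ‖π‖ γ q (2 * (N + n) + 1) * γ ^ q ^ (2 * (N + n) + 1))
    ?_ hcard hball hsep hprod ?_ ?_
  · exact h.tendsto_weight_mul.comp
      (tendsto_atTop_mono (fun k => by simp only [id]; omega) tendsto_id)
  · intro N M u hNM hu
    rw [← Finset.sum_Ico_eq_sub _ (by omega)]
    refine IsUltrametricDist.norm_sum_le_of_forall_le_of_nonneg
      (mul_pos (h.weight_pos _) (pow_pos h.pos _)).le fun k hk => ?_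
    exact (norm_term_le h hx (hnorm u hu) k).trans
      (h.antitone_weight_mul (by omega) (Finset.mem_Ico.1 hk).1)
  · intro u hu
    exact (tendsto_sum_term h hx (hnorm u hu)).comp (tendsto_add_atTop_nat n)

/-- The fiber through `x`, filtered by the distance to `x`. -/
lemma exists_fiber [IsAlgClosed C] (h : Radii ‖π‖ γ q n) (hF : BinomialBound π q)
    {x : C} (hx : ‖x‖ = γ) :
    ∃ T : Finset C, {u : C | ‖u‖ = γ ∧ ghphi0 π q x * ghphi1 π q u = ghphi1 π q x * ghphi0 π q u}
        = T ∧
      (∀ j ≤ n, (T.filter fun ρ => ‖ρ - x‖ ≤ critRadius ‖π‖ γ q j).card = q ^ j) ∧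
      (∀ j ≤ n, ∀ ρ ∈ T, ‖ρ - x‖ < outerRadius ‖π‖ γ q n j → ‖ρ - x‖ ≤ critRadius ‖π‖ γ q j) ∧
      ∀ ρ ∈ T, ‖ρ - x‖ < γ := by
  obtain ⟨T, hcard, hball, hprod⟩ := exists_zeros_periodDet h hF hx
  have hnorm : ∀ u, ‖u - x‖ < γ → ‖u‖ = γ := fun u hu => by
    rw [← hx]; exact norm_eq_of_norm_sub_lt (by rwa [hx])
  have hroots : ∀ j ≤ n, _ := fun j hj =>
    card_roots_of_annulus (fun r s => exists_norm_between (C := C) h.pi_pos h.pi_lt) T.val x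
      (c := weight ‖π‖ γ q n) (m := q ^ j) (h.critRadius_nonneg j)
      (h.critRadius_lt_outerRadius hj) (h.weight_pos j) (fun u h1 h2 => by
        have hu := h2.trans_le (h.outerRadius_le j)
        refine (hprod u hu).symm.trans
          (norm_periodDet h hF hx (hnorm u hu) ?_ (h.dominates_of_annulus hj h1 h2))
        rintro rfl
        rw [sub_self, norm_zero] at h1
        exact absurd h1 (not_lt.2 (h.critRadius_nonneg j)))
  refine ⟨T, ?_, fun j hj => (hroots j hj).1, fun j hj => (hroots j hj).2.1, hball⟩
  ext u
  have hdet : ghphi0 π q x * ghphi1 π q u = ghphi1 π q x * ghphi0 π q u ↔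
      periodDet π q x u = 0 := by
    rw [periodDet, sub_eq_zero, eq_comm]
  have hmem : ‖u - x‖ < γ → (periodDet π q x u = 0 ↔ u ∈ T) := by
    intro hu
    rw [← norm_eq_zero, hprod u hu, mul_eq_zero, or_iff_right (h.weight_pos n).ne',
      Finset.prod_eq_zero_iff]
    simp [sub_eq_zero]
  change ‖u‖ = γ ∧ _ ↔ u ∈ T
  rw [hdet]
  constructor
  · rintro ⟨hu, h0⟩
    have hle : ‖u - x‖ ≤ γ := by simpa [hu, hx] using norm_sub_le_max u x
    rcases hle.lt_or_eq with hlt | heq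
    · exact (hmem hlt).1 h0
    · have hne : u ≠ x := by
        rintro rfl
        rw [sub_self, norm_zero] at heq
        exact h.pos.ne heq
      have := norm_periodDet h hF hx hu hne (j := n) (by rw [heq]; exact h.dominates_radius)
      rw [h0, norm_zero, heq] at this
      exact absurd this (mul_pos (h.weight_pos n) (pow_pos h.pos _)).ne
  · intro hu
    exact ⟨hnorm u (hball u hu), (hmem (hball u hu)).2 hu⟩

end Fiber

/-- An increasing chain of finite sets can be enumerated compatibly. -/
lemma exists_enumeration {α : Type*} [Nonempty α] (A : ℕ → Finset α) (n : ℕ)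
    (hA : ∀ j < n, A j ⊆ A (j + 1)) :
    ∃ v : ℕ → α, ∀ j ≤ n, Set.BijOn v (Set.Icc 1 (A j).card) (A j) := by
  classical
  induction n with
  | zero =>
    obtain ⟨v, hv⟩ := (Set.finite_Icc 1 (A 0).card).exists_bijOn_of_encard_eq
      (t := (A 0 : Set α)) (by
        rw [← Finset.coe_Icc, Set.encard_coe_eq_coe_finsetCard, Set.encard_coe_eq_coe_finsetCard]
        simp)
    exact ⟨v, fun j hj => by rwa [Nat.le_zero.1 hj]⟩
  | succ n ih =>
    obtain ⟨v, hv⟩ := ih fun j hj => hA j (by omega)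
    have hsub := hA n (Nat.lt_succ_self n)
    have hcard := Finset.card_le_card hsub
    obtain ⟨w, hw⟩ := (Set.finite_Ioc (A n).card (A (n + 1)).card).exists_bijOn_of_encard_eq
      (t := ((A (n + 1) \ A n : Finset α) : Set α)) (by
        rw [← Finset.coe_Ioc, Set.encard_coe_eq_coe_finsetCard, Set.encard_coe_eq_coe_finsetCard,
          Finset.card_sdiff_of_subset hsub]
        simp)
    let z : ℕ → α := fun i => if i ≤ (A n).card then v i else w i
    have hmono : ∀ j ≤ n, A j ⊆ A n := fun j hj =>
      Nat.decreasingInduction (motive := fun k _ => A k ⊆ A n)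
        (fun k hk ih => (hA k (by omega)).trans ih) subset_rfl hj
    have hzv : ∀ j ≤ n, Set.BijOn z (Set.Icc 1 (A j).card) (A j) := fun j hj =>
      (hv j hj).congr fun i hi => by
        have := Finset.card_le_card (hmono j hj)
        simp only [z, if_pos (hi.2.trans this)]
    refine ⟨z, fun j hj => ?_⟩
    rcases Nat.le_succ_iff.1 hj with hj | rfl
    · exact hzv j hj
    · have hzw : Set.BijOn z (Set.Ioc (A n).card (A (n + 1)).card)
          ((A (n + 1) \ A n : Finset α) : Set α) :=
        hw.congr fun i hi => by simp only [z, if_neg (not_le.2 hi.1)]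
      have hIcc : Set.Icc 1 (A (n + 1)).card =
          Set.Icc 1 (A n).card ∪ Set.Ioc (A n).card (A (n + 1)).card := by
        ext i; simp only [Set.mem_Icc, Set.mem_union, Set.mem_Ioc]; omega
      have hun : ((A (n + 1) : Finset α) : Set α) =
          (A n : Set α) ∪ (A (n + 1) \ A n : Finset α) := by
        rw [← Finset.coe_union, Finset.union_sdiff_of_subset hsub]
      rw [hIcc, hun]
      refine (hzv n le_rfl).union hzw ?_
      refine (Set.injOn_union ?_).2 ⟨(hzv n le_rfl).injOn, hzw.injOn, fun a ha b hb hab => ?_⟩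
      · exact Set.disjoint_left.2 fun i hi hi' => absurd hi.2 (not_le.2 hi'.1)
      · have h1 : z a ∈ A n := (hzv n le_rfl).mapsTo ha
        have h2 : z b ∈ A (n + 1) \ A n := hzw.mapsTo hb
        exact (Finset.mem_sdiff.1 h2).2 (hab ▸ h1)



lemma pow_lt_rpow_one_div_iff {ϖ γ : ℝ} (hϖ : 0 ≤ ϖ) (hγ : 0 ≤ γ) (q k : ℕ) :
    γ ^ q ^ k < ϖ ^ ((1 : ℝ) / (q + 1)) ↔ γ ^ (q ^ k + q ^ (k + 1)) < ϖ := by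
  have hexp : q ^ k + q ^ (k + 1) = q ^ k * (q + 1) := by ring
  have hroot : (ϖ ^ ((1 : ℝ) / (q + 1))) ^ (q + 1) = ϖ := by
    rw [one_div]
    exact_mod_cast Real.rpow_inv_natCast_pow hϖ (Nat.succ_ne_zero q)
  rw [← pow_lt_pow_iff_left₀ (by positivity) (by positivity) (Nat.succ_ne_zero q), hroot,
    ← pow_mul, hexp]

lemma Radii.of_rpow {ϖ γ : ℝ} {q n : ℕ} (hϖ0 : 0 < ϖ) (hϖ1 : ϖ < 1) (hγ0 : 0 < γ) (hγ1 : γ < 1)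
    (hq : 2 ≤ q) (hγ : ∀ s : ℕ, γ ≠ ϖ ^ ((1 : ℝ) / ((q : ℝ) ^ s + (q : ℝ) ^ (s + 1))))
    (hn : γ ^ q ^ n < ϖ ^ ((1 : ℝ) / (q + 1)))
    (hmin : ∀ m < n, ¬ γ ^ q ^ m < ϖ ^ ((1 : ℝ) / (q + 1))) : Radii ϖ γ q n where
  pi_pos := hϖ0
  pi_lt := hϖ1
  pos := hγ0
  lt := hγ1
  two_le := hq
  above := (pow_lt_rpow_one_div_iff hϖ0.le hγ0.le q n).1 hn
  below k hk := by
    refine lt_of_le_of_ne (not_lt.1 ((pow_lt_rpow_one_div_iff hϖ0.le hγ0.le q k).not.1 (hmin k hk)))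
      fun heq => hγ k ?_
    rw [heq, one_div]
    exact_mod_cast (Real.pow_rpow_inv_natCast hγ0.le (by positivity)).symm

end GrossHopkins

theorem gross_hopkins_fiber_nongeneric {p : ℕ} [Fact p.Prime] {C : Type*} [NormedField C] [IsUltrametricDist C]
    [CompleteSpace C] [IsAlgClosed C] [Algebra ℚ_[p] C]
    (hiso : ∀ x : ℚ_[p], ‖algebraMap ℚ_[p] C x‖ = ‖x‖)
    (K : IntermediateField ℚ_[p] C) (hKfin : FiniteDimensional ℚ_[p] K)
    (q : ℕ) (hq : ∃ r : ℕ, 0 < r ∧ q = p ^ r)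
    (π : C) (hπK : π ∈ K) (hπ0 : 0 < ‖π‖) (hπ1 : ‖π‖ < 1)
    (hπunif : ∀ x ∈ K, ‖x‖ < 1 → ‖x‖ ≤ ‖π‖)
    (hres : ∃ S : Finset C, S.card = q ∧ (∀ s ∈ S, s ∈ K ∧ ‖s‖ ≤ 1) ∧
      (∀ x ∈ K, ‖x‖ ≤ 1 → ∃ s ∈ S, ‖x - s‖ < 1) ∧
      (∀ s ∈ S, ∀ t ∈ S, s ≠ t → ‖s - t‖ = 1))
    (γ : ℝ) (hγ0 : 0 < γ) (hγ1 : γ < 1)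
    (hγform : ∀ s : ℕ, γ ≠ ‖π‖ ^ ((1:ℝ)/((q:ℝ)^s + (q:ℝ)^(s+1))))
    (u1 : C) (hu1 : ‖u1‖ = γ)
    (n : ℕ) (hn : γ ^ (q^n) < ‖π‖ ^ ((1:ℝ)/(q+1)))
    (hnmin : ∀ m : ℕ, m < n → ¬ (γ ^ (q^m) < ‖π‖ ^ ((1:ℝ)/(q+1)))) :
    ∃ v : ℕ → C, v 1 = u1 ∧ Set.InjOn v (Set.Icc 1 (q^n)) ∧
      {u : C | ‖u‖ = γ ∧ ghphi0 π q u1 * ghphi1 π q u = ghphi1 π q u1 * ghphi0 π q u}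
        = v '' (Set.Icc 1 (q^n)) ∧
      ∀ i j : ℕ, 1 ≤ j → j ≤ n → q^(j-1) < i → i ≤ q^j →
        ‖v i - u1‖ = (‖π‖ * γ ^ (-(2:ℝ) * (q:ℝ)^(j-1))) ^
          ((1:ℝ)/((q:ℝ)^j - (q:ℝ)^(j-1))) := by
  classical
  have hpp : p.Prime := Fact.out
  have hpπ : ‖(p : C)‖ ≤ ‖π‖ := by
    refine hπunif _ (natCast_mem K p) ?_
    rw [← map_natCast (algebraMap ℚ_[p] C) p, hiso]
    exact Padic.norm_p_lt_one
  have hF : GrossHopkins.BinomialBound π q := by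
    obtain ⟨r, -, rfl⟩ := hq
    exact GrossHopkins.norm_add_pow_sub_le hpp r hpπ
  have hq2 : 2 ≤ q := by
    obtain ⟨r, hr, rfl⟩ := hq
    exact hpp.two_le.trans (Nat.le_self_pow hr.ne' p)
  have h := GrossHopkins.Radii.of_rpow hπ0 hπ1 hγ0 hγ1 hq2 hγform hn hnmin
  obtain ⟨T, hset, hcard, hgap, hball⟩ := GrossHopkins.exists_fiber h hF hu1
  set A : ℕ → Finset C :=
    fun j => T.filter fun ρ => ‖ρ - u1‖ ≤ GrossHopkins.critRadius ‖π‖ γ q j with hA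
  have hmem : ∀ {j : ℕ} {ρ : C},
      ρ ∈ A j ↔ ρ ∈ T ∧ ‖ρ - u1‖ ≤ GrossHopkins.critRadius ‖π‖ γ q j := by
    simp [hA]
  obtain ⟨v, hv⟩ := GrossHopkins.exists_enumeration A n fun j _ ρ hρ =>
    hmem.2 ⟨(hmem.1 hρ).1, (hmem.1 hρ).2.trans (h.critRadius_strictMono (Nat.lt_succ_self j)).le⟩
  replace hv : ∀ j ≤ n, Set.BijOn v (Set.Icc 1 (q ^ j)) (A j) := fun j hj => by
    have := hv j hj
    rwa [show (A j).card = q ^ j from hcard j hj] at this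
  have hAn : A n = T := Finset.filter_true_of_mem fun ρ hρ =>
    hgap n le_rfl ρ hρ (by simpa [GrossHopkins.outerRadius] using hball ρ hρ)
  refine ⟨v, ?_, (hv n le_rfl).injOn, ?_, ?_⟩
  · have h1 : v 1 ∈ A 0 := (hv 0 (Nat.zero_le n)).mapsTo (by simp)
    exact sub_eq_zero.1 (norm_le_zero_iff.1 (hmem.1 h1).2)
  · rw [hset, (hv n le_rfl).image_eq, hAn]
  · intro i j hj1 hjn hi1 hi2
    obtain ⟨j, rfl⟩ := Nat.exists_eq_succ_of_ne_zero (Nat.one_le_iff_ne_zero.1 hj1)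
    simp only [Nat.succ_eq_add_one, Nat.add_sub_cancel] at hi1 hi2 hjn ⊢
    have hvi : v i ∈ A (j + 1) := (hv _ hjn).mapsTo ⟨by omega, hi2⟩
    refine le_antisymm (hmem.1 hvi).2 (not_lt.1 fun hlt => ?_)
    have hle := hgap j (by omega) (v i) (hmem.1 hvi).1
      (by rwa [GrossHopkins.outerRadius, if_pos (by omega)])
    obtain ⟨i', hi', he⟩ := (hv j (by omega)).surjOn (hmem.2 ⟨(hmem.1 hvi).1, hle⟩)
    have := (hv _ hjn).injOn ⟨hi'.1, hi'.2.trans (by omega)⟩ ⟨by omega, hi2⟩ he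
    exact absurd (this ▸ hi'.2) (not_le.2 hi1)
end

section
/- Suppose γ = |π|^{1/(q^s+q^{s+1})} for some integer s ≥ 0, and let u_1 ∈ ℂ_p with |u_1| = γ. Then the fiber S = {u ∈ ℂ_p : |u| = γ and φ_0(u_1)·φ_1(u) = φ_1(u_1)·φ_0(u)} has exactly q^s + q^{s+1} elements, and there is an enumeration S = {u_{(1)}, u_{(2)}, …, u_{(q^s+q^{s+1})}} with u_{(1)} = u_1 such that for all integers i, j with 1 ≤ j ≤ s and q^{j-1} < i ≤ q^j one has |u_{(i)} − u_1| = (|π|·γ^{-2q^{j-1}})^{1/(q^j − q^{j-1})}, and for all i with q^s < i ≤ q^s + q^{s+1} one has |u_{(i)} − u_1| = γ. -/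
open Filter


/-! ### Ultrametric generalities -/

section Ultrametric

variable {C : Type*} [NormedField C]

/-- An algebraically closed field with a nontrivial norm has elements of norms in every interval. -/
theorem exists_norm_mem_Ioo [IsAlgClosed C] {π : C} (h0 : 0 < ‖π‖) (h1 : ‖π‖ < 1) {a b : ℝ}
    (ha : 0 ≤ a) (hab : a < b) : ∃ x : C, a < ‖x‖ ∧ ‖x‖ < b := by
  obtain ⟨c, hac, hcb⟩ := exists_between hab
  have hc : 0 < c := ha.trans_lt hac
  have hlog : Real.log ‖π‖ < 0 := Real.log_neg h0 h1
  obtain ⟨y, hy1, hy2⟩ := exists_rat_btwn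
    (div_lt_div_of_neg_of_lt hlog (Real.log_lt_log hc hcb))
  obtain ⟨x, hx⟩ := IsAlgClosed.exists_pow_nat_eq (π ^ y.num) y.pos
  have hnorm := congrArg (fun z => Real.log ‖z‖) hx
  simp only [norm_pow, norm_zpow, Real.log_pow, Real.log_zpow] at hnorm
  have hden : (0 : ℝ) < y.den := by exact_mod_cast y.pos
  have hlogx : Real.log ‖x‖ = y * Real.log ‖π‖ := by
    have hy : (y : ℝ) = y.num / y.den := by exact_mod_cast (Rat.num_div_den y).symm
    rw [hy]
    field_simp
    linarith
  have hx0 : 0 < ‖x‖ := by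
    refine norm_pos_iff.2 fun h => ?_
    rw [h, zero_pow y.pos.ne'] at hx
    exact zpow_ne_zero _ (norm_pos_iff.1 h0) hx.symm
  refine ⟨x, hac.trans ?_, ?_⟩
  · rw [← Real.log_lt_log_iff hc hx0, hlogx]
    exact (lt_div_iff_of_neg hlog).1 hy2
  · rw [← Real.log_lt_log_iff hx0 (ha.trans_lt hab), hlogx]
    exact (div_lt_iff_of_neg hlog).1 hy1

variable [IsUltrametricDist C]

theorem norm_add_eq_left_of_lt {x y : C} (h : ‖y‖ < ‖x‖) : ‖x + y‖ = ‖x‖ := by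
  rw [IsUltrametricDist.norm_add_eq_max_of_norm_ne_norm h.ne', max_eq_left h.le]

theorem norm_sub_eq_left_of_lt {x y : C} (h : ‖y‖ < ‖x‖) : ‖x - y‖ = ‖x‖ := by
  rw [sub_eq_add_neg]
  exact norm_add_eq_left_of_lt (by rwa [norm_neg])

theorem norm_sub_eq_right_of_lt {x y : C} (h : ‖x‖ < ‖y‖) : ‖x - y‖ = ‖y‖ := by
  rw [norm_sub_rev]
  exact norm_sub_eq_left_of_lt h

theorem norm_sub_le_max_norm (x y : C) : ‖x - y‖ ≤ max ‖x‖ ‖y‖ := by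
  simpa [sub_eq_add_neg] using IsUltrametricDist.norm_add_le_max x (-y)

theorem norm_sub_lt_of_lt {x y z : C} {η : ℝ} (h₁ : ‖x - y‖ < η) (h₂ : ‖y - z‖ < η) :
    ‖x - z‖ < η := by
  have h := IsUltrametricDist.norm_add_le_max (x - y) (y - z)
  rw [sub_add_sub_cancel] at h
  exact h.trans_lt (max_lt h₁ h₂)

/-- A finite sum with a strictly dominant term has the norm of that term. -/
theorem norm_sum_range_eq_of_dominant {f : ℕ → C} {n j : ℕ} (hj : j < n)
    (h : ∀ i < n, i ≠ j → ‖f i‖ < ‖f j‖) : ‖∑ i ∈ Finset.range n, f i‖ = ‖f j‖ := by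
  rw [← Finset.add_sum_erase _ _ (Finset.mem_range.2 hj)]
  rcases ((Finset.range n).erase j).eq_empty_or_nonempty with he | he
  · simp [he]
  · obtain ⟨i, hi, hle⟩ := IsUltrametricDist.exists_norm_finsetSum_le_of_nonempty he f
    rw [Finset.mem_erase, Finset.mem_range] at hi
    exact norm_add_eq_left_of_lt (hle.trans_lt (h i hi.2 hi.1))

/-- Raising to the power `p ^ r` is additive up to a multiple of `p`. -/
theorem norm_add_pow_prime_pow_sub_le {p : ℕ} [Fact p.Prime] (r : ℕ) {x y : C} {M : ℝ}
    (hx : ‖x‖ ≤ M) (hy : ‖y‖ ≤ M) :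
    ‖(x + y) ^ p ^ r - x ^ p ^ r - y ^ p ^ r‖ ≤ ‖(p : C)‖ * (‖y‖ * M ^ (p ^ r - 1)) := by
  have hM : 0 ≤ M := (norm_nonneg x).trans hx
  rw [add_pow_prime_pow_eq' Fact.out x y r, sub_sub, add_sub_cancel_left, norm_mul]
  refine mul_le_mul_of_nonneg_left ?_ (norm_nonneg _)
  refine IsUltrametricDist.norm_sum_le_of_forall_le_of_nonneg (by positivity) fun k hk => ?_
  obtain ⟨hk0, hk1⟩ := Finset.mem_Ioo.1 hk
  obtain ⟨d, hd⟩ : ∃ d, p ^ r - k = d + 1 := ⟨p ^ r - k - 1, by omega⟩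
  rw [norm_mul, norm_mul, norm_pow, norm_pow, hd]
  calc ‖x‖ ^ k * ‖y‖ ^ (d + 1) * ‖(((p ^ r).choose k / p : ℕ) : C)‖
      ≤ M ^ k * (M ^ d * ‖y‖) * 1 := by
        rw [pow_succ]
        gcongr
        exact IsUltrametricDist.norm_natCast_le_one C _
    _ = ‖y‖ * M ^ (p ^ r - 1) := by
        rw [show p ^ r - 1 = k + d by omega, pow_add]; ring

end Ultrametric

/-! ### Counting roots of polynomials by growth of the norm -/

section Roots

open Polynomial

variable {C : Type*} [NormedField C]

theorem norm_eval_eq_prod_roots [IsAlgClosed C] (P : C[X]) (x : C) :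
    ‖P.eval x‖ = ‖P.leadingCoeff‖ * (P.roots.map fun a => ‖x - a‖).prod := by
  rw [(IsAlgClosed.splits P).eval_eq_prod_roots, norm_mul]
  congr 1
  exact (Multiset.prod_hom' P.roots (normHom : C →*₀ ℝ) fun a => x - a).symm

variable [IsUltrametricDist C]

/-- The distances from `x` to points that are either closer to `c` than `x`, or farther. -/
theorem prod_norm_sub_eq (m : Multiset C) (c x : C) {t : ℝ} (htx : t < ‖x - c‖)
    (h : ∀ a ∈ m, t < ‖a - c‖ → ‖x - c‖ < ‖a - c‖) :
    (m.map fun a => ‖x - a‖).prod =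
      ‖x - c‖ ^ (m.filter fun a => ‖a - c‖ ≤ t).card *
        ((m.filter fun a => ¬ ‖a - c‖ ≤ t).map fun a => ‖a - c‖).prod := by
  induction m using Multiset.induction_on with
  | empty => simp
  | cons a m ih =>
    have ih := ih fun b hb => h b (Multiset.mem_cons_of_mem hb)
    have hxa : x - a = (x - c) - (a - c) := by ring
    rw [Multiset.map_cons, Multiset.prod_cons, ih]
    by_cases hat : ‖a - c‖ ≤ t
    · rw [Multiset.filter_cons_of_pos (p := fun a => ‖a - c‖ ≤ t) _ hat,
        Multiset.filter_cons_of_neg (p := fun a => ¬ ‖a - c‖ ≤ t) _ (not_not.2 hat),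
        Multiset.card_cons, hxa, norm_sub_eq_left_of_lt (hat.trans_lt htx)]
      ring
    · rw [Multiset.filter_cons_of_neg (p := fun a => ‖a - c‖ ≤ t) _ hat,
        Multiset.filter_cons_of_pos (p := fun a => ¬ ‖a - c‖ ≤ t) _ hat, hxa,
        norm_sub_eq_right_of_lt (h a (Multiset.mem_cons_self a m) (not_le.1 hat)),
        Multiset.map_cons, Multiset.prod_cons]
      ring

/-- If `‖P‖` grows like the `N`-th power of the distance to `c` on an open annulus, then `P` has
no roots in the annulus, and exactly `N` roots in the disk that it surrounds. -/
theorem card_roots_filter_of_growth [IsAlgClosed C] {π : C} (h0 : 0 < ‖π‖) (h1 : ‖π‖ < 1)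
    {P : C[X]} (hP : P ≠ 0) {c : C} {t₁ t₂ B : ℝ} {N : ℕ} (ht₁ : 0 ≤ t₁) (ht : t₁ < t₂)
    (hB : 0 < B) (h : ∀ x, t₁ < ‖x - c‖ → ‖x - c‖ < t₂ → ‖P.eval x‖ = B * ‖x - c‖ ^ N) :
    (∀ a ∈ P.roots, t₁ < ‖a - c‖ → t₂ ≤ ‖a - c‖) ∧
      (P.roots.filter fun a => ‖a - c‖ ≤ t₁).card = N := by
  have hroot : ∀ a ∈ P.roots, t₁ < ‖a - c‖ → t₂ ≤ ‖a - c‖ := by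
    intro a ha h₁
    by_contra! h₂
    have := h a h₁ h₂
    rw [(Polynomial.mem_roots hP).1 ha, norm_zero] at this
    have : 0 < B * ‖a - c‖ ^ N := mul_pos hB (pow_pos (ht₁.trans_lt h₁) _)
    linarith
  refine ⟨hroot, ?_⟩
  have key : ∀ x, t₁ < ‖x - c‖ → ‖x - c‖ < t₂ → B * ‖x - c‖ ^ N =
      ‖P.leadingCoeff‖ * ((P.roots.filter fun a => ¬ ‖a - c‖ ≤ t₁).map fun a => ‖a - c‖).prod *
        ‖x - c‖ ^ (P.roots.filter fun a => ‖a - c‖ ≤ t₁).card := by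
    intro x h₁ h₂
    rw [← h x h₁ h₂, norm_eval_eq_prod_roots,
      prod_norm_sub_eq P.roots c x h₁ fun a ha hat => h₂.trans_le (hroot a ha hat)]
    ring
  generalize (P.roots.filter fun a => ‖a - c‖ ≤ t₁).card = M at key ⊢
  generalize ‖P.leadingCoeff‖ *
    ((P.roots.filter fun a => ¬ ‖a - c‖ ≤ t₁).map fun a => ‖a - c‖).prod = L at key
  obtain ⟨x, hx₁, hx₂⟩ := exists_norm_mem_Ioo h0 h1 ht₁ ht
  obtain ⟨y, hy₁, hy₂⟩ := exists_norm_mem_Ioo h0 h1 (norm_nonneg x) hx₂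
  have hx := key (x + c) (by simpa) (by simpa)
  have hy := key (y + c) (by simpa using hx₁.trans hy₁) (by simpa)
  simp only [add_sub_cancel_right] at hx hy
  have hxpos : 0 < ‖x‖ := ht₁.trans_lt hx₁
  have hypos : 0 < ‖y‖ := hxpos.trans hy₁
  have hL : 0 < L := by
    have : 0 < L * ‖x‖ ^ M := hx ▸ by positivity
    exact pos_of_mul_pos_left this (by positivity)
  have hratio : (‖y‖ / ‖x‖) ^ M = (‖y‖ / ‖x‖) ^ N := by
    have : B * L * (‖y‖ ^ N * ‖x‖ ^ M) = B * L * (‖y‖ ^ M * ‖x‖ ^ N) := by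
      calc _ = (B * ‖y‖ ^ N) * (L * ‖x‖ ^ M) := by ring
        _ = _ := by rw [hy, ← hx]; ring
    have := mul_left_cancel₀ (by positivity) this
    rw [div_pow, div_pow]
    field_simp
    linarith
  exact pow_right_injective₀ (div_pos hypos hxpos) ((one_lt_div hxpos).2 hy₁).ne' hratio

/-- If `u` is at distance at least `η` from all roots on the sphere through `u` and `y`, then
`‖P u‖` is bounded below in terms of `‖P y‖`. -/
theorem norm_eval_mul_pow_le [IsAlgClosed C] (P : C[X]) {γ η : ℝ} (hη : 0 ≤ η) {u y : C}
    (hu : ‖u‖ = γ) (hy : ‖y‖ = γ) (h : ∀ a ∈ P.roots, ‖a‖ = γ → η ≤ ‖u - a‖) :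
    ‖P.eval y‖ * η ^ (P.roots.filter fun a => ‖a‖ = γ).card ≤
      ‖P.eval u‖ * γ ^ (P.roots.filter fun a => ‖a‖ = γ).card := by
  have hγ : 0 ≤ γ := hu ▸ norm_nonneg u
  have key : ∀ m : Multiset C, (∀ a ∈ m, ‖a‖ = γ → η ≤ ‖u - a‖) →
      (m.map fun a => ‖y - a‖).prod * η ^ (m.filter fun a => ‖a‖ = γ).card ≤
        (m.map fun a => ‖u - a‖).prod * γ ^ (m.filter fun a => ‖a‖ = γ).card := by
    intro m
    induction m using Multiset.induction_on with
    | empty => simp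
    | cons a m ih =>
      intro hm
      have ih := ih fun b hb => hm b (Multiset.mem_cons_of_mem hb)
      have hym : 0 ≤ (m.map fun a => ‖y - a‖).prod :=
        Multiset.prod_nonneg (by simp +contextual)
      have hum : 0 ≤ (m.map fun a => ‖u - a‖).prod :=
        Multiset.prod_nonneg (by simp +contextual)
      rw [Multiset.map_cons, Multiset.prod_cons, Multiset.map_cons, Multiset.prod_cons]
      by_cases ha : ‖a‖ = γ
      · rw [Multiset.filter_cons_of_pos (p := fun a => ‖a‖ = γ) _ ha, Multiset.card_cons,
          pow_succ, pow_succ]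
        have h₁ : η ≤ ‖u - a‖ := hm a (Multiset.mem_cons_self a m) ha
        have h₂ : ‖y - a‖ ≤ γ := (norm_sub_le_max_norm y a).trans (by simp [ha, hy])
        calc _ = (‖y - a‖ * η) * ((m.map fun a => ‖y - a‖).prod *
              η ^ (m.filter fun a => ‖a‖ = γ).card) := by ring
          _ ≤ (γ * ‖u - a‖) * ((m.map fun a => ‖u - a‖).prod *
              γ ^ (m.filter fun a => ‖a‖ = γ).card) := by gcongr
          _ = _ := by ring
      · rw [Multiset.filter_cons_of_neg (p := fun a => ‖a‖ = γ) _ ha]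
        have h₁ : ‖y - a‖ = ‖u - a‖ := by
          rcases lt_or_gt_of_ne ha with h | h
          · rw [norm_sub_eq_left_of_lt (hy.symm ▸ h), norm_sub_eq_left_of_lt (hu.symm ▸ h), hy, hu]
          · rw [norm_sub_eq_right_of_lt (hy.symm ▸ h), norm_sub_eq_right_of_lt (hu.symm ▸ h)]
        rw [h₁, mul_assoc, mul_assoc]
        gcongr
  have := mul_le_mul_of_nonneg_left (key P.roots h) (norm_nonneg P.leadingCoeff)
  rwa [← mul_assoc, ← mul_assoc, ← norm_eval_eq_prod_roots, ← norm_eval_eq_prod_roots] at this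

end Roots

/-! ### Zeros of limits of polynomials -/

section Limit

open Polynomial

/-- The zeros on a sphere of a limit `F` of polynomials `P k` are in bijection with the roots of
`P k` on that sphere, for large `k`, provided that the roots are uniformly separated and that
`‖P k‖` is uniformly bounded below away from the roots. -/
theorem exists_bijOn_roots_of_tendsto {C : Type*} [NormedField C] [IsUltrametricDist C]
    [CompleteSpace C] {P : ℕ → C[X]} {F : C → C} {γ δ A : ℝ} {ε : ℕ → ℝ} {k₀ Q : ℕ}
    (hδ : 0 < δ) (hA : 0 < A) (hε : Tendsto ε atTop (nhds 0))
    (hcauchy : ∀ k ≥ k₀, ∀ m ≥ k, ∀ u, ‖u‖ = γ → ‖(P m).eval u - (P k).eval u‖ ≤ ε k)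
    (hlim : ∀ u, ‖u‖ = γ → Tendsto (fun k => (P k).eval u) atTop (nhds (F u)))
    (hsep : ∀ k ≥ k₀, ∀ a b, ‖a‖ = γ → ‖b‖ = γ → (P k).eval a = 0 → (P k).eval b = 0 →
      ‖a - b‖ < δ → a = b)
    (hlow : ∀ k ≥ k₀, ∀ u, ‖u‖ = γ → ∀ η, 0 ≤ η →
      (∀ a, ‖a‖ = γ → (P k).eval a = 0 → η ≤ ‖u - a‖) → A * η ^ Q ≤ ‖(P k).eval u‖) :
    ∃ k ≥ k₀, ∃ f : C → C,
      Set.BijOn f {u | ‖u‖ = γ ∧ F u = 0} {a | ‖a‖ = γ ∧ (P k).eval a = 0} ∧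
      ∀ u, ‖u‖ = γ → F u = 0 → ‖f u - u‖ < δ := by
  have near : ∀ η, 0 < η → ∃ k₁ ≥ k₀, ∀ k ≥ k₁, ∀ m ≥ k₀, ∀ u, ‖u‖ = γ →
      ‖(P m).eval u‖ ≤ ε k → ∃ a, ‖a‖ = γ ∧ (P m).eval a = 0 ∧ ‖u - a‖ < η := by
    intro η hη
    have hpos : 0 < A * η ^ Q := by positivity
    obtain ⟨k₁, hk₁⟩ := eventually_atTop.1 (hε.eventually (gt_mem_nhds hpos))
    refine ⟨max k₀ k₁, le_max_left _ _, fun k hk m hm u hu hle => ?_⟩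
    by_contra! hcon
    exact absurd (hlow m hm u hu η hη.le hcon)
      (not_le.2 (hle.trans_lt (hk₁ k ((le_max_right _ _).trans hk))))
  have hF : ∀ k ≥ k₀, ∀ u, ‖u‖ = γ → ‖F u - (P k).eval u‖ ≤ ε k := fun k hk u hu =>
    le_of_tendsto ((hlim u hu).sub_const _).norm
      (eventually_atTop.2 ⟨k, fun m hm => hcauchy k hk m hm u hu⟩)
  have hzero : ∀ k ≥ k₀, ∀ u, ‖u‖ = γ → F u = 0 → ‖(P k).eval u‖ ≤ ε k := by
    intro k hk u hu h
    simpa [h] using hF k hk u hu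
  have hroot : ∀ k ≥ k₀, ∀ m ≥ k, ∀ a, ‖a‖ = γ → (P k).eval a = 0 → ‖(P m).eval a‖ ≤ ε k := by
    intro k hk m hm a ha h
    simpa [h] using hcauchy k hk m hm a ha
  obtain ⟨k, hk, hnear⟩ := near δ hδ
  have hf : ∀ u, ∃ a, ‖u‖ = γ → F u = 0 → ‖a‖ = γ ∧ (P k).eval a = 0 ∧ ‖u - a‖ < δ := by
    intro u
    by_cases hu : ‖u‖ = γ ∧ F u = 0
    · obtain ⟨a, ha⟩ := hnear k le_rfl k hk u hu.1 (hzero k hk u hu.1 hu.2)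
      exact ⟨a, fun _ _ => ha⟩
    · exact ⟨0, fun h₁ h₂ => (hu ⟨h₁, h₂⟩).elim⟩
  choose f hf using hf
  refine ⟨k, hk, f, ⟨fun u hu => ⟨(hf u hu.1 hu.2).1, (hf u hu.1 hu.2).2.1⟩, ?_, ?_⟩,
    fun u hu h => by rw [norm_sub_rev]; exact (hf u hu h).2.2⟩
  · rintro u ⟨hu, hFu⟩ v ⟨hv, hFv⟩ huv
    by_contra hne
    have hpos : 0 < ‖u - v‖ := norm_pos_iff.2 (sub_ne_zero.2 hne)
    have hlt : ‖u - v‖ < δ := by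
      refine norm_sub_lt_of_lt (hf u hu hFu).2.2 ?_
      rw [huv, norm_sub_rev]
      exact (hf v hv hFv).2.2
    obtain ⟨m, hm, hnear'⟩ := near _ hpos
    obtain ⟨a, ha, hPa, hua⟩ := hnear' m le_rfl m hm u hu (hzero m hm u hu hFu)
    obtain ⟨b, hb, hPb, hvb⟩ := hnear' m le_rfl m hm v hv (hzero m hm v hv hFv)
    have hab : a = b := by
      refine hsep m hm a b ha hb hPa hPb ?_
      refine norm_sub_lt_of_lt (y := u) ?_ (norm_sub_lt_of_lt hlt (hvb.trans hlt))
      rw [norm_sub_rev]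
      exact hua.trans hlt
    subst hab
    rw [norm_sub_rev] at hvb
    exact lt_irrefl _ (norm_sub_lt_of_lt hua hvb)
  · rintro a ⟨ha, hPa⟩
    have hg : ∀ m, ∃ b, k ≤ m → ‖b‖ = γ ∧ (P m).eval b = 0 ∧ ‖a - b‖ < δ := by
      intro m
      by_cases hm : k ≤ m
      · obtain ⟨b, hb⟩ := hnear k le_rfl m (hk.trans hm) a ha (hroot k hk m hm a ha hPa)
        exact ⟨b, fun _ => hb⟩
      · exact ⟨0, fun h => (hm h).elim⟩
    choose g hg using hg
    have hgc : CauchySeq g := by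
      refine Metric.cauchySeq_iff'.2 fun η hη => ?_
      obtain ⟨M, hM, hnear'⟩ := near (min η δ) (lt_min hη hδ)
      refine ⟨max M k, fun m hm => ?_⟩
      have hMk : k ≤ max M k := le_max_right _ _
      have hkm : k ≤ m := hMk.trans hm
      obtain ⟨h₁, h₂, h₃⟩ := hg _ hMk
      obtain ⟨b, hb, hPb, hlt⟩ := hnear' (max M k) (le_max_left _ _) m (hk.trans hkm)
        (g (max M k)) h₁ (hroot _ (hk.trans hMk) m hm _ h₁ h₂)
      have hbm : b = g m := by
        refine hsep m (hk.trans hkm) b (g m) hb (hg m hkm).1 hPb (hg m hkm).2.1 ?_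
        refine norm_sub_lt_of_lt (y := g (max M k)) ?_
          (norm_sub_lt_of_lt (y := a) ?_ (hg m hkm).2.2)
        · rw [norm_sub_rev]
          exact hlt.trans_le (min_le_right _ _)
        · rwa [norm_sub_rev]
      rw [dist_comm, dist_eq_norm, ← hbm]
      exact hlt.trans_le (min_le_left _ _)
    obtain ⟨z, hz⟩ := cauchySeq_tendsto_of_complete hgc
    have hzγ : ‖z‖ = γ := tendsto_nhds_unique hz.norm
      (tendsto_const_nhds.congr' (eventually_atTop.2 ⟨k, fun m hm => (hg m hm).1.symm⟩))
    have hza : ‖z - a‖ < δ := by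
      obtain ⟨M, hM⟩ := Metric.tendsto_atTop.1 hz δ hδ
      have h₁ := hM (max M k) (le_max_left _ _)
      rw [dist_comm, dist_eq_norm] at h₁
      refine norm_sub_lt_of_lt h₁ ?_
      rw [norm_sub_rev]
      exact (hg _ (le_max_right _ _)).2.2
    have hPz : ∀ n ≥ k, ‖(P n).eval z‖ ≤ ε n := by
      intro n hn
      refine le_of_tendsto ((((P n).continuous.tendsto z).comp hz).norm)
        (eventually_atTop.2 ⟨n, fun m hm => ?_⟩)
      have h := hcauchy n (hk.trans hn) m hm (g m) (hg m (hn.trans hm)).1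
      rwa [(hg m (hn.trans hm)).2.1, zero_sub, norm_neg] at h
    have hFz : F z = 0 := by
      have h : Tendsto (fun n => (P n).eval z) atTop (nhds 0) :=
        squeeze_zero_norm' (eventually_atTop.2 ⟨k, hPz⟩) hε
      exact tendsto_nhds_unique (hlim z hzγ) h
    refine ⟨z, ⟨hzγ, hFz⟩, ?_⟩
    obtain ⟨h₁, h₂, h₃⟩ := hf z hzγ hFz
    refine hsep k hk _ _ h₁ ha h₂ hPa (norm_sub_lt_of_lt (y := z) ?_ hza)
    rwa [norm_sub_rev]

end Limit

/-! ### Enumerations and unimodal sequences -/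

/-- A finite set can be enumerated in increasing order of a real-valued function. -/
theorem Finset.exists_enumeration_monotone {α : Type*} [DecidableEq α] [Nonempty α] (d : α → ℝ)
    (S : Finset α) : ∃ v : ℕ → α, Set.InjOn v (Set.Icc 1 S.card) ∧ v '' Set.Icc 1 S.card = S ∧
      MonotoneOn (d ∘ v) (Set.Icc 1 S.card) := by
  obtain ⟨n, hn⟩ : ∃ n, S.card = n := ⟨_, rfl⟩
  induction n generalizing S with
  | zero =>
    rw [hn]
    refine ⟨fun _ => Classical.arbitrary α, by simp, ?_, fun _ _ _ _ _ => le_rfl⟩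
    simp [Finset.card_eq_zero.1 hn]
  | succ n ih =>
    obtain ⟨x, hx, hmax⟩ := S.exists_max_image d (Finset.card_pos.1 (by omega))
    have hcard : (S.erase x).card = n := by rw [Finset.card_erase_of_mem hx]; omega
    obtain ⟨v, hinj, himg, hmono⟩ := ih (S.erase x) hcard
    rw [hcard] at hinj himg hmono
    rw [hn]
    have hv : ∀ i ∈ Set.Icc 1 n, v i ∈ S.erase x := fun i hi => by
      rw [← Finset.mem_coe, ← himg]
      exact Set.mem_image_of_mem v hi
    have hold : ∀ i ∈ Set.Icc 1 n, Function.update v (n + 1) x i = v i := fun i hi =>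
      Function.update_of_ne (by have := hi.2; omega) _ _
    have hnew : Function.update v (n + 1) x (n + 1) = x := Function.update_self _ _ _
    have hIcc : Set.Icc 1 (n + 1) = insert (n + 1) (Set.Icc 1 n) := by ext; simp; omega
    refine ⟨Function.update v (n + 1) x, ?_, ?_, ?_⟩
    · rw [hIcc, Set.injOn_insert (by simp), hnew, Set.image_congr hold, himg]
      exact ⟨hinj.congr fun i hi => (hold i hi).symm, by simp⟩
    · rw [hIcc, Set.image_insert_eq, hnew, Set.image_congr hold, himg, ← Finset.coe_insert,
        Finset.insert_erase hx]
    · intro i hi j hj hij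
      rw [hIcc] at hi hj
      simp only [Function.comp]
      rcases hj with rfl | hj
      · rw [hnew]
        rcases hi with rfl | hi
        · rw [hnew]
        · rw [hold i hi]
          exact hmax _ (Finset.mem_of_mem_erase (hv i hi))
      · have hi' : i ∈ Set.Icc 1 n := by
          rcases hi with rfl | hi
          · have := hj.2; omega
          · exact hi
        rw [hold i hi', hold j hj]
        exact hmono hi' hj hij

/-- In a monotone enumeration, an initial segment is cut out by a bound on the function. -/
theorem enumeration_le_iff {α : Type*} [DecidableEq α] {d : α → ℝ} {S : Finset α}
    {v : ℕ → α} {n m : ℕ} {r : ℝ}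
    (hinj : Set.InjOn v (Set.Icc 1 n)) (himg : v '' Set.Icc 1 n = S)
    (hmono : MonotoneOn (d ∘ v) (Set.Icc 1 n)) (hcard : (S.filter fun x => d x ≤ r).card = m)
    {i : ℕ} (h1 : 1 ≤ i) (hn : i ≤ n) : d (v i) ≤ r ↔ i ≤ m := by
  have hmem : ∀ k ∈ Set.Icc 1 n, v k ∈ S := fun k hk => by
    rw [← Finset.mem_coe, ← himg]
    exact Set.mem_image_of_mem v hk
  constructor
  · intro h
    have hsub : (Finset.Icc 1 i).image v ⊆ S.filter fun x => d x ≤ r := by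
      intro x hx
      obtain ⟨k, hk, rfl⟩ := Finset.mem_image.1 hx
      obtain ⟨hk1, hki⟩ := Finset.mem_Icc.1 hk
      exact Finset.mem_filter.2 ⟨hmem k ⟨hk1, hki.trans hn⟩,
        (hmono ⟨hk1, hki.trans hn⟩ ⟨h1, hn⟩ hki).trans h⟩
    have h' := Finset.card_le_card hsub
    rw [hcard, Finset.card_image_of_injOn] at h'
    · simpa using h'
    · intro k hk l hl
      simp only [Finset.coe_Icc, Set.mem_Icc] at hk hl
      exact hinj ⟨hk.1, hk.2.trans hn⟩ ⟨hl.1, hl.2.trans hn⟩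
  · intro h
    by_contra! hlt
    have hsub : (S.filter fun x => d x ≤ r) ⊆ (Finset.Icc 1 (i - 1)).image v := by
      intro x hx
      obtain ⟨hxS, hxr⟩ := Finset.mem_filter.1 hx
      rw [← Finset.mem_coe, ← himg] at hxS
      obtain ⟨k, hk, rfl⟩ := hxS
      refine Finset.mem_image_of_mem v (Finset.mem_Icc.2 ⟨hk.1, ?_⟩)
      by_contra! hki
      exact absurd (hmono ⟨h1, hn⟩ hk (by omega)) (not_le.2 (hxr.trans_lt hlt))
    have h' := (Finset.card_le_card hsub).trans Finset.card_image_le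
    rw [hcard, Nat.card_Icc] at h'
    omega

theorem lt_of_unimodal {f : ℕ → ℝ} {j n : ℕ} (hup : ∀ i < j, f i < f (i + 1))
    (hdown : ∀ i, j ≤ i → i < n → f (i + 1) < f i) {i : ℕ} (hi : i ≤ n) (hij : i ≠ j) :
    f i < f j := by
  rcases lt_or_gt_of_ne hij with h | h
  · clear hdown hij
    induction j, h using Nat.le_induction with
    | base => exact hup i (by omega)
    | succ j hj ih => exact (ih fun k hk => hup k (by omega)).trans (hup j (by omega))
  · clear hup hij
    induction i, h using Nat.le_induction with
    | base => exact hdown j le_rfl (by omega)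
    | succ i hj ih => exact (hdown i (by omega) (by omega)).trans (ih (by omega))

/-! ### The polynomials `m_k` and their Wronskians -/

section GrossHopkins

open Polynomial

/-- The exponent `1 + q + ⋯ + q^(k-1)`. -/
def ghExp (q k : ℕ) : ℕ := ∑ i ∈ Finset.range k, q ^ i

theorem ghExp_zero (q : ℕ) : ghExp q 0 = 0 := rfl

theorem ghExp_succ (q k : ℕ) : ghExp q (k + 1) = ghExp q k + q ^ k := Finset.sum_range_succ _ _

theorem ghExp_mono (q : ℕ) : Monotone (ghExp q) :=
  monotone_nat_of_le_succ fun k => by rw [ghExp_succ]; exact Nat.le_add_right _ _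

theorem ghExp_mul_pred_add_one {q : ℕ} (hq : 1 ≤ q) (k : ℕ) : ghExp q k * (q - 1) + 1 = q ^ k := by
  obtain ⟨d, rfl⟩ := Nat.exists_eq_add_of_le' hq
  induction k with
  | zero => simp [ghExp_zero]
  | succ k ih =>
    rw [ghExp_succ, add_mul, pow_succ]
    simp only [Nat.add_sub_cancel] at ih ⊢
    nlinarith

section Algebra

variable {C : Type*} [Field C]

theorem ghm_add_two (π : C) (q k : ℕ) (u : C) :
    ghm π q (k + 2) u = u ^ q ^ (k + 1) / π * ghm π q (k + 1) u + 1 / π * ghm π q k u := by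
  induction k using Nat.twoStepInduction generalizing u with
  | zero => simp [ghm]; ring
  | one => simp [ghm]; ring
  | more k ih₁ ih₂ =>
    rw [ghm, ih₂ (u ^ q), ih₁ (u ^ q ^ 2), show ghm π q (k + 2 + 1) u =
      u / π * ghm π q (k + 2) (u ^ q) + 1 / π * ghm π q (k + 1) (u ^ q ^ 2) from rfl,
      show ghm π q (k + 2) u =
        u / π * ghm π q (k + 1) (u ^ q) + 1 / π * ghm π q k (u ^ q ^ 2) from rfl]
    ring

/-- The polynomial `m_k`. -/
noncomputable def ghmPoly (π : C) (q : ℕ) : ℕ → C[X]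
  | 0 => 1
  | 1 => Polynomial.C (1 / π) * X
  | (k + 2) => Polynomial.C (1 / π) * X ^ q ^ (k + 1) * ghmPoly π q (k + 1) +
      Polynomial.C (1 / π) * ghmPoly π q k

theorem eval_ghmPoly (π : C) (q k : ℕ) (u : C) : (ghmPoly π q k).eval u = ghm π q k u := by
  induction k using Nat.twoStepInduction with
  | zero => simp [ghmPoly, ghm]
  | one => simp [ghmPoly, ghm]; ring
  | more k ih₁ ih₂ =>
    rw [ghm_add_two, ghmPoly]
    simp only [eval_add, eval_mul, eval_C, eval_pow, eval_X, ih₁, ih₂]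
    ring

/-- The general term of the expansion of the Wronskian of `m_{n+1}` and `m_n`. -/
noncomputable def ghTerm (π : C) (q : ℕ) (w u : C) (i : ℕ) : C :=
  (-π) ^ i * (u ^ q ^ i - w ^ q ^ i) * ghm π q i u * ghm π q i w

/-- The normalized Wronskian of `m_{n+1}` and `m_n` at `w` and `X`. -/
noncomputable def ghWronskian (π : C) (q n : ℕ) (w : C) : C[X] :=
  Polynomial.C ((-π) ^ n * π) *
    (Polynomial.C (ghm π q n w) * ghmPoly π q (n + 1) -
      Polynomial.C (ghm π q (n + 1) w) * ghmPoly π q n)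

theorem eval_ghWronskian (π : C) (q n : ℕ) (w u : C) :
    (ghWronskian π q n w).eval u = (-π) ^ n * π *
      (ghm π q n w * ghm π q (n + 1) u - ghm π q (n + 1) w * ghm π q n u) := by
  simp [ghWronskian, eval_ghmPoly]

theorem eval_ghWronskian_eq_sum {π : C} (hπ : π ≠ 0) (q n : ℕ) (w u : C) :
    (ghWronskian π q n w).eval u = ∑ i ∈ Finset.range (n + 1), ghTerm π q w u i := by
  induction n with
  | zero =>
    rw [eval_ghWronskian]
    simp [ghTerm, ghm]
    field_simp
  | succ n ih =>
    rw [Finset.sum_range_succ, ← ih, eval_ghWronskian, eval_ghWronskian, ghTerm,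
      ghm_add_two π q n u, ghm_add_two π q n w]
    field_simp
    ring

/-- Wronskians at points of the same fiber are proportional. -/
theorem exists_ghWronskian_eq_C_mul {π : C} {q n : ℕ} {w a : C} (hπ : π ≠ 0)
    (hw : ghWronskian π q n w ≠ 0) (ha : ghWronskian π q n a ≠ 0)
    (hroot : (ghWronskian π q n w).eval a = 0) :
    ∃ c ≠ 0, ghWronskian π q n w = Polynomial.C c * ghWronskian π q n a := by
  have hprop : ghm π q n w * ghm π q (n + 1) a = ghm π q (n + 1) w * ghm π q n a := by
    rw [eval_ghWronskian, mul_eq_zero, sub_eq_zero] at hroot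
    exact hroot.resolve_left (mul_ne_zero (pow_ne_zero _ (neg_ne_zero.2 hπ)) hπ)
  obtain ⟨c, h₁, h₂⟩ : ∃ c, ghm π q n w = c * ghm π q n a ∧
      ghm π q (n + 1) w = c * ghm π q (n + 1) a := by
    by_cases h : ghm π q n a = 0
    · have h' : ghm π q (n + 1) a ≠ 0 := fun h' => ha (by simp [ghWronskian, h, h'])
      refine ⟨ghm π q (n + 1) w / ghm π q (n + 1) a, ?_, by field_simp⟩
      field_simp
      exact hprop
    · refine ⟨ghm π q n w / ghm π q n a, by field_simp, ?_⟩
      field_simp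
      exact hprop.symm
  have heq : ghWronskian π q n w = Polynomial.C c * ghWronskian π q n a := by
    simp only [ghWronskian, h₁, h₂, Polynomial.C_mul]
    ring
  exact ⟨c, fun hc => hw (by rw [heq, hc, Polynomial.C_0, zero_mul]), heq⟩

end Algebra

/-! ### Norms of the values of `m_k` -/

section Norm

variable {C : Type*} [NormedField C] [IsUltrametricDist C]

theorem norm_ghm_mul_pow_eq {π : C} {q s : ℕ} (hπ : 0 < ‖π‖) {u : C} {t : ℝ} (ht : 0 < t)
    (hu : ‖u‖ = t) (hs : ∀ i < s, ‖π‖ < t ^ (q ^ i + q ^ (i + 1))) {k : ℕ} (hk : k ≤ s + 1) :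
    ‖ghm π q k u‖ * ‖π‖ ^ k = t ^ ghExp q k := by
  induction k using Nat.twoStepInduction with
  | zero => simp [ghm, ghExp_zero]
  | one => simp [ghm, ghExp, hu, hπ.ne']
  | more k ih₁ ih₂ =>
    have ih₁ := ih₁ (by omega)
    have ih₂ := ih₂ (by omega)
    have hx : ‖u ^ q ^ (k + 1) / π * ghm π q (k + 1) u‖ * ‖π‖ ^ (k + 2) = t ^ ghExp q (k + 2) := by
      rw [ghExp_succ, pow_add t, ← ih₂, norm_mul, norm_div, norm_pow, hu, pow_succ ‖π‖ (k + 1)]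
      field_simp
    have hy : ‖1 / π * ghm π q k u‖ * ‖π‖ ^ (k + 2) = t ^ ghExp q k * ‖π‖ := by
      rw [← ih₁, norm_mul, norm_div, norm_one, pow_add]
      field_simp
    rw [ghm_add_two, norm_add_eq_left_of_lt, hx]
    refine lt_of_mul_lt_mul_right ?_ (pow_nonneg hπ.le (k + 2))
    rw [hx, hy, ghExp_succ, ghExp_succ, add_assoc, pow_add]
    exact mul_lt_mul_of_pos_left (hs k (by omega)) (pow_pos ht _)

theorem norm_ghm_mul_pow_le {π : C} {q s : ℕ} (hq : 2 ≤ q) (hπ : 0 < ‖π‖) {u : C} {t Θ : ℝ}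
    (ht : 0 < t) (ht1 : t ≤ 1) (hu : ‖u‖ = t) (hs : ∀ i < s, ‖π‖ < t ^ (q ^ i + q ^ (i + 1)))
    (hΘ : 1 ≤ Θ) (hΘ₁ : t ^ (q ^ s + q ^ (s + 1)) ≤ ‖π‖ * Θ)
    (hΘ₂ : Θ * t ^ q ^ (s + 2) ≤ t ^ q ^ s) (l : ℕ) :
    ‖ghm π q (s + 2 * l) u‖ * ‖π‖ ^ (s + l) ≤ Θ * t ^ ghExp q s ∧
      ‖ghm π q (s + 1 + 2 * l) u‖ * ‖π‖ ^ (s + 1 + l) ≤ t ^ ghExp q (s + 1) := by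
  have step : ∀ k, ‖ghm π q (k + 2) u‖ ≤ max (t ^ q ^ (k + 1) / ‖π‖ * ‖ghm π q (k + 1) u‖)
      (1 / ‖π‖ * ‖ghm π q k u‖) := by
    intro k
    rw [ghm_add_two]
    refine (IsUltrametricDist.norm_add_le_max _ _).trans_eq ?_
    rw [norm_mul, norm_mul, norm_div, norm_div, norm_pow, norm_one, hu]
  have hpow : ∀ {m n : ℕ}, m ≤ n → t ^ q ^ n ≤ t ^ q ^ m := fun h =>
    pow_le_pow_of_le_one ht.le ht1 (Nat.pow_le_pow_right (by omega) h)
  induction l with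
  | zero =>
    refine ⟨?_, (norm_ghm_mul_pow_eq hπ ht hu hs le_rfl).le⟩
    rw [mul_zero, add_zero, norm_ghm_mul_pow_eq hπ ht hu hs (by omega)]
    exact le_mul_of_one_le_left (by positivity) hΘ
  | succ l ih =>
    obtain ⟨ih₁, ih₂⟩ := ih
    have hA : ‖ghm π q (s + 2 * (l + 1)) u‖ * ‖π‖ ^ (s + (l + 1)) ≤ Θ * t ^ ghExp q s := by
      rw [show s + 2 * (l + 1) = s + 2 * l + 2 by ring]
      refine (mul_le_mul_of_nonneg_right (step _) (by positivity)).trans ?_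
      rw [max_mul_of_nonneg _ _ (by positivity)]
      refine max_le ?_ ?_
      · rw [show s + 2 * l + 1 = s + 1 + 2 * l by ring]
        calc _ = t ^ q ^ (s + 1 + 2 * l) / ‖π‖ *
              (‖ghm π q (s + 1 + 2 * l) u‖ * ‖π‖ ^ (s + 1 + l)) := by ring
          _ ≤ t ^ q ^ (s + 1) / ‖π‖ * t ^ ghExp q (s + 1) := by
              gcongr ?_ / _ * ?_
              exact hpow (by omega)
          _ = t ^ (q ^ s + q ^ (s + 1)) / ‖π‖ * t ^ ghExp q s := by
              rw [ghExp_succ, pow_add, pow_add]; ring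
          _ ≤ Θ * t ^ ghExp q s := by
              gcongr
              rwa [div_le_iff₀' hπ]
      · calc _ = ‖ghm π q (s + 2 * l) u‖ * ‖π‖ ^ (s + l) := by
              rw [← add_assoc, pow_succ]; field_simp
          _ ≤ _ := ih₁
    refine ⟨hA, ?_⟩
    rw [show s + 1 + 2 * (l + 1) = s + 1 + 2 * l + 2 by ring]
    refine (mul_le_mul_of_nonneg_right (step _) (by positivity)).trans ?_
    rw [max_mul_of_nonneg _ _ (by positivity)]
    refine max_le ?_ ?_
    · rw [show s + 1 + 2 * l + 1 = s + 2 * (l + 1) by ring]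
      calc _ = t ^ q ^ (s + 2 * (l + 1)) *
            (‖ghm π q (s + 2 * (l + 1)) u‖ * ‖π‖ ^ (s + (l + 1))) := by
              rw [show s + 1 + (l + 1) = s + (l + 1) + 1 by ring, pow_succ]; field_simp
        _ ≤ t ^ q ^ (s + 2) * (Θ * t ^ ghExp q s) := by
              gcongr ?_ * ?_
              exact hpow (by omega)
        _ = (Θ * t ^ q ^ (s + 2)) * t ^ ghExp q s := by ring
        _ ≤ t ^ q ^ s * t ^ ghExp q s := by gcongr
        _ = _ := by rw [ghExp_succ, pow_add]; ring
    · calc _ = ‖ghm π q (s + 1 + 2 * l) u‖ * ‖π‖ ^ (s + 1 + l) := by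
            rw [← add_assoc, pow_succ]; field_simp
        _ ≤ _ := ih₂

end Norm

variable {C : Type*} [NormedField C]


/-! ### Norms of the Wronskians -/

/-- The standing hypotheses: `g` is the critical radius of index `s`, and raising to the power `q`
is additive up to a multiple of `π`. -/
structure IsGHCritical (π : C) (q s : ℕ) (g : ℝ) : Prop where
  two_le : 2 ≤ q
  pos : 0 < g
  lt_one : g < 1
  norm_eq : ‖π‖ = g ^ (q ^ s + q ^ (s + 1))
  norm_add_pow_sub_le : ∀ (x y : C) (M : ℝ), ‖x‖ ≤ M → ‖y‖ ≤ M →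
    ‖(x + y) ^ q - x ^ q - y ^ q‖ ≤ ‖π‖ * (‖y‖ * M ^ (q - 1))

namespace IsGHCritical

variable {π : C} {q s : ℕ} {g : ℝ}

theorem norm_pos (H : IsGHCritical π q s g) : 0 < ‖π‖ := H.norm_eq ▸ pow_pos H.pos _

theorem ne_zero (H : IsGHCritical π q s g) : π ≠ 0 := norm_pos_iff.1 H.norm_pos

theorem pow_add_pow_lt (H : IsGHCritical π q s g) {i j : ℕ} (h : i < j) :
    q ^ i + q ^ (i + 1) < q ^ j + q ^ (j + 1) :=
  add_lt_add (Nat.pow_lt_pow_right H.two_le h) (Nat.pow_lt_pow_right H.two_le (by omega))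

theorem norm_lt_of_lt (H : IsGHCritical π q s g) (i : ℕ) (hi : i < s) :
    ‖π‖ < g ^ (q ^ i + q ^ (i + 1)) := by
  rw [H.norm_eq]
  exact pow_lt_pow_right_of_lt_one₀ H.pos H.lt_one (H.pow_add_pow_lt hi)

theorem norm_lt_one (H : IsGHCritical π q s g) : ‖π‖ < 1 := by
  rw [H.norm_eq]
  have : 0 < q ^ s := pow_pos (by have := H.two_le; omega) s
  exact pow_lt_one₀ H.pos.le H.lt_one (by omega)

theorem pow_pow_lt (H : IsGHCritical π q s g) {t : ℝ} (h0 : 0 < t) (h1 : t < 1) {i j : ℕ}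
    (h : i < j) : t ^ q ^ j < t ^ q ^ i :=
  pow_lt_pow_right_of_lt_one₀ h0 h1 (Nat.pow_lt_pow_right H.two_le h)

theorem norm_ghTerm (w u : C) (i : ℕ) : ‖ghTerm π q w u i‖ =
    ‖π‖ ^ i * ‖u ^ q ^ i - w ^ q ^ i‖ * ‖ghm π q i u‖ * ‖ghm π q i w‖ := by
  rw [ghTerm, norm_mul, norm_mul, norm_mul, norm_pow, norm_neg]

/-- Comparison of consecutive terms through their normalized values. -/
theorem ghTerm_lt_succ_iff (H : IsGHCritical π q s g) {τ σ κ : ℝ} {i : ℕ} {a b : ℝ}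
    (ha : τ * ‖π‖ ^ i = a) (hb : σ * ‖π‖ ^ (i + 1) = b) (hκ : b = a * κ) (ha0 : 0 < a) :
    (τ < σ ↔ ‖π‖ < κ) ∧ (σ < τ ↔ κ < ‖π‖) := by
  have hπ := H.norm_pos
  have hτ : 0 < τ := pos_of_mul_pos_left (ha ▸ ha0) (by positivity)
  have hσ : σ * ‖π‖ = τ * κ := by
    rw [hκ, ← ha, pow_succ] at hb
    have : ‖π‖ ^ i * (σ * ‖π‖) = ‖π‖ ^ i * (τ * κ) := by linarith
    exact mul_left_cancel₀ (by positivity) this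
  constructor <;> rw [← mul_lt_mul_iff_left₀ hπ, hσ, mul_lt_mul_iff_right₀ hτ]

variable [IsUltrametricDist C]

theorem norm_ghm_le (H : IsGHCritical π q s g) {w : C} (hw : ‖w‖ = g) (l : ℕ) :
    ‖ghm π q (s + 2 * l) w‖ * ‖π‖ ^ (s + l) ≤ 1 * g ^ ghExp q s ∧
      ‖ghm π q (s + 1 + 2 * l) w‖ * ‖π‖ ^ (s + 1 + l) ≤ g ^ ghExp q (s + 1) := by
  refine norm_ghm_mul_pow_le H.two_le H.norm_pos H.pos H.lt_one.le hw H.norm_lt_of_lt le_rfl ?_ ?_ l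
  · rw [mul_one, H.norm_eq]
  · rw [one_mul]
    exact (H.pow_pow_lt H.pos H.lt_one (by omega)).le

theorem norm_ghTerm_mul_pow_eq (H : IsGHCritical π q s g) {w u : C} {t : ℝ} (hw : ‖w‖ = g)
    (ht : 0 < t) (hu : ‖u‖ = t) (hs : ∀ i < s, ‖π‖ < t ^ (q ^ i + q ^ (i + 1))) {i : ℕ}
    (hi : i ≤ s + 1) :
    ‖ghTerm π q w u i‖ * ‖π‖ ^ i = (t * g) ^ ghExp q i * ‖u ^ q ^ i - w ^ q ^ i‖ := by
  rw [norm_ghTerm, mul_pow, ← norm_ghm_mul_pow_eq H.norm_pos ht hu hs hi,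
    ← norm_ghm_mul_pow_eq H.norm_pos H.pos hw H.norm_lt_of_lt hi]
  ring

theorem norm_ghTerm_mul_pow_le (H : IsGHCritical π q s g) {w u : C} {t Θ : ℝ} (hw : ‖w‖ = g)
    (ht : 0 < t) (ht1 : t ≤ 1) (hu : ‖u‖ = t) (hs : ∀ i < s, ‖π‖ < t ^ (q ^ i + q ^ (i + 1)))
    (hΘ : 1 ≤ Θ) (hΘ₁ : t ^ (q ^ s + q ^ (s + 1)) ≤ ‖π‖ * Θ)
    (hΘ₂ : Θ * t ^ q ^ (s + 2) ≤ t ^ q ^ s) (l : ℕ) :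
    ‖ghTerm π q w u (s + 2 * l)‖ * ‖π‖ ^ s ≤
        Θ * (t * g) ^ ghExp q s * ‖u ^ q ^ (s + 2 * l) - w ^ q ^ (s + 2 * l)‖ ∧
      ‖ghTerm π q w u (s + 1 + 2 * l)‖ * ‖π‖ ^ (s + 1) ≤
        (t * g) ^ ghExp q (s + 1) * ‖u ^ q ^ (s + 1 + 2 * l) - w ^ q ^ (s + 1 + 2 * l)‖ := by
  obtain ⟨h₁, h₂⟩ := norm_ghm_mul_pow_le H.two_le H.norm_pos ht ht1 hu hs hΘ hΘ₁ hΘ₂ l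
  obtain ⟨h₃, h₄⟩ := H.norm_ghm_le hw l
  have hg := H.pos
  constructor
  · rw [norm_ghTerm]
    calc _ = ‖u ^ q ^ (s + 2 * l) - w ^ q ^ (s + 2 * l)‖ *
          ((‖ghm π q (s + 2 * l) u‖ * ‖π‖ ^ (s + l)) *
            (‖ghm π q (s + 2 * l) w‖ * ‖π‖ ^ (s + l))) := by ring
      _ ≤ ‖u ^ q ^ (s + 2 * l) - w ^ q ^ (s + 2 * l)‖ *
          ((Θ * t ^ ghExp q s) * (1 * g ^ ghExp q s)) := by gcongr
      _ = _ := by rw [mul_pow]; ring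
  · rw [norm_ghTerm]
    calc _ = ‖u ^ q ^ (s + 1 + 2 * l) - w ^ q ^ (s + 1 + 2 * l)‖ *
          ((‖ghm π q (s + 1 + 2 * l) u‖ * ‖π‖ ^ (s + 1 + l)) *
            (‖ghm π q (s + 1 + 2 * l) w‖ * ‖π‖ ^ (s + 1 + l))) := by ring
      _ ≤ ‖u ^ q ^ (s + 1 + 2 * l) - w ^ q ^ (s + 1 + 2 * l)‖ *
          (t ^ ghExp q (s + 1) * g ^ ghExp q (s + 1)) := by gcongr
      _ = _ := by rw [mul_pow]; ring

theorem norm_eval_eq_of_dominant (H : IsGHCritical π q s g) {w u : C} {n j : ℕ} (hn : s + 1 ≤ n)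
    (hj : j ≤ s + 1) (h : ∀ i ≤ s + 1, i ≠ j → ‖ghTerm π q w u i‖ < ‖ghTerm π q w u j‖)
    (h₁ : ∀ l ≥ 1, ‖ghTerm π q w u (s + 2 * l)‖ < ‖ghTerm π q w u j‖)
    (h₂ : ∀ l ≥ 1, ‖ghTerm π q w u (s + 1 + 2 * l)‖ < ‖ghTerm π q w u j‖) :
    ‖(ghWronskian π q n w).eval u‖ = ‖ghTerm π q w u j‖ := by
  rw [eval_ghWronskian_eq_sum H.ne_zero]
  refine norm_sum_range_eq_of_dominant (by omega) fun i _ hij => ?_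
  by_cases his : i ≤ s + 1
  · exact h i his hij
  · rcases Nat.even_or_odd' (i - s) with ⟨l, hl | hl⟩
    · rw [show i = s + 2 * l by omega]
      exact h₁ l (by omega)
    · rw [show i = s + 1 + 2 * l by omega]
      exact h₂ l (by omega)

/-- Inside the critical sphere, the Wronskian grows like `t ^ (1 + ⋯ + q^(s-1))`. -/
theorem norm_eval_of_lt (H : IsGHCritical π q s g) {w u : C} (hw : ‖w‖ = g) (hu₁ : g ^ 2 < ‖u‖)
    (hu₂ : ‖u‖ < g) {n : ℕ} (hn : s + 1 ≤ n) :
    ‖(ghWronskian π q n w).eval u‖ =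
      g ^ ghExp q s * g ^ q ^ s / ‖π‖ ^ s * ‖u‖ ^ ghExp q s := by
  have hg := H.pos
  have hπ := H.norm_pos
  have hq := H.two_le
  obtain ⟨t, ht⟩ : ∃ t, ‖u‖ = t := ⟨_, rfl⟩
  rw [ht] at hu₁ hu₂ ⊢
  have ht0 : 0 < t := (by positivity : 0 < g ^ 2).trans hu₁
  have ht1 : t < 1 := hu₂.trans H.lt_one
  have hs : ∀ i < s, ‖π‖ < t ^ (q ^ i + q ^ (i + 1)) := by
    intro i hi
    have hle : 2 * (q ^ i + q ^ (i + 1)) ≤ q ^ s + q ^ (s + 1) := by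
      have h₁ : q ^ (i + 1) ≤ q ^ s := Nat.pow_le_pow_right (by omega) hi
      have h₂ : q ^ (i + 1) = q ^ i * q := pow_succ _ _
      have h₃ : q ^ (s + 1) = q ^ s * q := pow_succ _ _
      nlinarith [Nat.zero_le (q ^ i), Nat.zero_le (q ^ s)]
    calc ‖π‖ ≤ (g ^ 2) ^ (q ^ i + q ^ (i + 1)) := by
          rw [H.norm_eq, ← pow_mul]
          exact pow_le_pow_of_le_one hg.le H.lt_one.le hle
      _ < _ := pow_lt_pow_left₀ hu₁ (by positivity) (by positivity)
  have hD : ∀ i, ‖u ^ q ^ i - w ^ q ^ i‖ = g ^ q ^ i := by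
    intro i
    rw [norm_sub_eq_right_of_lt, norm_pow, hw]
    rw [norm_pow, norm_pow, hw, ht]
    exact pow_lt_pow_left₀ hu₂ ht0.le (by positivity)
  have hT : ∀ i ≤ s + 1, ‖ghTerm π q w u i‖ * ‖π‖ ^ i = (t * g) ^ ghExp q i * g ^ q ^ i := by
    intro i hi
    rw [H.norm_ghTerm_mul_pow_eq hw ht0 ht hs hi, hD]
  have hB := H.norm_ghTerm_mul_pow_le hw ht0 ht1.le ht hs le_rfl
    (by rw [mul_one, H.norm_eq]; exact pow_le_pow_left₀ ht0.le hu₂.le _)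
    (by rw [one_mul]; exact (H.pow_pow_lt ht0 ht1 (by omega)).le)
  simp only [hD, one_mul] at hB
  have hcmp : ∀ i ≤ s, _ := fun i hi => H.ghTerm_lt_succ_iff (κ := t ^ q ^ i * g ^ q ^ (i + 1))
    (hT i (by omega)) (hT (i + 1) (by omega))
    (by rw [ghExp_succ, pow_add (t * g), mul_pow _ _ (q ^ i)]; ring) (by positivity)
  have hdom : ∀ i ≤ s + 1, i ≠ s → ‖ghTerm π q w u i‖ < ‖ghTerm π q w u s‖ := by
    intro i hi his
    refine lt_of_unimodal (f := fun i => ‖ghTerm π q w u i‖) (n := s + 1) ?_ ?_ hi his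
    · intro k hk
      refine (hcmp k hk.le).1.2 ((hs k hk).trans ?_)
      rw [pow_add t]
      exact mul_lt_mul_of_pos_left (pow_lt_pow_left₀ hu₂ ht0.le (by positivity)) (by positivity)
    · intro k hk₁ hk₂
      obtain rfl : k = s := by omega
      refine (hcmp k le_rfl).2.2 ?_
      rw [H.norm_eq, pow_add g]
      exact mul_lt_mul_of_pos_right (pow_lt_pow_left₀ hu₂ ht0.le (by positivity)) (by positivity)
  rw [H.norm_eval_eq_of_dominant hn (Nat.le_succ s) hdom]
  · have := hT s (Nat.le_succ s)
    rw [mul_pow] at this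
    field_simp
    linarith
  · intro l hl
    refine lt_of_mul_lt_mul_right ((hB l).1.trans_lt ?_) (pow_nonneg hπ.le s)
    rw [hT s (by omega)]
    exact mul_lt_mul_of_pos_left (H.pow_pow_lt hg H.lt_one (by omega)) (by positivity)
  · intro l hl
    refine lt_trans ?_ (hdom (s + 1) le_rfl (by omega))
    refine lt_of_mul_lt_mul_right ((hB l).2.trans_lt ?_) (pow_nonneg hπ.le (s + 1))
    rw [hT (s + 1) le_rfl]
    exact mul_lt_mul_of_pos_left (H.pow_pow_lt hg H.lt_one (by omega)) (by positivity)

/-- Outside the critical sphere, the Wronskian grows like `t ^ (1 + ⋯ + q^(s+1))`. -/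
theorem norm_eval_of_gt (H : IsGHCritical π q s g) {w u : C} (hw : ‖w‖ = g) (hu₁ : g < ‖u‖)
    (hu₂ : ‖u‖ < √g) {n : ℕ} (hn : s + 1 ≤ n) :
    ‖(ghWronskian π q n w).eval u‖ =
      g ^ ghExp q (s + 1) / ‖π‖ ^ (s + 1) * ‖u‖ ^ ghExp q (s + 2) := by
  have hg := H.pos
  have hπ := H.norm_pos
  have hq := H.two_le
  obtain ⟨t, ht⟩ : ∃ t, ‖u‖ = t := ⟨_, rfl⟩
  rw [ht] at hu₁ hu₂ ⊢
  have ht0 : 0 < t := hg.trans hu₁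
  have ht2 : t ^ 2 < g := (Real.lt_sqrt ht0.le).1 hu₂
  have ht1 : t < 1 := by
    have := H.lt_one
    nlinarith
  have htq : t ^ q < g := (pow_le_pow_of_le_one ht0.le ht1.le hq).trans_lt ht2
  have htpow : ∀ k, t ^ q ^ (k + 1) < g ^ q ^ k := by
    intro k
    rw [pow_succ', pow_mul]
    exact pow_lt_pow_left₀ htq (by positivity) (by positivity)
  have hs : ∀ i < s, ‖π‖ < t ^ (q ^ i + q ^ (i + 1)) := fun i hi =>
    (H.norm_lt_of_lt i hi).trans_le (pow_le_pow_left₀ hg.le hu₁.le _)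
  have hD : ∀ i, ‖u ^ q ^ i - w ^ q ^ i‖ = t ^ q ^ i := by
    intro i
    rw [norm_sub_eq_left_of_lt, norm_pow, ht]
    rw [norm_pow, norm_pow, hw, ht]
    exact pow_lt_pow_left₀ hu₁ hg.le (by positivity)
  have hT : ∀ i ≤ s + 1, ‖ghTerm π q w u i‖ * ‖π‖ ^ i = (t * g) ^ ghExp q i * t ^ q ^ i := by
    intro i hi
    rw [H.norm_ghTerm_mul_pow_eq hw ht0 ht hs hi, hD]
  have hB := H.norm_ghTerm_mul_pow_le (Θ := t ^ (q ^ s + q ^ (s + 1)) / ‖π‖) hw ht0 ht1.le ht hs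
    (by
      rw [one_le_div hπ, H.norm_eq]
      exact pow_le_pow_left₀ hg.le hu₁.le _)
    (by rw [mul_div_cancel₀ _ hπ.ne'])
    (by
      rw [div_mul_eq_mul_div, div_le_iff₀ hπ, H.norm_eq, pow_add t, pow_add g, mul_assoc]
      gcongr ?_ * ?_
      exact mul_le_mul (htpow s).le (htpow (s + 1)).le (by positivity) (by positivity))
  simp only [hD] at hB
  have hcmp : ∀ i ≤ s, _ := fun i hi => H.ghTerm_lt_succ_iff (κ := g ^ q ^ i * t ^ q ^ (i + 1))
    (hT i (by omega)) (hT (i + 1) (by omega))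
    (by rw [ghExp_succ, pow_add (t * g), mul_pow _ _ (q ^ i)]; ring) (by positivity)
  have hdom : ∀ i ≤ s + 1, i ≠ s + 1 → ‖ghTerm π q w u i‖ < ‖ghTerm π q w u (s + 1)‖ := by
    intro i hi his
    refine lt_of_unimodal (f := fun i => ‖ghTerm π q w u i‖) (n := s + 1) ?_
      (fun k hk₁ hk₂ => by omega) hi his
    intro k hk
    refine (hcmp k (by omega)).1.2 (lt_of_le_of_lt (b := g ^ (q ^ k + q ^ (k + 1))) ?_ ?_)
    · rw [H.norm_eq]
      refine pow_le_pow_of_le_one hg.le H.lt_one.le (add_le_add ?_ ?_) <;>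
        exact Nat.pow_le_pow_right (by omega) (by omega)
    · rw [pow_add g]
      exact mul_lt_mul_of_pos_left (pow_lt_pow_left₀ hu₁ hg.le (by positivity)) (by positivity)
  rw [H.norm_eval_eq_of_dominant hn le_rfl hdom]
  · have := hT (s + 1) le_rfl
    rw [mul_pow] at this
    rw [ghExp_succ q (s + 1), pow_add t]
    field_simp
    linarith
  · intro l hl
    refine lt_of_mul_lt_mul_right ((hB l).1.trans_lt ?_) (pow_nonneg hπ.le s)
    refine lt_of_mul_lt_mul_right (a := ‖π‖) ?_ hπ.le
    rw [mul_assoc ‖ghTerm π q w u (s + 1)‖, ← pow_succ, hT (s + 1) le_rfl, ghExp_succ,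
      pow_add (t * g), pow_add t, mul_pow _ _ (q ^ s)]
    calc _ = (t * g) ^ ghExp q s * t ^ q ^ s * t ^ q ^ (s + 1) * t ^ q ^ (s + 2 * l) := by
          field_simp
      _ < (t * g) ^ ghExp q s * t ^ q ^ s * t ^ q ^ (s + 1) * g ^ q ^ s := by
          refine mul_lt_mul_of_pos_left (lt_trans ?_ (htpow s)) (by positivity)
          exact H.pow_pow_lt ht0 ht1 (by omega)
      _ = _ := by ring
  · intro l hl
    refine lt_of_mul_lt_mul_right ((hB l).2.trans_lt ?_) (pow_nonneg hπ.le (s + 1))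
    rw [hT (s + 1) le_rfl]
    exact mul_lt_mul_of_pos_left (H.pow_pow_lt ht0 ht1 (by omega)) (by positivity)

/-! ### Growth of the Wronskians around a point of the critical sphere -/

theorem norm_le_of_norm_sub_le {w u : C} (hw : ‖w‖ = g) (hu : ‖u - w‖ ≤ g) : ‖u‖ ≤ g := by
  simpa [hw, hu] using IsUltrametricDist.norm_add_le_max (u - w) w

theorem norm_pow_sub_pow_succ_le (H : IsGHCritical π q s g) {w u : C} (hw : ‖w‖ = g)
    (hu : ‖u - w‖ ≤ g) (k : ℕ) :
    ‖u ^ q ^ (k + 1) - w ^ q ^ (k + 1)‖ ≤ g * ‖u ^ q ^ k - w ^ q ^ k‖ := by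
  have hg := H.pos
  have hg1 := H.lt_one
  have hq := H.two_le
  have hM : ‖w ^ q ^ k‖ ≤ g ^ q ^ k := by rw [norm_pow, hw]
  have hD : ‖u ^ q ^ k - w ^ q ^ k‖ ≤ g ^ q ^ k := by
    refine (norm_sub_le_max_norm _ _).trans (max_le ?_ hM)
    rw [norm_pow]
    exact pow_le_pow_left₀ (norm_nonneg _) (norm_le_of_norm_sub_le hw hu) _
  have hMg : (g ^ q ^ k) ^ (q - 1) ≤ g := by
    rw [← pow_mul]
    exact pow_le_of_le_one hg.le hg1.le (mul_ne_zero (by positivity) (by omega))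
  have hE := H.norm_add_pow_sub_le _ _ _ hM hD
  rw [add_sub_cancel, ← pow_mul, ← pow_mul, ← pow_succ] at hE
  have hDq : ‖(u ^ q ^ k - w ^ q ^ k) ^ q‖ ≤ g * ‖u ^ q ^ k - w ^ q ^ k‖ := by
    rw [norm_pow, ← pow_sub_one_mul (by omega : q ≠ 0)]
    gcongr
    exact (pow_le_pow_left₀ (norm_nonneg _) hD _).trans hMg
  have hsplit := IsUltrametricDist.norm_add_le_max
    (u ^ q ^ (k + 1) - w ^ q ^ (k + 1) - (u ^ q ^ k - w ^ q ^ k) ^ q) ((u ^ q ^ k - w ^ q ^ k) ^ q)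
  rw [sub_add_cancel] at hsplit
  refine hsplit.trans (max_le (hE.trans ?_) hDq)
  calc _ ≤ 1 * (‖u ^ q ^ k - w ^ q ^ k‖ * g) := by
        gcongr
        exact H.norm_lt_one.le
    _ = _ := by ring

theorem norm_pow_sub_pow_add_le (H : IsGHCritical π q s g) {w u : C} (hw : ‖w‖ = g)
    (hu : ‖u - w‖ ≤ g) (k m : ℕ) :
    ‖u ^ q ^ (k + m) - w ^ q ^ (k + m)‖ ≤ g ^ m * ‖u ^ q ^ k - w ^ q ^ k‖ := by
  induction m with
  | zero => simp
  | succ m ih =>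
    refine (H.norm_pow_sub_pow_succ_le hw hu (k + m)).trans ?_
    rw [pow_succ', mul_assoc]
    exact mul_le_mul_of_nonneg_left ih H.pos.le

/-- The deviation of `u ^ q ^ k - w ^ q ^ k` from `(u - w) ^ q ^ k`. -/
theorem norm_deviation_succ_le (H : IsGHCritical π q s g) {w u : C} (hw : ‖w‖ = g)
    (hu : ‖u - w‖ ≤ g) (k : ℕ)
    (hk : ‖u ^ q ^ k - w ^ q ^ k - (u - w) ^ q ^ k‖ ≤ ‖π‖ * g ^ q ^ k) :
    ‖u ^ q ^ (k + 1) - w ^ q ^ (k + 1) - (u - w) ^ q ^ (k + 1)‖ ≤ ‖π‖ * (g ^ q ^ k) ^ (q - 1) *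
      max (‖u - w‖ ^ q ^ k) ‖u ^ q ^ k - w ^ q ^ k - (u - w) ^ q ^ k‖ := by
  have hg := H.pos
  have hq := H.two_le
  have hπ := H.norm_pos
  have hπ1 := H.norm_lt_one
  set M := g ^ q ^ k with hMdef
  have hM0 : 0 < M := by positivity
  set W := w ^ q ^ k with hW
  set X := (u - w) ^ q ^ k with hX
  set e := u ^ q ^ k - W - X with he
  have hXn : ‖u - w‖ ^ q ^ k = ‖X‖ := by rw [hX, norm_pow]
  have hWM : ‖W‖ ≤ M := by rw [hW, norm_pow, hw]
  have hXM : ‖X‖ ≤ M := by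
    rw [← hXn]
    exact pow_le_pow_left₀ (norm_nonneg _) hu _
  have heM : ‖e‖ ≤ M := hk.trans (mul_le_of_le_one_left hM0.le hπ1.le)
  have hXe : ‖X + e‖ ≤ max ‖X‖ ‖e‖ := IsUltrametricDist.norm_add_le_max _ _
  have h₁ := H.norm_add_pow_sub_le W (X + e) M hWM (hXe.trans (max_le hXM heM))
  have h₂ := H.norm_add_pow_sub_le X e M hXM heM
  have h₃ : ‖e ^ q‖ ≤ ‖π‖ * (‖e‖ * M ^ (q - 1)) := by
    rw [norm_pow, ← Nat.sub_add_cancel (by omega : 1 ≤ q), pow_succ, Nat.add_sub_cancel]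
    calc ‖e‖ ^ (q - 1) * ‖e‖ ≤ (‖π‖ * M) ^ (q - 1) * ‖e‖ := by gcongr
      _ ≤ ‖π‖ * M ^ (q - 1) * ‖e‖ := by
          rw [mul_pow]
          gcongr
          exact pow_le_of_le_one hπ.le hπ1.le (by omega)
      _ = _ := by ring
  have hWe : W + (X + e) = u ^ q ^ k := by rw [he]; ring
  have hpow : ∀ x : C, x ^ q ^ (k + 1) = (x ^ q ^ k) ^ q := fun x => by rw [pow_succ, pow_mul]
  have hsum : u ^ q ^ (k + 1) - w ^ q ^ (k + 1) - (u - w) ^ q ^ (k + 1) =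
      ((W + (X + e)) ^ q - W ^ q - (X + e) ^ q) + (((X + e) ^ q - X ^ q - e ^ q) + e ^ q) := by
    rw [hWe, hpow u, hpow w, hpow (u - w)]
    ring
  rw [hsum, hXn]
  have hbound : ∀ y, y ≤ max ‖X‖ ‖e‖ →
      ‖π‖ * (y * M ^ (q - 1)) ≤ ‖π‖ * M ^ (q - 1) * max ‖X‖ ‖e‖ := fun y hy => by
    calc ‖π‖ * (y * M ^ (q - 1)) = ‖π‖ * M ^ (q - 1) * y := by ring
      _ ≤ _ := by gcongr
  refine (IsUltrametricDist.norm_add_le_max _ _).trans (max_le (h₁.trans (hbound _ hXe)) ?_)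
  refine (IsUltrametricDist.norm_add_le_max _ _).trans (max_le ?_ ?_)
  · exact h₂.trans (hbound _ (le_max_right _ _))
  · exact h₃.trans (hbound _ (le_max_right _ _))

theorem norm_deviation_le (H : IsGHCritical π q s g) {w u : C} (hw : ‖w‖ = g)
    (hu : ‖u - w‖ ≤ g) (k : ℕ) :
    ‖u ^ q ^ k - w ^ q ^ k - (u - w) ^ q ^ k‖ ≤ ‖π‖ * g ^ q ^ k := by
  have hg := H.pos
  have hq := H.two_le
  have hπ := H.norm_pos
  induction k with
  | zero =>
    simp only [pow_zero, pow_one, sub_self, norm_zero]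
    positivity
  | succ k ih =>
    refine (H.norm_deviation_succ_le hw hu k ih).trans ?_
    calc _ ≤ ‖π‖ * (g ^ q ^ k) ^ (q - 1) * g ^ q ^ k := by
          gcongr
          refine max_le (pow_le_pow_left₀ (norm_nonneg _) hu _) (ih.trans ?_)
          exact mul_le_of_le_one_left (by positivity) H.norm_lt_one.le
      _ = _ := by
          rw [mul_assoc, ← pow_succ, Nat.sub_add_cancel (by omega : 1 ≤ q), ← pow_mul, ← pow_succ]

theorem norm_deviation_mul_lt (H : IsGHCritical π q s g) {w u : C} (hw : ‖w‖ = g)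
    (hu : ‖u - w‖ ≤ g) {h : ℝ} (h0 : 0 < h)
    (hG : ∀ i ≤ s, (g * g) ^ ghExp q i * ‖u - w‖ ^ q ^ i ≤ h * ‖π‖ ^ i) {k : ℕ} (hk : k ≤ s + 1) :
    (g * g) ^ ghExp q k * ‖u ^ q ^ k - w ^ q ^ k - (u - w) ^ q ^ k‖ < h * ‖π‖ ^ k := by
  have hg := H.pos
  have hq := H.two_le
  have hπ := H.norm_pos
  induction k with
  | zero => simpa using h0
  | succ k ih =>
    have hmax : (g * g) ^ ghExp q k * max (‖u - w‖ ^ q ^ k)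
        ‖u ^ q ^ k - w ^ q ^ k - (u - w) ^ q ^ k‖ ≤ h * ‖π‖ ^ k := by
      rw [mul_max_of_nonneg _ _ (by positivity)]
      exact max_le (hG k (by omega)) (ih (by omega)).le
    calc _ ≤ (g * g) ^ ghExp q (k + 1) * (‖π‖ * (g ^ q ^ k) ^ (q - 1) *
          max (‖u - w‖ ^ q ^ k) ‖u ^ q ^ k - w ^ q ^ k - (u - w) ^ q ^ k‖) := by
          gcongr
          exact H.norm_deviation_succ_le hw hu k (H.norm_deviation_le hw hu k)
      _ = ‖π‖ * ((g * g) ^ q ^ k * (g ^ q ^ k) ^ (q - 1)) * ((g * g) ^ ghExp q k *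
          max (‖u - w‖ ^ q ^ k) ‖u ^ q ^ k - w ^ q ^ k - (u - w) ^ q ^ k‖) := by
          rw [ghExp_succ, pow_add (g * g)]
          ring
      _ ≤ ‖π‖ * ((g * g) ^ q ^ k * (g ^ q ^ k) ^ (q - 1)) * (h * ‖π‖ ^ k) := by gcongr
      _ < ‖π‖ * 1 * (h * ‖π‖ ^ k) := by
          gcongr
          have h₁ : (g * g) ^ q ^ k < 1 :=
            pow_lt_one₀ (by positivity) (by nlinarith [H.lt_one]) (by positivity)
          have h₂ : (g ^ q ^ k) ^ (q - 1) ≤ 1 :=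
            pow_le_one₀ (by positivity) (pow_le_one₀ hg.le H.lt_one.le)
          have h₃ : 0 < (g * g) ^ q ^ k := by positivity
          nlinarith
      _ = _ := by rw [pow_succ]; ring

/-- If the value of index `j` dominates, it gives the norm of the Wronskian. -/
theorem norm_eval_of_dominant (H : IsGHCritical π q s g) {w u : C} (hw : ‖w‖ = g)
    (hu0 : 0 < ‖u - w‖) (hu : ‖u - w‖ < g) {n j : ℕ} (hn : s + 1 ≤ n) (hj : j ≤ s)
    (hG : ∀ i ≤ s + 1, i ≠ j → (g * g) ^ ghExp q i * ‖u - w‖ ^ q ^ i / ‖π‖ ^ i <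
      (g * g) ^ ghExp q j * ‖u - w‖ ^ q ^ j / ‖π‖ ^ j) :
    ‖(ghWronskian π q n w).eval u‖ = (g * g) ^ ghExp q j / ‖π‖ ^ j * ‖u - w‖ ^ q ^ j := by
  have hg := H.pos
  have hq := H.two_le
  have hπ := H.norm_pos
  have hug : ‖u‖ = g := by
    have := norm_add_eq_left_of_lt (x := w) (y := u - w) (by rwa [hw])
    rwa [add_sub_cancel, hw] at this
  obtain ⟨h, hh⟩ : ∃ h, (g * g) ^ ghExp q j * ‖u - w‖ ^ q ^ j / ‖π‖ ^ j = h := ⟨_, rfl⟩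
  rw [hh] at hG
  have h0 : 0 < h := by rw [← hh]; positivity
  have hhj : (g * g) ^ ghExp q j * ‖u - w‖ ^ q ^ j = h * ‖π‖ ^ j := by
    rw [← hh]; field_simp
  have hG' : ∀ i ≤ s + 1, i ≠ j → (g * g) ^ ghExp q i * ‖u - w‖ ^ q ^ i < h * ‖π‖ ^ i :=
    fun i hi hij => (div_lt_iff₀ (by positivity)).1 (hG i hi hij)
  have hGle : ∀ i ≤ s + 1, (g * g) ^ ghExp q i * ‖u - w‖ ^ q ^ i ≤ h * ‖π‖ ^ i := by
    intro i hi
    rcases eq_or_ne i j with rfl | hij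
    · exact hhj.le
    · exact (hG' i hi hij).le
  have hdev := fun k (hk : k ≤ s + 1) =>
    H.norm_deviation_mul_lt hw hu.le h0 (fun i hi => hGle i (by omega)) hk
  have hsplit : ∀ k, ‖u ^ q ^ k - w ^ q ^ k‖ ≤
      max ‖u ^ q ^ k - w ^ q ^ k - (u - w) ^ q ^ k‖ (‖u - w‖ ^ q ^ k) := fun k => by
    simpa [norm_pow] using IsUltrametricDist.norm_add_le_max
      (u ^ q ^ k - w ^ q ^ k - (u - w) ^ q ^ k) ((u - w) ^ q ^ k)
  have hDle : ∀ k ≤ s + 1, (g * g) ^ ghExp q k * ‖u ^ q ^ k - w ^ q ^ k‖ ≤ h * ‖π‖ ^ k := by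
    intro k hk
    refine (mul_le_mul_of_nonneg_left (hsplit k) (by positivity)).trans ?_
    rw [mul_max_of_nonneg _ _ (by positivity)]
    exact max_le (hdev k hk).le (hGle k hk)
  have hDlt : ∀ k ≤ s + 1, k ≠ j →
      (g * g) ^ ghExp q k * ‖u ^ q ^ k - w ^ q ^ k‖ < h * ‖π‖ ^ k := by
    intro k hk hkj
    refine (mul_le_mul_of_nonneg_left (hsplit k) (by positivity)).trans_lt ?_
    rw [mul_max_of_nonneg _ _ (by positivity)]
    exact max_lt (hdev k hk) (hG' k hk hkj)
  have hDj : ‖u ^ q ^ j - w ^ q ^ j‖ = ‖u - w‖ ^ q ^ j := by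
    have hlt : ‖u ^ q ^ j - w ^ q ^ j - (u - w) ^ q ^ j‖ < ‖(u - w) ^ q ^ j‖ := by
      rw [norm_pow]
      refine lt_of_mul_lt_mul_left ((hdev j (by omega)).trans_eq hhj.symm) (by positivity)
    have := norm_add_eq_left_of_lt hlt
    rwa [add_sub_cancel, norm_pow] at this
  have hT := fun i (hi : i ≤ s + 1) => H.norm_ghTerm_mul_pow_eq hw hg hug H.norm_lt_of_lt hi
  have hB := H.norm_ghTerm_mul_pow_le hw hg H.lt_one.le hug H.norm_lt_of_lt le_rfl
    (by rw [mul_one, H.norm_eq])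
    (by rw [one_mul]; exact (H.pow_pow_lt hg H.lt_one (by omega)).le)
  have hTj : ‖ghTerm π q w u j‖ = h := by
    have := hT j (by omega)
    rw [hDj, hhj] at this
    exact mul_right_cancel₀ (by positivity) this
  have htail : ∀ k ≤ s + 1, ∀ l ≥ 1,
      (g * g) ^ ghExp q k * ‖u ^ q ^ (k + 2 * l) - w ^ q ^ (k + 2 * l)‖ < h * ‖π‖ ^ k := by
    intro k hk l hl
    calc _ ≤ (g * g) ^ ghExp q k * (g ^ (2 * l) * ‖u ^ q ^ k - w ^ q ^ k‖) := by
          gcongr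
          exact H.norm_pow_sub_pow_add_le hw hu.le k (2 * l)
      _ = g ^ (2 * l) * ((g * g) ^ ghExp q k * ‖u ^ q ^ k - w ^ q ^ k‖) := by ring
      _ ≤ g ^ (2 * l) * (h * ‖π‖ ^ k) := by
          exact mul_le_mul_of_nonneg_left (hDle k hk) (by positivity)
      _ < 1 * (h * ‖π‖ ^ k) := by
          gcongr
          exact pow_lt_one₀ hg.le H.lt_one (by omega)
      _ = _ := one_mul _
  rw [H.norm_eval_eq_of_dominant (j := j) hn (by omega), hTj, ← hh]
  · ring
  · intro i hi hij
    rw [hTj]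
    refine lt_of_mul_lt_mul_right ?_ (pow_nonneg hπ.le i)
    rw [hT i hi]
    exact hDlt i hi hij
  · intro l hl
    rw [hTj]
    refine lt_of_mul_lt_mul_right ((hB l).1.trans_lt ?_) (pow_nonneg hπ.le s)
    rw [one_mul]
    exact htail s (by omega) l hl
  · intro l hl
    rw [hTj]
    refine lt_of_mul_lt_mul_right ((hB l).2.trans_lt ?_) (pow_nonneg hπ.le (s + 1))
    exact htail (s + 1) le_rfl l hl

end IsGHCritical

/-- The possible distances between points of a fiber on the critical sphere of index `s`. -/
noncomputable def ghRadius (q s : ℕ) (g : ℝ) : ℕ → ℝ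
  | 0 => 0
  | j + 1 => g ^ (ghExp q (s - j) + ghExp q (s + 1 - j))

theorem ghRadius_last (q s : ℕ) (g : ℝ) : ghRadius q s g (s + 1) = g := by
  simp [ghRadius, ghExp]

namespace IsGHCritical

variable {π : C} {q s : ℕ} {g : ℝ}

theorem ghRadius_succ_pos (H : IsGHCritical π q s g) (j : ℕ) : 0 < ghRadius q s g (j + 1) :=
  pow_pos H.pos _

theorem ghRadius_succ_pow_mul (H : IsGHCritical π q s g) {j : ℕ} (hj : j ≤ s) :
    ghRadius q s g (j + 1) ^ (q ^ j * (q - 1)) * (g * g) ^ q ^ j = ‖π‖ := by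
  have hq := H.two_le
  rw [ghRadius, H.norm_eq, ← pow_two, ← pow_mul, ← pow_mul, ← pow_add]
  congr 1
  obtain ⟨m, rfl⟩ := Nat.exists_eq_add_of_le hj
  rw [Nat.add_sub_cancel_left, show j + m + 1 - j = m + 1 by omega]
  have h₁ := ghExp_mul_pred_add_one (by omega : 1 ≤ q) m
  have h₂ := ghExp_mul_pred_add_one (by omega : 1 ≤ q) (m + 1)
  rw [show j + m + 1 = j + (m + 1) by ring, pow_add q j, pow_add q j, ← h₁, ← h₂]
  ring

theorem ghRadius_mono (H : IsGHCritical π q s g) {i j : ℕ} (hij : i ≤ j) :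
    ghRadius q s g i ≤ ghRadius q s g j := by
  refine monotone_nat_of_le_succ (f := ghRadius q s g) (fun k => ?_) hij
  cases k with
  | zero => exact (H.ghRadius_succ_pos 0).le
  | succ k =>
    exact pow_le_pow_of_le_one H.pos.le H.lt_one.le
      (add_le_add (ghExp_mono q (by omega)) (ghExp_mono q (by omega)))

theorem ghRadius_lt_succ (H : IsGHCritical π q s g) {j : ℕ} (hj : j ≤ s) :
    ghRadius q s g j < ghRadius q s g (j + 1) := by
  have hq := H.two_le
  cases j with
  | zero => exact H.ghRadius_succ_pos 0
  | succ k =>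
    refine pow_lt_pow_right_of_lt_one₀ H.pos H.lt_one (add_lt_add ?_ ?_)
    · rw [show s - k = s - (k + 1) + 1 by omega, ghExp_succ]
      exact Nat.lt_add_of_pos_right (by positivity)
    · rw [show s + 1 - k = s + 1 - (k + 1) + 1 by omega, ghExp_succ]
      exact Nat.lt_add_of_pos_right (by positivity)

theorem ghRadius_le (H : IsGHCritical π q s g) {j : ℕ} (hj : j ≤ s + 1) :
    ghRadius q s g j ≤ g :=
  (H.ghRadius_mono hj).trans_eq (ghRadius_last q s g)

/-- Comparison of `ghRadius` with its closed form. -/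
theorem ghRadius_succ_eq_rpow (H : IsGHCritical π q s g) {j : ℕ} (hj : j ≤ s) :
    ghRadius q s g (j + 1) = (‖π‖ * g ^ (-(2 : ℝ) * (q : ℝ) ^ j)) ^
      ((1 : ℝ) / ((q : ℝ) ^ (j + 1) - (q : ℝ) ^ j)) := by
  have hg := H.pos
  have hq := H.two_le
  have hr := H.ghRadius_succ_pos j
  have hcast : (q : ℝ) ^ (j + 1) - (q : ℝ) ^ j = ((q ^ j * (q - 1) : ℕ) : ℝ) := by
    push_cast [Nat.cast_sub (by omega : 1 ≤ q)]
    ring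
  have hinv : g ^ (-(2 : ℝ) * (q : ℝ) ^ j) = ((g * g) ^ q ^ j)⁻¹ := by
    rw [show -(2 : ℝ) * (q : ℝ) ^ j = -((2 * q ^ j : ℕ) : ℝ) by push_cast; ring,
      Real.rpow_neg hg.le, Real.rpow_natCast, pow_mul, pow_two]
  rw [hinv, ← H.ghRadius_succ_pow_mul hj, hcast, mul_inv_cancel_right₀ (by positivity), one_div,
    Real.pow_rpow_inv_natCast hr.le (mul_ne_zero (by positivity) (by omega))]

variable [IsUltrametricDist C]

/-- Around a point `w` of the critical sphere, the Wronskian at `w` grows like the power `q ^ j`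
of the distance to `w` on the annulus of index `j`. -/
theorem norm_eval_of_near (H : IsGHCritical π q s g) {w u : C} (hw : ‖w‖ = g) {j : ℕ} (hj : j ≤ s)
    (hu₁ : ghRadius q s g j < ‖u - w‖) (hu₂ : ‖u - w‖ < ghRadius q s g (j + 1)) {n : ℕ}
    (hn : s + 1 ≤ n) :
    ‖(ghWronskian π q n w).eval u‖ = (g * g) ^ ghExp q j / ‖π‖ ^ j * ‖u - w‖ ^ q ^ j := by
  have hg := H.pos
  have hq := H.two_le
  have hπ := H.norm_pos
  have hu0 : 0 < ‖u - w‖ := (H.ghRadius_mono (Nat.zero_le j)).trans_lt hu₁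
  refine H.norm_eval_of_dominant hw hu0 (hu₂.trans_le (H.ghRadius_le (by omega))) hn hj
    fun i hi hij => ?_
  have hcmp : ∀ i, _ := fun i => H.ghTerm_lt_succ_iff (i := i)
    (τ := (g * g) ^ ghExp q i * ‖u - w‖ ^ q ^ i / ‖π‖ ^ i)
    (σ := (g * g) ^ ghExp q (i + 1) * ‖u - w‖ ^ q ^ (i + 1) / ‖π‖ ^ (i + 1))
    (κ := ‖u - w‖ ^ (q ^ i * (q - 1)) * (g * g) ^ q ^ i)
    (div_mul_cancel₀ _ (by positivity)) (div_mul_cancel₀ _ (by positivity))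
    (by
      rw [ghExp_succ, pow_add (g * g), show q ^ (i + 1) = q ^ i + q ^ i * (q - 1) by
        obtain ⟨d, rfl⟩ := Nat.exists_eq_add_of_le' (by omega : 1 ≤ q)
        rw [Nat.add_sub_cancel]; ring, pow_add ‖u - w‖]
      ring) (by positivity)
  have hexp : ∀ k, q ^ k * (q - 1) ≠ 0 := fun k => mul_ne_zero (by positivity) (by omega)
  refine lt_of_unimodal (n := s + 1)
    (f := fun i => (g * g) ^ ghExp q i * ‖u - w‖ ^ q ^ i / ‖π‖ ^ i) ?_ ?_ hi hij
  · intro k hk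
    refine (hcmp k).1.2 ?_
    rw [← H.ghRadius_succ_pow_mul (by omega : k ≤ s)]
    refine mul_lt_mul_of_pos_right ?_ (by positivity)
    exact pow_lt_pow_left₀ ((H.ghRadius_mono (by omega)).trans_lt hu₁) (H.ghRadius_succ_pos k).le
      (hexp k)
  · intro k hk₁ hk₂
    refine (hcmp k).2.2 ?_
    refine lt_of_lt_of_eq ?_ (H.ghRadius_succ_pow_mul (by omega : k ≤ s))
    refine mul_lt_mul_of_pos_right ?_ (by positivity)
    exact pow_lt_pow_left₀ (hu₂.trans_le (H.ghRadius_mono (by omega))) hu0.le (hexp k)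

/-! ### Roots of the Wronskians on the critical sphere -/

section Roots

variable [IsAlgClosed C]

theorem ghWronskian_ne_zero (H : IsGHCritical π q s g) {w : C} (hw : ‖w‖ = g) {n : ℕ}
    (hn : s + 1 ≤ n) : ghWronskian π q n w ≠ 0 := by
  intro h
  have hg := H.pos
  have hπ := H.norm_pos
  obtain ⟨x, hx₁, hx₂⟩ := exists_norm_mem_Ioo H.norm_pos H.norm_lt_one le_rfl
    (H.ghRadius_lt_succ (Nat.zero_le s))
  have := H.norm_eval_of_near (u := w + x) hw (Nat.zero_le s)
    (by rw [add_sub_cancel_left]; exact hx₁)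
    (by simpa using hx₂) hn
  rw [h, Polynomial.eval_zero, norm_zero, add_sub_cancel_left] at this
  have hx0 : 0 < ‖x‖ := hx₁
  exact absurd this (by positivity)

theorem roots_near (H : IsGHCritical π q s g) {w : C} (hw : ‖w‖ = g) {n : ℕ}
    (hn : s + 1 ≤ n) {j : ℕ} (hj : j ≤ s) :
    (∀ a ∈ (ghWronskian π q n w).roots, ghRadius q s g j < ‖a - w‖ →
      ghRadius q s g (j + 1) ≤ ‖a - w‖) ∧
    ((ghWronskian π q n w).roots.filter fun a => ‖a - w‖ ≤ ghRadius q s g j).card = q ^ j := by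
  have hg := H.pos
  have hπ := H.norm_pos
  exact card_roots_filter_of_growth H.norm_pos H.norm_lt_one (H.ghWronskian_ne_zero hw hn)
    (H.ghRadius_mono (Nat.zero_le j)) (H.ghRadius_lt_succ hj)
    (B := (g * g) ^ ghExp q j / ‖π‖ ^ j) (by positivity)
    fun x h₁ h₂ => H.norm_eval_of_near hw hj h₁ h₂ hn

theorem card_roots_sphere (H : IsGHCritical π q s g) {w : C} (hw : ‖w‖ = g) {n : ℕ}
    (hn : s + 1 ≤ n) :
    ((ghWronskian π q n w).roots.filter fun a => ‖a‖ = g).card = q ^ s + q ^ (s + 1) := by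
  have hg := H.pos
  have hg1 := H.lt_one
  have hπ := H.norm_pos
  have hP := H.ghWronskian_ne_zero hw hn
  have hg2 : g ^ 2 < g := by nlinarith
  obtain ⟨h₁, h₂⟩ := card_roots_filter_of_growth (c := 0) H.norm_pos H.norm_lt_one hP
    (by positivity : 0 ≤ g ^ 2) hg2 (B := g ^ ghExp q s * g ^ q ^ s / ‖π‖ ^ s) (N := ghExp q s)
    (by positivity)
    (fun x hx₁ hx₂ => by rw [sub_zero] at *; exact H.norm_eval_of_lt hw hx₁ hx₂ hn)
  obtain ⟨-, h₃⟩ := card_roots_filter_of_growth (c := 0) H.norm_pos H.norm_lt_one hP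
    hg.le ((Real.lt_sqrt hg.le).2 hg2) (B := g ^ ghExp q (s + 1) / ‖π‖ ^ (s + 1))
    (N := ghExp q (s + 2)) (by positivity)
    (fun x hx₁ hx₂ => by rw [sub_zero] at *; exact H.norm_eval_of_gt hw hx₁ hx₂ hn)
  simp only [sub_zero] at h₁ h₂ h₃
  have h₄ := congrArg Multiset.card (Multiset.filter_add_not (fun a => ‖a‖ = g)
    ((ghWronskian π q n w).roots.filter fun a => ‖a‖ ≤ g))
  rw [Multiset.card_add, Multiset.filter_filter, Multiset.filter_filter, h₃,
    Multiset.filter_congr (q := fun a => ‖a‖ = g) (fun a _ => ⟨fun h => h.1, fun h => ⟨h, h.le⟩⟩),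
    Multiset.filter_congr (p := fun a => ¬‖a‖ = g ∧ ‖a‖ ≤ g) (q := fun a => ‖a‖ ≤ g ^ 2)
      (fun a ha => ⟨fun h => not_lt.1 fun h' => h.1 (le_antisymm h.2 (h₁ a ha h')),
        fun h => ⟨(h.trans_lt hg2).ne, h.trans hg2.le⟩⟩), h₂, ghExp_succ, ghExp_succ] at h₄
  omega

theorem eq_of_norm_sub_lt (H : IsGHCritical π q s g) {w : C} (hw : ‖w‖ = g) {n : ℕ}
    (hn : s + 1 ≤ n) {a b : C} (ha : ‖a‖ = g) (ha₀ : (ghWronskian π q n w).eval a = 0)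
    (hb₀ : (ghWronskian π q n w).eval b = 0) (hab : ‖a - b‖ < ghRadius q s g 1) : a = b := by
  obtain ⟨c, hc, hca⟩ := exists_ghWronskian_eq_C_mul H.ne_zero (H.ghWronskian_ne_zero hw hn)
    (H.ghWronskian_ne_zero ha hn) ha₀
  rw [hca, Polynomial.eval_mul, Polynomial.eval_C, mul_eq_zero] at hb₀
  have hb : b ∈ (ghWronskian π q n a).roots :=
    (Polynomial.mem_roots (H.ghWronskian_ne_zero ha hn)).2 (hb₀.resolve_left hc)
  by_contra hne
  have := (H.roots_near ha hn (Nat.zero_le s)).1 b hb (norm_pos_iff.2 (sub_ne_zero.2 (Ne.symm hne)))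
  rw [norm_sub_rev] at this
  exact absurd hab (not_lt.2 this)

theorem count_roots_eq_one [DecidableEq C] (H : IsGHCritical π q s g) {w : C} (hw : ‖w‖ = g) {n : ℕ}
    (hn : s + 1 ≤ n) {a : C} (ha : ‖a‖ = g) (ha₀ : (ghWronskian π q n w).eval a = 0) :
    (ghWronskian π q n w).roots.count a = 1 := by
  obtain ⟨c, hc, hca⟩ := exists_ghWronskian_eq_C_mul H.ne_zero (H.ghWronskian_ne_zero hw hn)
    (H.ghWronskian_ne_zero ha hn) ha₀
  have h := (H.roots_near ha hn (Nat.zero_le s)).2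
  rw [pow_zero] at h
  rw [hca, Polynomial.roots_C_mul _ hc, Multiset.count_eq_card_filter_eq, ← h]
  congr 1
  refine Multiset.filter_congr fun b _ => ?_
  rw [ghRadius, norm_le_zero_iff, sub_eq_zero, eq_comm]

theorem exists_finset_roots (H : IsGHCritical π q s g) {w : C} (hw : ‖w‖ = g) {n : ℕ}
    (hn : s + 1 ≤ n) :
    ∃ R : Finset C, (∀ a, a ∈ R ↔ ‖a‖ = g ∧ (ghWronskian π q n w).eval a = 0) ∧
      R.card = q ^ s + q ^ (s + 1) ∧
      ∀ j ≤ s, (R.filter fun a => ‖a - w‖ ≤ ghRadius q s g j).card = q ^ j ∧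
        ∀ a ∈ R, ghRadius q s g j < ‖a - w‖ → ghRadius q s g (j + 1) ≤ ‖a - w‖ := by
  classical
  have hP := H.ghWronskian_ne_zero hw hn
  have hnodup : ((ghWronskian π q n w).roots.filter fun a => ‖a‖ = g).Nodup := by
    rw [Multiset.nodup_iff_count_le_one]
    intro a
    by_cases ha : a ∈ (ghWronskian π q n w).roots.filter fun a => ‖a‖ = g
    · obtain ⟨ha₁, ha₂⟩ := Multiset.mem_filter.1 ha
      rw [Multiset.count_filter, if_pos ha₂]
      exact (H.count_roots_eq_one hw hn ha₂ ((Polynomial.mem_roots hP).1 ha₁)).le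
    · rw [Multiset.count_eq_zero_of_notMem ha]
      exact zero_le_one
  refine ⟨⟨_, hnodup⟩, fun a => ?_, H.card_roots_sphere hw hn, fun j hj => ⟨?_, fun a ha => ?_⟩⟩
  · rw [Finset.mem_mk, Multiset.mem_filter, Polynomial.mem_roots hP, and_comm, Polynomial.IsRoot]
  · rw [← (H.roots_near hw hn hj).2, Finset.card_def, Finset.filter_val, Multiset.filter_filter]
    congr 1
    refine Multiset.filter_congr fun a _ => ⟨fun h => h.1, fun h => ⟨h, ?_⟩⟩
    have hlt := (h.trans_lt (H.ghRadius_lt_succ hj)).trans_le (H.ghRadius_le (by omega))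
    have := norm_add_eq_left_of_lt (x := w) (y := a - w) (by rwa [hw])
    rwa [add_sub_cancel, hw] at this
  · exact (H.roots_near hw hn hj).1 a (Multiset.mem_filter.1 (Finset.mem_mk.1 ha)).1

end Roots

/-! ### The period map on the critical sphere -/

theorem norm_ghm_mul_pow_half_le (H : IsGHCritical π q s g) {u : C} (hu : ‖u‖ = g) {n m : ℕ}
    (hn : s ≤ n) (hm : n ≤ 2 * m + 1) : ‖π‖ ^ m * ‖ghm π q n u‖ ≤ 1 / ‖π‖ ^ (s + 1) := by
  have hπ := H.norm_pos
  have hπ1 := H.norm_lt_one.le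
  have hg1 : ∀ k, g ^ k ≤ 1 := fun k => pow_le_one₀ H.pos.le H.lt_one.le
  rw [le_div_iff₀ (by positivity)]
  rcases Nat.even_or_odd' (n - s) with ⟨l, hl | hl⟩
  · obtain rfl : n = s + 2 * l := by omega
    refine le_trans ?_ (((H.norm_ghm_le hu l).1.trans_eq (one_mul _)).trans (hg1 _))
    rw [mul_right_comm, ← pow_add, mul_comm]
    exact mul_le_mul_of_nonneg_left (pow_le_pow_of_le_one hπ.le hπ1 (by omega)) (norm_nonneg _)
  · obtain rfl : n = s + 1 + 2 * l := by omega
    refine le_trans ?_ ((H.norm_ghm_le hu l).2.trans (hg1 _))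
    rw [mul_right_comm, ← pow_add, mul_comm]
    exact mul_le_mul_of_nonneg_left (pow_le_pow_of_le_one hπ.le hπ1 (by omega)) (norm_nonneg _)

theorem norm_pow_mul_ghm_succ_sub_le (H : IsGHCritical π q s g) {u : C} (hu : ‖u‖ = g) {n m : ℕ}
    (hn : s ≤ n) (hm : n ≤ 2 * m) :
    ‖π ^ m * ghm π q n u - π ^ (m + 1) * ghm π q (n + 2) u‖ ≤ 1 / ‖π‖ ^ (s + 1) * g ^ n := by
  have hπ := H.ne_zero
  have hq := H.two_le
  have hg := H.pos
  have heq : π ^ m * ghm π q n u - π ^ (m + 1) * ghm π q (n + 2) u =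
      -(u ^ q ^ (n + 1) * (π ^ m * ghm π q (n + 1) u)) := by
    rw [ghm_add_two]
    field_simp
    ring
  rw [heq, norm_neg, norm_mul, norm_mul, norm_pow, norm_pow, hu, mul_comm]
  refine mul_le_mul (H.norm_ghm_mul_pow_half_le hu (by omega) (by omega)) ?_ (by positivity)
    (by positivity)
  refine pow_le_pow_of_le_one hg.le H.lt_one.le ?_
  exact (Nat.lt_succ_self n).le.trans (Nat.lt_pow_self hq).le

theorem exists_tendsto_pow_mul_ghm [CompleteSpace C] (H : IsGHCritical π q s g) {u : C}
    (hu : ‖u‖ = g) {i j : ℕ} (hij : j ≤ 2 * i) :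
    ∃ y, Tendsto (fun k => π ^ (k + i) * ghm π q (2 * k + j) u) atTop (nhds y) := by
  have hg := H.pos
  have hπ := H.norm_pos
  refine cauchySeq_tendsto_of_complete (cauchySeq_of_summable_dist ?_)
  refine Summable.of_norm_bounded_eventually_nat
    ((summable_geometric_of_lt_one hg.le H.lt_one).mul_left (1 / ‖π‖ ^ (s + 1))) ?_
  filter_upwards [eventually_ge_atTop s] with k hk
  rw [Real.norm_of_nonneg dist_nonneg, dist_eq_norm, show k.succ + i = k + i + 1 by omega,
    show 2 * k.succ + j = 2 * k + j + 2 by omega]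
  refine (H.norm_pow_mul_ghm_succ_sub_le hu (by omega) (by omega)).trans ?_
  gcongr ?_ * ?_
  exact pow_le_pow_of_le_one hg.le H.lt_one.le (by omega)

theorem tendsto_ghphi0 [CompleteSpace C] (H : IsGHCritical π q s g) {u : C} (hu : ‖u‖ = g) :
    Tendsto (fun k => π ^ k * ghm π q (2 * k) u) atTop (nhds (ghphi0 π q u)) :=
  tendsto_nhds_limUnder (H.exists_tendsto_pow_mul_ghm hu (i := 0) (j := 0) le_rfl)

theorem tendsto_ghphi1 [CompleteSpace C] (H : IsGHCritical π q s g) {u : C} (hu : ‖u‖ = g) :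
    Tendsto (fun k => π ^ (k + 1) * ghm π q (2 * k + 1) u) atTop (nhds (ghphi1 π q u)) :=
  tendsto_nhds_limUnder (H.exists_tendsto_pow_mul_ghm hu (i := 1) (j := 1) (by omega))

theorem tendsto_eval_ghWronskian [CompleteSpace C] (H : IsGHCritical π q s g) {w u : C}
    (hw : ‖w‖ = g) (hu : ‖u‖ = g) :
    Tendsto (fun k => (ghWronskian π q (2 * k) w).eval u) atTop
      (nhds (ghphi0 π q w * ghphi1 π q u - ghphi1 π q w * ghphi0 π q u)) := by
  refine (((H.tendsto_ghphi0 hw).mul (H.tendsto_ghphi1 hu)).sub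
    ((H.tendsto_ghphi1 hw).mul (H.tendsto_ghphi0 hu))).congr fun k => ?_
  rw [eval_ghWronskian, pow_mul (-π), neg_sq]
  ring

theorem norm_ghTerm_le (H : IsGHCritical π q s g) {w u : C} (hw : ‖w‖ = g) (hu : ‖u‖ = g) {i : ℕ}
    (hi : s ≤ i) : ‖ghTerm π q w u i‖ ≤ 1 / ‖π‖ ^ (s + 1) * g ^ i := by
  have hg := H.pos
  have hg1 := H.lt_one
  have hπ := H.norm_pos
  have hB := H.norm_ghTerm_mul_pow_le hw hg hg1.le hu H.norm_lt_of_lt le_rfl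
    (by rw [mul_one, H.norm_eq])
    (by rw [one_mul]; exact (H.pow_pow_lt hg H.lt_one (by omega)).le)
  have hD : ∀ i, ‖u ^ q ^ i - w ^ q ^ i‖ ≤ g ^ i := by
    intro i
    refine (norm_sub_le_max_norm _ _).trans ?_
    rw [norm_pow, norm_pow, hu, hw, max_self]
    exact pow_le_pow_of_le_one hg.le hg1.le (Nat.lt_pow_self H.two_le).le
  have hgg : ∀ k, (g * g) ^ k ≤ 1 := fun k => pow_le_one₀ (by positivity) (by nlinarith)
  rw [one_div, inv_mul_eq_div, le_div_iff₀ (by positivity)]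
  rcases Nat.even_or_odd' (i - s) with ⟨l, hl | hl⟩
  · obtain rfl : i = s + 2 * l := by omega
    calc _ ≤ ‖ghTerm π q w u (s + 2 * l)‖ * ‖π‖ ^ s := mul_le_mul_of_nonneg_left
          (pow_le_pow_of_le_one hπ.le H.norm_lt_one.le (by omega)) (norm_nonneg _)
      _ ≤ 1 * (g * g) ^ ghExp q s * g ^ (s + 2 * l) := (hB l).1.trans (by gcongr; exact hD _)
      _ ≤ 1 * 1 * g ^ (s + 2 * l) := by gcongr; exact hgg _
      _ = _ := by ring
  · obtain rfl : i = s + 1 + 2 * l := by omega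
    calc _ ≤ (g * g) ^ ghExp q (s + 1) * g ^ (s + 1 + 2 * l) :=
          (hB l).2.trans (by gcongr; exact hD _)
      _ ≤ 1 * g ^ (s + 1 + 2 * l) := by gcongr; exact hgg _
      _ = _ := by ring

theorem norm_eval_sub_eval_le (H : IsGHCritical π q s g) {w u : C} (hw : ‖w‖ = g) (hu : ‖u‖ = g)
    {n m : ℕ} (hn : s ≤ n) (hnm : n ≤ m) :
    ‖(ghWronskian π q m w).eval u - (ghWronskian π q n w).eval u‖ ≤
      1 / ‖π‖ ^ (s + 1) * g ^ n := by
  have hg := H.pos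
  rw [eval_ghWronskian_eq_sum H.ne_zero, eval_ghWronskian_eq_sum H.ne_zero,
    Finset.sum_range_sub_sum_range (by omega)]
  refine IsUltrametricDist.norm_sum_le_of_forall_le_of_nonneg (by positivity) fun i hi => ?_
  have hni : n + 1 ≤ i := (Finset.mem_filter.1 hi).2
  refine (H.norm_ghTerm_le hw hu (by omega)).trans ?_
  gcongr ?_ * ?_
  exact pow_le_pow_of_le_one hg.le H.lt_one.le (by omega)

/-- The fiber of the period map on the critical sphere, with the distances to one of its points. -/
theorem exists_finset_fiber [CompleteSpace C] [IsAlgClosed C] (H : IsGHCritical π q s g) {w : C}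
    (hw : ‖w‖ = g) :
    ∃ S : Finset C, (∀ u, u ∈ S ↔ ‖u‖ = g ∧
        ghphi0 π q w * ghphi1 π q u = ghphi1 π q w * ghphi0 π q u) ∧
      S.card = q ^ s + q ^ (s + 1) ∧
      ∀ j ≤ s, (S.filter fun a => ‖a - w‖ ≤ ghRadius q s g j).card = q ^ j ∧
        ∀ a ∈ S, ghRadius q s g j < ‖a - w‖ → ghRadius q s g (j + 1) ≤ ‖a - w‖ := by
  have hg := H.pos
  have hπ := H.norm_pos
  have hr := H.ghRadius_succ_pos 0
  obtain ⟨x, hx₁, hx₂⟩ := exists_norm_mem_Ioo H.norm_pos H.norm_lt_one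
    (le_refl (ghRadius q s g 0)) (H.ghRadius_lt_succ (Nat.zero_le s))
  have hx0 : 0 < ‖x‖ := hx₁
  have hy : ‖w + x‖ = g := by
    rw [norm_add_eq_left_of_lt, hw]
    rw [hw]
    exact hx₂.trans_le (H.ghRadius_le (by omega))
  obtain ⟨k, hk, f, hf, hfu⟩ := exists_bijOn_roots_of_tendsto (γ := g)
    (P := fun k => ghWronskian π q (2 * k) w) (δ := ghRadius q s g 1)
    (F := fun u => ghphi0 π q w * ghphi1 π q u - ghphi1 π q w * ghphi0 π q u)
    (A := ‖x‖ / g ^ (q ^ s + q ^ (s + 1))) (ε := fun k => 1 / ‖π‖ ^ (s + 1) * g ^ (2 * k))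
    (k₀ := s + 1) (Q := q ^ s + q ^ (s + 1)) hr (by positivity)
    (by
      simp only [pow_mul]
      rw [← mul_zero (1 / ‖π‖ ^ (s + 1))]
      exact (tendsto_pow_atTop_nhds_zero_of_lt_one (by positivity)
        (pow_lt_one₀ hg.le H.lt_one two_ne_zero)).const_mul _)
    (fun k hk m hm u hu => H.norm_eval_sub_eval_le hw hu (by omega) (by omega))
    (fun u hu => H.tendsto_eval_ghWronskian hw hu)
    (fun k hk a b ha _ ha₀ hb₀ hab => H.eq_of_norm_sub_lt hw (by omega) ha ha₀ hb₀ hab)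
    (fun k hk u hu η hη h => by
      have hP := H.ghWronskian_ne_zero hw (n := 2 * k) (by omega)
      have := norm_eval_mul_pow_le (ghWronskian π q (2 * k) w) hη hu hy
        fun a ha hag => h a hag ((Polynomial.mem_roots hP).1 ha)
      rw [H.card_roots_sphere hw (by omega), H.norm_eval_of_near hw (Nat.zero_le s)
        (by rw [add_sub_cancel_left]; exact hx₁) (by rw [add_sub_cancel_left]; exact hx₂)
        (by omega), add_sub_cancel_left, ghExp_zero, pow_zero, pow_zero, pow_zero, pow_one,
        div_one, one_mul] at this
      rwa [div_mul_eq_mul_div, div_le_iff₀ (by positivity)])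
  obtain ⟨R, hR, hRcard, hRdist⟩ := H.exists_finset_roots hw (n := 2 * k) (by omega)
  have hRset : {a | ‖a‖ = g ∧ (ghWronskian π q (2 * k) w).eval a = 0} = (R : Set C) := by
    ext a
    exact (hR a).symm
  simp only [sub_eq_zero] at hf hfu
  rw [hRset] at hf
  have hfin := hf.finite_iff_finite.2 R.finite_toSet
  obtain ⟨S, hS⟩ := hfin.exists_finset_coe
  rw [← hS] at hf
  have hSmem : ∀ u, u ∈ S ↔ ‖u‖ = g ∧
      ghphi0 π q w * ghphi1 π q u = ghphi1 π q w * ghphi0 π q u := fun u => by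
    rw [← Finset.mem_coe, hS]
    rfl
  have hnear : ∀ u ∈ S, ‖f u - u‖ < ghRadius q s g 1 := fun u hu =>
    hfu u ((hSmem u).1 hu).1 ((hSmem u).1 hu).2
  have hwS : w ∈ S := (hSmem w).2 ⟨hw, mul_comm _ _⟩
  have hfw : f w = w := by
    have hfwR := (hR _).1 (hf.mapsTo hwS)
    refine H.eq_of_norm_sub_lt hw (n := 2 * k) (by omega) hfwR.1 hfwR.2 ?_ (hnear w hwS)
    rw [eval_ghWronskian]
    ring
  have hdist : ∀ u ∈ S, ‖f u - w‖ = ‖u - w‖ := by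
    intro u hu
    rcases eq_or_ne u w with rfl | hne
    · rw [hfw]
    · have hfne : f u ≠ w := fun h => hne (hf.injOn hu hwS (h.trans hfw.symm))
      have hge := (hRdist 0 (Nat.zero_le s)).2 (f u) (hf.mapsTo hu)
        (norm_pos_iff.2 (sub_ne_zero.2 hfne))
      have := norm_sub_eq_left_of_lt ((hnear u hu).trans_le hge)
      rw [← this]
      congr 1
      ring
  refine ⟨S, hSmem, ?_, fun j hj => ⟨?_, fun a ha h => ?_⟩⟩
  · rw [← hRcard]
    exact Finset.card_nbij f hf.mapsTo hf.injOn hf.surjOn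
  · rw [← (hRdist j hj).1]
    refine Finset.card_nbij f ?_ (hf.injOn.mono fun a ha => (Finset.mem_filter.1 ha).1) ?_
    · intro a ha
      rw [Finset.mem_coe, Finset.mem_filter] at ha ⊢
      exact ⟨hf.mapsTo ha.1, by rw [hdist a ha.1]; exact ha.2⟩
    · intro b hb
      rw [Finset.mem_coe, Finset.mem_filter] at hb
      obtain ⟨a, ha, rfl⟩ := hf.surjOn hb.1
      refine ⟨a, ?_, rfl⟩
      rw [Finset.mem_coe, Finset.mem_filter]
      exact ⟨ha, by rw [← hdist a ha]; exact hb.2⟩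
  · rw [← hdist a ha] at h ⊢
    exact (hRdist j hj).2 (f a) (hf.mapsTo ha) h

end IsGHCritical

end GrossHopkins

theorem gross_hopkins_fiber_critical {p : ℕ} [Fact p.Prime] {C : Type*} [NormedField C] [IsUltrametricDist C]
    [CompleteSpace C] [IsAlgClosed C] [Algebra ℚ_[p] C]
    (hiso : ∀ x : ℚ_[p], ‖algebraMap ℚ_[p] C x‖ = ‖x‖)
    (K : IntermediateField ℚ_[p] C) (hKfin : FiniteDimensional ℚ_[p] K)
    (q : ℕ) (hq : ∃ r : ℕ, 0 < r ∧ q = p ^ r)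
    (π : C) (hπK : π ∈ K) (hπ0 : 0 < ‖π‖) (hπ1 : ‖π‖ < 1)
    (hπunif : ∀ x ∈ K, ‖x‖ < 1 → ‖x‖ ≤ ‖π‖)
    (hres : ∃ S : Finset C, S.card = q ∧ (∀ s ∈ S, s ∈ K ∧ ‖s‖ ≤ 1) ∧
      (∀ x ∈ K, ‖x‖ ≤ 1 → ∃ s ∈ S, ‖x - s‖ < 1) ∧
      (∀ s ∈ S, ∀ t ∈ S, s ≠ t → ‖s - t‖ = 1))
    (s : ℕ) (γ : ℝ) (hγ : γ = ‖π‖ ^ ((1:ℝ)/((q:ℝ)^s + (q:ℝ)^(s+1))))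
    (u1 : C) (hu1 : ‖u1‖ = γ) :
    ∃ v : ℕ → C, v 1 = u1 ∧ Set.InjOn v (Set.Icc 1 (q^s + q^(s+1))) ∧
      {u : C | ‖u‖ = γ ∧ ghphi0 π q u1 * ghphi1 π q u = ghphi1 π q u1 * ghphi0 π q u}
        = v '' (Set.Icc 1 (q^s + q^(s+1))) ∧
      (∀ i j : ℕ, 1 ≤ j → j ≤ s → q^(j-1) < i → i ≤ q^j →
        ‖v i - u1‖ = (‖π‖ * γ ^ (-(2:ℝ) * (q:ℝ)^(j-1))) ^
          ((1:ℝ)/((q:ℝ)^j - (q:ℝ)^(j-1)))) ∧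
      (∀ i : ℕ, q^s < i → i ≤ q^s + q^(s+1) → ‖v i - u1‖ = γ) := by
  classical
  obtain ⟨r, hr, rfl⟩ := hq
  have hp : p.Prime := Fact.out
  have hp0 : 0 < p := hp.pos
  have hq2 : 2 ≤ p ^ r := hp.two_le.trans (Nat.le_self_pow hr.ne' p)
  have hpπ : ‖(p : C)‖ ≤ ‖π‖ := by
    refine hπunif _ (natCast_mem K p) ?_
    rw [← map_natCast (algebraMap ℚ_[p] C), hiso]
    exact Padic.norm_p_lt_one
  have hγ0 : 0 < γ := hγ ▸ Real.rpow_pos_of_pos hπ0 _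
  have hγ1 : γ < 1 := by
    rw [hγ]
    exact Real.rpow_lt_one hπ0.le hπ1 (by positivity)
  have hπγ : ‖π‖ = γ ^ ((p ^ r) ^ s + (p ^ r) ^ (s + 1)) := by
    rw [hγ, ← Real.rpow_natCast, ← Real.rpow_mul hπ0.le]
    push_cast
    rw [one_div, inv_mul_cancel₀ (by positivity), Real.rpow_one]
  have H : IsGHCritical π (p ^ r) s γ := by
    refine ⟨hq2, hγ0, hγ1, hπγ, fun x y M hx hy => ?_⟩
    refine (norm_add_pow_prime_pow_sub_le r hx hy).trans ?_
    have hM : 0 ≤ M := (norm_nonneg x).trans hx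
    gcongr
  obtain ⟨S, hS, hcard, hdist⟩ := H.exists_finset_fiber hu1
  generalize p ^ r = q at *
  obtain ⟨v, hinj, himg, hmono⟩ := Finset.exists_enumeration_monotone (fun u => ‖u - u1‖) S
  rw [hcard] at hinj himg hmono
  have hle : ∀ j ≤ s, ∀ i, 1 ≤ i → i ≤ q ^ s + q ^ (s + 1) →
      (‖v i - u1‖ ≤ ghRadius q s γ j ↔ i ≤ q ^ j) := fun j hj i h1 hn =>
    enumeration_le_iff hinj himg hmono (hdist j hj).1 h1 hn
  have hvS : ∀ i, 1 ≤ i → i ≤ q ^ s + q ^ (s + 1) → v i ∈ S := fun i h1 hn => by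
    rw [← Finset.mem_coe, ← himg]
    exact Set.mem_image_of_mem v ⟨h1, hn⟩
  have hge : ∀ j ≤ s, ∀ i, q ^ j < i → i ≤ q ^ s + q ^ (s + 1) →
      ghRadius q s γ (j + 1) ≤ ‖v i - u1‖ := fun j hj i hi hn => by
    have h1 : 1 ≤ i := by omega
    refine (hdist j hj).2 _ (hvS i h1 hn) (lt_of_not_ge fun h => ?_)
    exact absurd ((hle j hj i h1 hn).1 h) (by omega)
  have hpow_le : ∀ j ≤ s, q ^ j ≤ q ^ s := fun j hj => Nat.pow_le_pow_right (by omega) hj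
  refine ⟨v, ?_, hinj, ?_, fun i j hj1 hjs hi₁ hi₂ => ?_, fun i hi₁ hi₂ => ?_⟩
  · have h1 : 1 ≤ q ^ s := Nat.one_le_pow _ _ (by omega)
    have := (hle 0 (Nat.zero_le s) 1 le_rfl (by omega)).2 (by simp)
    exact sub_eq_zero.1 (norm_le_zero_iff.1 this)
  · rw [himg]
    ext u
    exact (hS u).symm
  · obtain ⟨j, rfl⟩ := Nat.exists_eq_add_of_le' hj1
    rw [Nat.add_sub_cancel] at hi₁ ⊢
    have hn : i ≤ q ^ s + q ^ (s + 1) := hi₂.trans ((hpow_le _ hjs).trans (Nat.le_add_right _ _))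
    rw [← H.ghRadius_succ_eq_rpow (by omega : j ≤ s)]
    exact le_antisymm ((hle _ hjs i (by omega) hn).2 hi₂) (hge j (by omega) i hi₁ hn)
  · refine le_antisymm ?_ ((ghRadius_last q s γ).symm.trans_le (hge s le_rfl i hi₁ hi₂))
    have := norm_sub_le_max_norm (v i) u1
    rwa [((hS _).1 (hvS i (by omega) hi₂)).1, hu1, max_self] at this
end
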